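/- arXiv:1411.5872 — 3 statements merged into one kernel-verified Lean document; each statement's English description precedes it below -/
import Mathlib

section
/- Let q ∈ C²(ℝ) with q(x) > 0 for all x ∈ ℝ, q even, and q'(x) ≥ 0 for all x ≥ 0. Fix d ∈ (0, c) where c = ∫_ℝ q(t) dt ∈ (0, +∞]. Let ā > 0 be the unique positive number with ∫_{−ā}^{ā} q(t) dt = d; if c < +∞ let a₊ be defined by ∫_{a₊}^{+∞} q(t) dt = d, otherwise a₊ = +∞. For a < a₊ let b(a) be the unique real with ∫_a^{b(a)} q(t) dt = d and set μ₁(a) := μ₁((a, b(a)); q). Then: (a) μ₁ is nondecreasing on [−ā, a₊), i.e. μ₁(a₁) ≤ μ₁(a₂) whenever −ā ≤ a₁ ≤ a₂ < a₊; (b) if moreover q is not constant on the interval (a₁, b(a₁)) for some a₁ ∈ (−ā, a₊), then μ₁(a₁) < μ₁(a₂) for every a₂ with a₁ < a₂ < a₊. -/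
open MeasureTheory Set

/-- The first nontrivial Neumann eigenvalue of `-(u' q)' = μ u q` on `(a,b)`,
defined variationally as the infimum of the Rayleigh quotient over smooth
trial functions with weighted mean zero. -/
noncomputable def neumannMu1 (q : ℝ → ℝ) (a b : ℝ) : ℝ :=
  sInf { μ : ℝ | ∃ u : ℝ → ℝ, ContDiff ℝ 1 u ∧
    0 < (∫ x in a..b, (u x) ^ 2 * q x) ∧
    (∫ x in a..b, u x * q x) = 0 ∧
    μ = (∫ x in a..b, (deriv u x) ^ 2 * q x) / ∫ x in a..b, (u x) ^ 2 * q x }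


/-- Rayleigh infimum in the mass variable, with weight `1 / g`. -/
noncomputable def massN (g : ℝ → ℝ) (α β : ℝ) : ℝ :=
  sInf { μ : ℝ | ∃ v : ℝ → ℝ, ContDiff ℝ 1 v ∧
    0 < (∫ x in α..β, (v x) ^ 2) ∧
    (∫ x in α..β, v x) = 0 ∧
    μ = (∫ x in α..β, (deriv v x) ^ 2 / g x) / ∫ x in α..β, (v x) ^ 2 }

/-- the mean-zero primitive of `e * g` -/
noncomputable def dualU (g e : ℝ → ℝ) (α β : ℝ) (s : ℝ) : ℝ :=
  (∫ x in α..s, e x * g x) - (∫ r in α..β, ∫ x in α..r, e x * g x) / (β - α)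

lemma massN_bdd (g : ℝ → ℝ) (hgp : ∀ x, 0 < g x) {α β : ℝ} (hab : α ≤ β) :
    ∀ μ ∈ { μ : ℝ | ∃ v : ℝ → ℝ, ContDiff ℝ 1 v ∧
    0 < (∫ x in α..β, (v x) ^ 2) ∧
    (∫ x in α..β, v x) = 0 ∧
    μ = (∫ x in α..β, (deriv v x) ^ 2 / g x) / ∫ x in α..β, (v x) ^ 2 }, 0 ≤ μ := by
  rintro μ ⟨v, -, h1, -, rfl⟩
  refine div_nonneg (intervalIntegral.integral_nonneg hab fun x _ => ?_) h1.le
  have := hgp x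
  positivity

lemma massN_nonneg (g : ℝ → ℝ) (hgp : ∀ x, 0 < g x) {α β : ℝ} (hab : α ≤ β) :
    0 ≤ massN g α β := Real.sInf_nonneg (massN_bdd g hgp hab)

lemma massN_mul_le (g : ℝ → ℝ) (hgp : ∀ x, 0 < g x) {α β : ℝ} (hab : α ≤ β)
    (U : ℝ → ℝ) (hU : ContDiff ℝ 1 U) (hm : (∫ x in α..β, U x) = 0) :
    massN g α β * (∫ x in α..β, (U x) ^ 2) ≤ ∫ x in α..β, (deriv U x) ^ 2 / g x := by
  have h0 : 0 ≤ ∫ x in α..β, (U x) ^ 2 :=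
    intervalIntegral.integral_nonneg hab fun x _ => sq_nonneg _
  rcases h0.eq_or_lt with h | h
  · rw [← h, mul_zero]
    refine intervalIntegral.integral_nonneg hab fun x _ => ?_
    have := hgp x
    positivity
  · rw [← le_div_iff₀ h]
    exact csInf_le ⟨0, massN_bdd g hgp hab⟩ ⟨U, hU, h, hm, rfl⟩

lemma massN_exists (g : ℝ → ℝ) {α β : ℝ} (hab : α < β)
    {k : ℝ} (hk : massN g α β < k) :
    ∃ v : ℝ → ℝ, ContDiff ℝ 1 v ∧ (∫ x in α..β, v x) = 0 ∧ 0 < (∫ x in α..β, (v x) ^ 2) ∧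
      (∫ x in α..β, (deriv v x) ^ 2 / g x) ≤ k * ∫ x in α..β, (v x) ^ 2 := by
  obtain ⟨μ, ⟨v, h1, h2, h3, rfl⟩, h4⟩ := exists_lt_of_csInf_lt (by
    refine ⟨_, fun x => x - (α + β) / 2, by fun_prop, ?_, ?_, rfl⟩
    · have : ∫ x in α..β, (x - (α + β) / 2) ^ 2 = (β - α) ^ 3 / 12 := by
        rw [intervalIntegral.integral_comp_sub_right (fun x => x ^ 2)]
        simp; ring
      rw [this]
      have : 0 < β - α := by linarith
      positivity
    · rw [intervalIntegral.integral_comp_sub_right (fun x => x)]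
      simp; ring) hk
  exact ⟨v, h1, h3, h2, ((div_lt_iff₀ h2).1 h4).le⟩

lemma dualU_hasDeriv (g e : ℝ → ℝ) (hg : Continuous g) (he : Continuous e) (α β s : ℝ) :
    HasDerivAt (dualU g e α β) (e s * g s) s := by
  unfold dualU
  exact ((he.mul hg).integral_hasStrictDerivAt α s).hasDerivAt.sub_const _

lemma dualU_contDiff (g e : ℝ → ℝ) (hg : Continuous g) (he : Continuous e) (α β : ℝ) :
    ContDiff ℝ 1 (dualU g e α β) := by
  rw [contDiff_one_iff_deriv]
  refine ⟨fun s => (dualU_hasDeriv g e hg he α β s).differentiableAt, ?_⟩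
  have : deriv (dualU g e α β) = fun s => e s * g s :=
    funext fun s => (dualU_hasDeriv g e hg he α β s).deriv
  rw [this]; exact he.mul hg

lemma dualU_mean (g e : ℝ → ℝ) (hg : Continuous g) (he : Continuous e) {α β : ℝ} (hab : α < β) :
    ∫ s in α..β, dualU g e α β s = 0 := by
  unfold dualU
  have hc : Continuous fun r => ∫ x in α..r, e x * g x :=
    intervalIntegral.continuous_primitive (fun a b => (he.mul hg).intervalIntegrable a b) α
  rw [intervalIntegral.integral_sub (hc.intervalIntegrable _ _) (by simp)]
  simp
  have : β - α ≠ 0 := by linarith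
  field_simp
  simp

/-- integration by parts -/
lemma dual_ibp (g e : ℝ → ℝ) (hg : Continuous g) (he : Continuous e) {α β : ℝ}
    (hac : AbsolutelyContinuousOnInterval e α β) (h0 : e α = 0) (h1 : e β = 0) :
    ∫ s in α..β, deriv e s * dualU g e α β s = - ∫ s in α..β, e s ^ 2 * g s := by
  have hU := (dualU_contDiff g e hg he α β)
  have := hac.integral_mul_deriv_eq_deriv_mul
    (hU.contDiffOn.absolutelyContinuousOnInterval (a := α) (b := β))
  rw [h0, h1] at this
  have h2 : ∀ s, e s ^ 2 * g s = e s * deriv (dualU g e α β) s := fun s => by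
    rw [(dualU_hasDeriv g e hg he α β s).deriv]; ring
  simp_rw [h2]
  linarith

/-- Key inequality -/
lemma key_ineq (g e : ℝ → ℝ) (hg : Continuous g) (hgp : ∀ x, 0 < g x) (he : Continuous e)
    {α β : ℝ} (hab : α < β)
    (hac : AbsolutelyContinuousOnInterval e α β) (h0 : e α = 0) (h1 : e β = 0)
    (hsq : IntervalIntegrable (fun s => deriv e s ^ 2) volume α β) :
    (∫ s in α..β, (deriv e s + massN g α β * dualU g e α β s) ^ 2) ≤
      (∫ s in α..β, deriv e s ^ 2) - massN g α β * ∫ s in α..β, e s ^ 2 * g s := by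
  set N := massN g α β
  set U := dualU g e α β with hUdef
  have hU := (dualU_contDiff g e hg he α β)
  have hUc : Continuous U := hU.continuous
  have hd : IntervalIntegrable (fun s => deriv e s * U s) volume α β :=
    hac.intervalIntegrable_deriv.mul_continuousOn hUc.continuousOn
  have hU2 : IntervalIntegrable (fun s => U s ^ 2) volume α β :=
    (hUc.pow 2).intervalIntegrable _ _
  have e1 : (∫ s in α..β, (deriv e s + N * U s) ^ 2) =
      (∫ s in α..β, deriv e s ^ 2) + 2 * N * (∫ s in α..β, deriv e s * U s)
        + N ^ 2 * ∫ s in α..β, U s ^ 2 := by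
    rw [← intervalIntegral.integral_const_mul, ← intervalIntegral.integral_const_mul,
      ← intervalIntegral.integral_add hsq (hd.const_mul _),
      ← intervalIntegral.integral_add (hsq.add (hd.const_mul _))
        (hU2.const_mul _)]
    congr 1; ext s; ring
  have e2 := dual_ibp g e hg he hac h0 h1
  have e3 := massN_mul_le g hgp hab.le U hU (dualU_mean g e hg he hab)
  have e4 : (∫ x in α..β, (deriv U x) ^ 2 / g x) = ∫ s in α..β, e s ^ 2 * g s := by
    congr 1; ext s
    rw [(dualU_hasDeriv g e hg he α β s).deriv]
    have := (hgp s).ne'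
    field_simp
  have hN : 0 ≤ N := massN_nonneg g hgp hab.le
  rw [e1, e2]
  rw [e4] at e3
  nlinarith [mul_le_mul_of_nonneg_left e3 hN]

/-- forward duality -/
lemma forward (g v Φ : ℝ → ℝ) (hg : Continuous g) (hgp : ∀ x, 0 < g x) {α β : ℝ} (hab : α < β)
    (hv : ContDiff ℝ 1 v) (hΦ : ∀ s, HasDerivAt Φ (v s) s) (h0 : Φ α = 0) (h1 : Φ β = 0)
    {k : ℝ} (hk : 0 < k)
    (hq : (∫ x in α..β, (deriv v x) ^ 2 / g x) ≤ k * ∫ x in α..β, (v x) ^ 2) :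
    (∫ x in α..β, (v x) ^ 2) ≤ k * ∫ x in α..β, Φ x ^ 2 * g x := by
  have hvc := hv.continuous
  have hv' : Continuous (deriv v) := hv.continuous_deriv le_rfl
  have hΦc : Continuous Φ := continuous_iff_continuousAt.2 fun s => (hΦ s).continuousAt
  have ibp := intervalIntegral.integral_mul_deriv_eq_deriv_mul (a := α) (b := β)
    (u := Φ) (v := v) (u' := v) (v' := deriv v)
    (fun x _ => hΦ x) (fun x _ => (hv.differentiable (by norm_num) x).hasDerivAt)
    (hvc.intervalIntegrable _ _) (hv'.intervalIntegrable _ _)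
  rw [h0, h1] at ibp
  have hgc : ∀ x, g x ≠ 0 := fun x => (hgp x).ne'
  have c1 : Continuous fun x => (deriv v x) ^ 2 / g x := (hv'.pow 2).div hg hgc
  have c2 : Continuous fun x => Φ x * deriv v x := hΦc.mul hv'
  have c3 : Continuous fun x => Φ x ^ 2 * g x := (hΦc.pow 2).mul hg
  have e1 : 0 ≤ (∫ x in α..β, (deriv v x) ^ 2 / g x) + 2 * k * (∫ x in α..β, Φ x * deriv v x)
        + k ^ 2 * ∫ x in α..β, Φ x ^ 2 * g x := by
    rw [← intervalIntegral.integral_const_mul, ← intervalIntegral.integral_const_mul,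
      ← intervalIntegral.integral_add (c1.intervalIntegrable _ _)
        ((c2.intervalIntegrable _ _).const_mul _),
      ← intervalIntegral.integral_add ((c1.intervalIntegrable _ _).add
        ((c2.intervalIntegrable _ _).const_mul _)) ((c3.intervalIntegrable _ _).const_mul _)]
    refine intervalIntegral.integral_nonneg hab.le fun x _ => ?_
    have : (deriv v x) ^ 2 / g x + 2 * k * (Φ x * deriv v x) + k ^ 2 * (Φ x ^ 2 * g x)
      = (deriv v x + k * Φ x * g x) ^ 2 / g x := by
      have := hgc x
      field_simp; ring
    rw [this]
    have := hgp x
    positivity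
  have e2 : (∫ x in α..β, Φ x * deriv v x) = - ∫ x in α..β, (v x) ^ 2 := by
    rw [ibp]; simp [sq]
  rw [e2] at e1
  have : k * (∫ x in α..β, (v x) ^ 2) ≤ k * (k * ∫ x in α..β, Φ x ^ 2 * g x) := by nlinarith
  exact le_of_mul_le_mul_left this hk

/-- Uniqueness for the linear system. -/
lemma lin_unique (g x y : ℝ → ℝ) (hg : Continuous g) (N : ℝ) {l r t : ℝ}
    (hx : ContinuousOn x (Icc l r)) (hy : ContinuousOn y (Icc l r))
    (hx' : ∀ s ∈ Ioo l r, HasDerivAt x (-N * y s) s)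
    (hy' : ∀ s ∈ Ioo l r, HasDerivAt y (x s * g s) s)
    (ht : t ∈ Icc l r) (h1 : x t = 0) (h2 : y t = 0) : ∀ s ∈ Icc l r, x s = 0 := by
  obtain ⟨C, hC⟩ := (isCompact_Icc (a := l) (b := r)).exists_bound_of_continuousOn
    (f := fun s => g s - N) (by fun_prop)
  set h : ℝ → ℝ := fun s => x s ^ 2 + y s ^ 2 with hh
  have hder : ∀ s ∈ Ioo l r, HasDerivAt h (2 * (g s - N) * (x s * y s)) s := fun s hs => by
    have := ((hx' s hs).pow 2).add ((hy' s hs).pow 2)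
    exact this.congr_deriv (by push_cast; ring)
  have hb : ∀ s ∈ Ioo l r, |2 * (g s - N) * (x s * y s)| ≤ C * h s := fun s hs => by
    have h3 := hC s (Ioo_subset_Icc_self hs)
    rw [Real.norm_eq_abs] at h3
    rw [show 2 * (g s - N) * (x s * y s) = (g s - N) * (2 * (x s * y s)) by ring, abs_mul]
    have h4 : |2 * (x s * y s)| ≤ h s := by
      rw [abs_le]; constructor <;> simp only [hh] <;> nlinarith [sq_nonneg (x s - y s), sq_nonneg (x s + y s)]
    exact mul_le_mul h3 h4 (abs_nonneg _) ((abs_nonneg _).trans h3)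
  have hcont : ContinuousOn h (Icc l r) := (hx.pow 2).add (hy.pow 2)
  have key : ∀ c : ℝ, ∀ s ∈ Ioo l r, HasDerivAt (fun s => h s * Real.exp (c * s))
      ((2 * (g s - N) * (x s * y s) + c * h s) * Real.exp (c * s)) s := fun c s hs => by
    have h5 : HasDerivAt (fun s : ℝ => Real.exp (c * s)) (Real.exp (c * s) * (c * 1)) s :=
      ((hasDerivAt_id s).const_mul c).exp
    exact ((hder s hs).mul h5).congr_deriv (by ring)
  have hm : MonotoneOn (fun s => h s * Real.exp (C * s)) (Icc l r) := by
    refine monotoneOn_of_deriv_nonneg (convex_Icc l r) (hcont.mul (by fun_prop)) ?_ ?_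
    · rw [interior_Icc]
      exact fun s hs => (key C s hs).differentiableAt.differentiableWithinAt
    · rw [interior_Icc]
      intro s hs
      rw [(key C s hs).deriv]
      have := (abs_le.1 (hb s hs)).1
      exact mul_nonneg (by linarith) (Real.exp_pos _).le
  have ha : AntitoneOn (fun s => h s * Real.exp (-C * s)) (Icc l r) := by
    refine antitoneOn_of_deriv_nonpos (convex_Icc l r) (hcont.mul (by fun_prop)) ?_ ?_
    · rw [interior_Icc]
      exact fun s hs => (key (-C) s hs).differentiableAt.differentiableWithinAt
    · rw [interior_Icc]
      intro s hs
      rw [(key (-C) s hs).deriv]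
      have := (abs_le.1 (hb s hs)).2
      exact mul_nonpos_of_nonpos_of_nonneg (by linarith) (Real.exp_pos _).le
  have h0 : h t = 0 := by simp [hh, h1, h2]
  intro s hs
  have : h s ≤ 0 := by
    rcases le_total s t with hst | hst
    · have := hm hs ht hst
      simp only [h0, zero_mul] at this
      exact nonpos_of_mul_nonpos_left this (Real.exp_pos _)
    · have := ha ht hs hst
      simp only [h0, zero_mul] at this
      exact nonpos_of_mul_nonpos_left this (Real.exp_pos _)
  simp only [hh] at this
  nlinarith [sq_nonneg (x s), sq_nonneg (y s)]


lemma my_congr_Ioo {f h : ℝ → ℝ} {a b : ℝ} (hab : a ≤ b) (H : ∀ s ∈ Ioo a b, f s = h s) :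
    ∫ s in a..b, f s = ∫ s in a..b, h s := by
  rw [intervalIntegral.integral_of_le hab, intervalIntegral.integral_of_le hab,
    integral_Ioc_eq_integral_Ioo, integral_Ioc_eq_integral_Ioo]
  exact setIntegral_congr_fun measurableSet_Ioo H

lemma lip_sq_integrable {f : ℝ → ℝ} {K : NNReal} (hf : LipschitzWith K f) (a b : ℝ) :
    IntervalIntegrable (fun s => deriv f s ^ 2) volume a b := by
  have h : Measurable fun s => deriv f s ^ 2 := (measurable_deriv f).pow_const 2
  refine (intervalIntegrable_const (c := (K : ℝ) ^ 2)).mono_fun h.aestronglyMeasurable ?_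
  refine Filter.Eventually.of_forall fun s => ?_
  have := norm_deriv_le_of_lipschitz (x₀ := s) hf
  simp only [norm_pow, NNReal.norm_eq]
  gcongr

lemma deriv_abs_sq_le {f : ℝ → ℝ} {c s : ℝ} (hf : HasDerivAt f c s) :
    deriv (fun x => |f x|) s ^ 2 ≤ c ^ 2 := by
  by_cases hd : DifferentiableAt ℝ (fun x => |f x|) s
  · by_cases h0 : f s = 0
    · have : IsLocalMin (fun x => |f x|) s := Filter.Eventually.of_forall fun x => by simp [h0]
      rw [this.deriv_eq_zero]; simpa using sq_nonneg c
    · have h1 := (hd.hasDerivAt.pow 2)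
      have h2 := hf.pow 2
      have h3 : ((fun x => |f x|) ^ 2 : ℝ → ℝ) = f ^ 2 := by ext x; simp
      rw [h3] at h1
      have h4 := h1.unique h2
      have h5 : (|f s| * deriv (fun x => |f x|) s) ^ 2 = (f s * c) ^ 2 := by
        congr 1
        simp at h4
        linarith
      rw [mul_pow, mul_pow, sq_abs] at h5
      exact (mul_left_cancel₀ (by positivity) h5).le
  · rw [deriv_zero_of_not_differentiableAt hd]; simpa using sq_nonneg c

lemma trunc (v Φ : ℝ → ℝ) {α β : ℝ} (hab : α < β)
    (hv : Continuous v) (hΦ : ∀ s, HasDerivAt Φ (v s) s) (h0 : Φ α = 0) (h1 : Φ β = 0) :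
    ∃ (f : ℝ → ℝ) (K : NNReal), LipschitzWith K f ∧ (∀ s, 0 ≤ f s) ∧ (∀ s, s ≤ α → f s = 0) ∧
      (∀ s, β ≤ s → f s = 0) ∧ (∀ s ∈ Icc α β, f s = |Φ s|) ∧
      (∫ s in α..β, deriv f s ^ 2) ≤ ∫ s in α..β, v s ^ 2 := by
  obtain ⟨C, hC⟩ := (isCompact_Icc (a := α) (b := β)).exists_bound_of_continuousOn
    (f := v) (by fun_prop)
  have hL : LipschitzOnWith C.toNNReal Φ (Icc α β) := by
    refine (convex_Icc α β).lipschitzOnWith_of_nnnorm_hasDerivWithin_le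
      (fun x _ => (hΦ x).hasDerivWithinAt) fun x hx => ?_
    rw [← NNReal.coe_le_coe]
    exact (hC x hx).trans (Real.le_coe_toNNReal C)
  have hcl : LipschitzWith 1 fun s : ℝ => max α (min s β) :=
    (LipschitzWith.id.min_const β).const_max α
  have hmaps : MapsTo (fun s : ℝ => max α (min s β)) univ (Icc α β) := fun s _ =>
    ⟨le_max_left _ _, max_le hab.le (min_le_right _ _)⟩
  have hL2 : LipschitzWith (C.toNNReal * 1) fun s => Φ (max α (min s β)) := by
    rw [← lipschitzOnWith_univ]
    exact hL.comp (hcl.lipschitzOnWith (s := univ)) hmaps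
  have hL3 : LipschitzWith (1 * (C.toNNReal * 1)) fun s => |Φ (max α (min s β))| :=
    (lipschitzWith_one_norm (E := ℝ)).comp hL2
  have hI : ∀ s ∈ Icc α β, max α (min s β) = s := fun s hs => by
    rw [min_eq_left hs.2, max_eq_right hs.1]
  refine ⟨_, _, hL3, fun s => abs_nonneg _, ?_, ?_, ?_, ?_⟩
  · intro s hs
    rw [min_eq_left (hs.trans hab.le), max_eq_left hs, h0, abs_zero]
  · intro s hs
    rw [min_eq_right hs, max_eq_right hab.le, h1, abs_zero]
  · intro s hs
    simp only [hI s hs]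
  · refine intervalIntegral.integral_mono_on_of_le_Ioo hab.le (lip_sq_integrable hL3 _ _)
      ((hv.pow 2).intervalIntegrable _ _) fun s hs => ?_
    apply deriv_abs_sq_le
    refine (hΦ s).congr_of_eventuallyEq ?_
    filter_upwards [Ioo_mem_nhds hs.1 hs.2] with x hx
    rw [hI x (Ioo_subset_Icc_self hx)]

/-- derivatives of max and min -/
lemma deriv_max_min {f F : ℝ → ℝ} {s : ℝ} (h1 : DifferentiableAt ℝ f s)
    (h2 : DifferentiableAt ℝ F s) (h3 : DifferentiableAt ℝ (fun x => max (f x) (F x)) s)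
    (h4 : DifferentiableAt ℝ (fun x => min (f x) (F x)) s) :
    deriv (fun x => max (f x) (F x)) s ^ 2 + deriv (fun x => min (f x) (F x)) s ^ 2 =
      deriv f s ^ 2 + deriv F s ^ 2 := by
  rcases lt_trichotomy (f s) (F s) with h | h | h
  · have e1 : (fun x => max (f x) (F x)) =ᶠ[nhds s] F := by
      filter_upwards [h1.continuousAt.eventually_lt h2.continuousAt h] with x hx
      exact max_eq_right hx.le
    have e2 : (fun x => min (f x) (F x)) =ᶠ[nhds s] f := by
      filter_upwards [h1.continuousAt.eventually_lt h2.continuousAt h] with x hx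
      exact min_eq_left hx.le
    rw [e1.deriv_eq, e2.deriv_eq]; ring
  · have a1 : IsLocalMin (fun x => max (f x) (F x) - f x) s :=
      Filter.Eventually.of_forall fun x => by simp [h]
    have a2 : IsLocalMin (fun x => max (f x) (F x) - F x) s :=
      Filter.Eventually.of_forall fun x => by simp [h]
    have a3 : IsLocalMax (fun x => min (f x) (F x) - f x) s :=
      Filter.Eventually.of_forall fun x => by simp [h]
    have b1 := a1.deriv_eq_zero
    have b2 := a2.deriv_eq_zero
    have b3 := a3.deriv_eq_zero
    rw [deriv_fun_sub h3 h1] at b1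
    rw [deriv_fun_sub h3 h2] at b2
    rw [deriv_fun_sub h4 h1] at b3
    rw [sub_eq_zero.1 b3, ← sub_eq_zero.1 b2, ← sub_eq_zero.1 b1]
  · have e1 : (fun x => max (f x) (F x)) =ᶠ[nhds s] f := by
      filter_upwards [h2.continuousAt.eventually_lt h1.continuousAt h] with x hx
      exact max_eq_left hx.le
    have e2 : (fun x => min (f x) (F x)) =ᶠ[nhds s] F := by
      filter_upwards [h2.continuousAt.eventually_lt h1.continuousAt h] with x hx
      exact min_eq_right hx.le
    rw [e1.deriv_eq, e2.deriv_eq]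

/-- folding an integral about the midpoint -/
lemma fold_integral {h : ℝ → ℝ} {A σ : ℝ} (hi : ∀ a b, IntervalIntegrable h volume a b) :
    ∫ s in A..(2 * σ - A), h s = ∫ s in A..σ, (h s + h (2 * σ - s)) := by
  have h1 : ∫ s in A..σ, h (2 * σ - s) = ∫ s in σ..(2 * σ - A), h s := by
    rw [intervalIntegral.integral_comp_sub_left]
    congr 1; ring
  have h2 : IntervalIntegrable (fun s => h (2 * σ - s)) volume A σ := by
    have := (hi (2 * σ - A) (2 * σ - σ)).comp_sub_left (2 * σ)
    simpa using this
  rw [intervalIntegral.integral_add (hi _ _) h2, h1,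
    intervalIntegral.integral_add_adjacent_intervals (hi _ _) (hi _ _)]

lemma polarize (g f : ℝ → ℝ) (hg : Continuous g)
    (hgeven : ∀ x, g (-x) = g x) (hganti : AntitoneOn g (Ici 0))
    {K : NNReal} (hf : LipschitzWith K f) (hf0 : ∀ s, 0 ≤ f s) {α₁ α₂ d σ : ℝ} (hd : 0 < d)
    (hα : α₁ ≤ α₂) (hσ : 2 * σ = α₁ + α₂ + d) (hσ0 : 0 ≤ σ)
    (hl : ∀ s, s ≤ α₂ → f s = 0) (hr : ∀ s, α₂ + d ≤ s → f s = 0) :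
    ∃ (e : ℝ → ℝ) (K' : NNReal), LipschitzWith K' e ∧ (∀ s, 0 ≤ e s) ∧ (∀ s, s ≤ α₁ → e s = 0) ∧
      (∀ s, α₁ + d ≤ s → e s = 0) ∧ (∀ s, s ≤ σ → e s = max (f s) (f (2 * σ - s))) ∧
      (∀ s, σ ≤ s → e s = min (f s) (f (2 * σ - s))) ∧
      (∫ s in α₁..(α₁ + d), deriv e s ^ 2) ≤ (∫ s in α₂..(α₂ + d), deriv f s ^ 2) ∧
      (∫ s in α₂..(α₂ + d), f s ^ 2 * g s) ≤ (∫ s in α₁..(α₁ + d), e s ^ 2 * g s) := by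
  have hrefl : LipschitzWith 1 fun s : ℝ => 2 * σ - s := by
    refine LipschitzWith.of_dist_le_mul fun x y => ?_
    rw [Real.dist_eq, Real.dist_eq, NNReal.coe_one, one_mul, abs_sub_comm x y,
      show 2 * σ - x - (2 * σ - y) = y - x by ring]
  have hF : LipschitzWith (K * 1) fun s => f (2 * σ - s) := hf.comp hrefl
  have hM : LipschitzWith (max K (K * 1)) fun s => max (f s) (f (2 * σ - s)) := hf.max hF
  have hm : LipschitzWith (max K (K * 1)) fun s => min (f s) (f (2 * σ - s)) := hf.min hF
  set M : ℝ → ℝ := fun s => max (f s) (f (2 * σ - s)) with hMd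
  set m : ℝ → ℝ := fun s => min (f s) (f (2 * σ - s)) with hmd
  have hmn : LipschitzWith 1 fun s : ℝ => min s σ := LipschitzWith.id.min_const σ
  have hmx : LipschitzWith 1 fun s : ℝ => max s σ := LipschitzWith.id.max_const σ
  set e : ℝ → ℝ := fun s => M (min s σ) + m (max s σ) - f σ with hed
  have he : LipschitzWith (max K (K * 1) * 1 + max K (K * 1) * 1 + 0) e := ((hM.comp hmn).add (hm.comp hmx)).sub (LipschitzWith.const (f σ))
  have hσσ : 2 * σ - σ = σ := by ring
  have e1 : ∀ s, s ≤ σ → e s = M s := fun s hs => by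
    simp only [hed, min_eq_left hs, max_eq_right hs]
    simp [hmd, hσσ]
  have e2 : ∀ s, σ ≤ s → e s = m s := fun s hs => by
    simp only [hed, min_eq_right hs, max_eq_left hs]
    simp [hMd, hσσ]
  have eL : ∀ s, s ≤ α₁ → e s = 0 := fun s hs => by
    rw [e1 s (by linarith)]
    simp only [hMd]
    rw [hl s (by linarith), hr (2 * σ - s) (by linarith), max_self]
  have eR : ∀ s, α₁ + d ≤ s → e s = 0 := fun s hs => by
    have h2 : f (2 * σ - s) = 0 := hl _ (by linarith)
    rcases le_total s σ with h | h
    · rw [e1 s h]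
      simp only [hMd]
      rw [h2, hl s (by linarith), max_self]
    · rw [e2 s h]
      simp only [hmd]
      rw [h2, min_eq_right (hf0 s)]
  have hsub : ∀ s, m (2 * σ - s) = m s := fun s => by
    simp only [hmd]
    rw [show 2 * σ - (2 * σ - s) = s by ring, min_comm]
  have hB : α₂ + d = 2 * σ - α₁ := by linarith
  have hασ : α₁ ≤ σ := by linarith
  have hfc := hf.continuous
  have hec : Continuous e := he.continuous
  have hgle : ∀ s, s ≤ σ → g (2 * σ - s) ≤ g s := fun s hs => by
    rcases le_total 0 s with h | h
    · exact hganti h (by simp; linarith) (by linarith)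
    · rw [← hgeven s]
      exact hganti (by simp; linarith) (by simp; linarith) (by linarith)
  refine ⟨e, _, he, ?_, eL, eR, e1, e2, ?_, ?_⟩
  · intro s
    rcases le_total s σ with h | h
    · rw [e1 s h]; exact le_max_of_le_left (hf0 s)
    · rw [e2 s h]; exact le_min (hf0 s) (hf0 _)
  · have hei := lip_sq_integrable he
    have hfi := lip_sq_integrable hf
    have s1 : (∫ s in α₁..(α₁ + d), deriv e s ^ 2) ≤ ∫ s in α₁..(2 * σ - α₁), deriv e s ^ 2 :=
      intervalIntegral.integral_mono_interval le_rfl (by linarith) (by linarith)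
        (Filter.Eventually.of_forall fun s => by positivity) (hei _ _)
    have s2 : (∫ s in α₂..(α₂ + d), deriv f s ^ 2) = ∫ s in α₁..(2 * σ - α₁), deriv f s ^ 2 := by
      rw [← hB, ← intervalIntegral.integral_add_adjacent_intervals (hfi α₁ α₂) (hfi α₂ (α₂ + d))]
      have : ∫ s in α₁..α₂, deriv f s ^ 2 = ∫ s in α₁..α₂, (0 : ℝ) := by
        refine my_congr_Ioo hα fun s hs => ?_
        have h5 : f =ᶠ[nhds s] fun _ => 0 := by
          filter_upwards [Iio_mem_nhds hs.2] with x hx using hl x (le_of_lt hx)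
        simp [h5.deriv_eq]
      rw [this]; simp
    refine s1.trans (le_of_eq ?_)
    rw [s2, fold_integral hei, fold_integral hfi]
    apply intervalIntegral.integral_congr_ae
    have hne : ∀ᵐ s : ℝ, s ≠ σ := by simp [ae_iff]
    filter_upwards [hf.ae_differentiableAt, hF.ae_differentiableAt, hM.ae_differentiableAt,
      hm.ae_differentiableAt, hne] with s d1 d2 d3 d4 hs hs2
    rw [uIoc_of_le hασ] at hs2
    have hs3 : s < σ := lt_of_le_of_ne hs2.2 hs
    have E1 : deriv e s = deriv M s := by
      apply Filter.EventuallyEq.deriv_eq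
      filter_upwards [Iio_mem_nhds hs3] with x hx using e1 x (le_of_lt hx)
    have E2 : deriv e (2 * σ - s) ^ 2 = deriv m s ^ 2 := by
      have h6 : deriv e (2 * σ - s) = deriv m (2 * σ - s) := by
        apply Filter.EventuallyEq.deriv_eq
        filter_upwards [Ioi_mem_nhds (show σ < 2 * σ - s by linarith)] with x hx
          using e2 x (le_of_lt hx)
      have h7 : deriv (fun x => m (2 * σ - x)) s = - deriv m (2 * σ - s) :=
        deriv_comp_const_sub _ _ _
      simp_rw [hsub] at h7
      rw [h6, h7]; ring
    have E3 : deriv (fun x => f (2 * σ - x)) s = - deriv f (2 * σ - s) :=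
      deriv_comp_const_sub _ _ _
    have E4 := deriv_max_min d1 d2 d3 d4
    rw [E3] at E4
    rw [E1, E2]
    rw [neg_sq] at E4
    exact E4
  · have c1 : Continuous fun s => f s ^ 2 * g s := (hfc.pow 2).mul hg
    have c2 : Continuous fun s => e s ^ 2 * g s := (hec.pow 2).mul hg
    have s1 : (∫ s in α₂..(α₂ + d), f s ^ 2 * g s) = ∫ s in α₁..(2 * σ - α₁), f s ^ 2 * g s := by
      rw [← hB, ← intervalIntegral.integral_add_adjacent_intervals
        (c1.intervalIntegrable α₁ α₂) (c1.intervalIntegrable α₂ (α₂ + d))]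
      have : ∫ s in α₁..α₂, f s ^ 2 * g s = ∫ s in α₁..α₂, (0 : ℝ) := by
        refine my_congr_Ioo hα fun s hs => ?_
        simp [hl s hs.2.le]
      rw [this]; simp
    have s2 : (∫ s in α₁..(α₁ + d), e s ^ 2 * g s) = ∫ s in α₁..(2 * σ - α₁), e s ^ 2 * g s := by
      rw [← hB, ← intervalIntegral.integral_add_adjacent_intervals
        (c2.intervalIntegrable α₁ (α₁ + d)) (c2.intervalIntegrable (α₁ + d) (α₂ + d))]
      have : ∫ s in (α₁ + d)..(α₂ + d), e s ^ 2 * g s = ∫ s in (α₁ + d)..(α₂ + d), (0 : ℝ) := by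
        refine my_congr_Ioo (by linarith) fun s hs => ?_
        simp [eR s hs.1.le]
      rw [this]; simp
    rw [s1, s2, fold_integral fun a b => c1.intervalIntegrable a b,
      fold_integral fun a b => c2.intervalIntegrable a b]
    refine intervalIntegral.integral_mono_on hασ ((c1.add
      (c1.comp (continuous_const.sub continuous_id))).intervalIntegrable _ _) ((c2.add
      (c2.comp (continuous_const.sub continuous_id))).intervalIntegrable _ _) fun s hs => ?_
    rw [e1 s hs.2, e2 (2 * σ - s) (by linarith [hs.2]), hsub]
    have h8 := hgle s hs.2
    simp only [hMd, hmd]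
    rcases le_total (f s) (f (2 * σ - s)) with h | h
    · rw [max_eq_right h, min_eq_left h]
      have : f s ^ 2 ≤ f (2 * σ - s) ^ 2 := pow_le_pow_left₀ (hf0 s) h 2
      nlinarith
    · rw [max_eq_left h, min_eq_right h]


lemma key_lip (g e : ℝ → ℝ) (hg : Continuous g) (hgp : ∀ x, 0 < g x) {K : NNReal}
    (he : LipschitzWith K e)
    {α β : ℝ} (hab : α < β) (h0 : e α = 0) (h1 : e β = 0) :
    (∫ s in α..β, (deriv e s + massN g α β * dualU g e α β s) ^ 2) ≤
      (∫ s in α..β, deriv e s ^ 2) - massN g α β * ∫ s in α..β, e s ^ 2 * g s :=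
  key_ineq g e hg hgp he.continuous hab he.lipschitzOnWith.absolutelyContinuousOnInterval h0 h1
    (lip_sq_integrable he _ _)

lemma mass_mono (g : ℝ → ℝ) (hg : Continuous g) (hgp : ∀ x, 0 < g x)
    (hgeven : ∀ x, g (-x) = g x) (hganti : AntitoneOn g (Ici 0))
    {α₁ α₂ d : ℝ} (hd : 0 < d) (h1 : -d / 2 ≤ α₁) (h2 : α₁ ≤ α₂) :
    massN g α₁ (α₁ + d) ≤ massN g α₂ (α₂ + d) := by
  refine le_of_forall_gt_imp_ge_of_dense fun k hk => ?_
  have hk0 : 0 < k := (massN_nonneg g hgp (by linarith)).trans_lt hk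
  obtain ⟨v, hv, hv0, hvp, hvk⟩ := massN_exists g (by linarith) hk
  have hΦ : ∀ s, HasDerivAt (fun s => ∫ x in α₂..s, v x) (v s) s := fun s =>
    (hv.continuous.integral_hasStrictDerivAt α₂ s).hasDerivAt
  have hfw := forward g v _ hg hgp (by linarith) hv hΦ (by simp) hv0 hk0 hvk
  obtain ⟨f, K, hf, f0, fl, fr, ff, fd⟩ := trunc v _ (show α₂ < α₂ + d by linarith)
    hv.continuous hΦ (by simp) hv0
  obtain ⟨e, K', he, e0, el, er, -, -, ed, eg⟩ := polarize g f hg hgeven hganti hf f0 hd h2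
    (σ := (α₁ + α₂ + d) / 2) (by ring) (by linarith) fl fr
  have hfg : ∫ x in α₂..(α₂ + d), (∫ y in α₂..x, v y) ^ 2 * g x =
      ∫ x in α₂..(α₂ + d), f x ^ 2 * g x := by
    refine my_congr_Ioo (by linarith) fun s hs => ?_
    rw [ff s (Ioo_subset_Icc_self hs), sq_abs]
  rw [hfg] at hfw
  have hK := key_lip g e hg hgp he (show α₁ < α₁ + d by linarith) (el _ le_rfl) (er _ le_rfl)
  have hnn : 0 ≤ ∫ s in α₁..(α₁ + d), (deriv e s + massN g α₁ (α₁ + d) * dualU g e α₁ (α₁ + d) s) ^ 2 :=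
    intervalIntegral.integral_nonneg (by linarith) fun s _ => sq_nonneg _
  have hpos : 0 < ∫ x in α₂..(α₂ + d), f x ^ 2 * g x :=
    pos_of_mul_pos_right (hvp.trans_le hfw) hk0.le
  have hpos2 := hpos.trans_le eg
  have : massN g α₁ (α₁ + d) * (∫ s in α₁..(α₁ + d), e s ^ 2 * g s) ≤
      k * (∫ s in α₁..(α₁ + d), e s ^ 2 * g s) := by
    nlinarith [mul_le_mul_of_nonneg_left eg hk0.le]
  exact le_of_mul_le_mul_right this hpos2

/-- A nonnegative minimizer of the dual quotient solves the system and is positive. -/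
lemma minimizer_pos (g e : ℝ → ℝ) (hg : Continuous g) (hgp : ∀ x, 0 < g x) {K : NNReal}
    (he : LipschitzWith K e) (he0 : ∀ s, 0 ≤ e s)
    {α β : ℝ} (hab : α < β) (h0 : e α = 0) (h1 : e β = 0)
    (hpos : 0 < ∫ s in α..β, e s ^ 2 * g s)
    (hle : (∫ s in α..β, deriv e s ^ 2) ≤ massN g α β * ∫ s in α..β, e s ^ 2 * g s) :
    0 < massN g α β ∧ (∀ s ∈ Ioo α β, 0 < e s) ∧
      ∃ U : ℝ → ℝ, (∀ s ∈ Ioo α β, HasDerivAt e (-massN g α β * U s) s) ∧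
        ∀ s, HasDerivAt U (e s * g s) s := by
  have hK := key_lip g e hg hgp he hab h0 h1
  set N := massN g α β with hN
  set U := dualU g e α β with hU
  have hUd : ∀ s, HasDerivAt U (e s * g s) s := dualU_hasDeriv g e hg he.continuous α β
  have hUc : Continuous U := continuous_iff_continuousAt.2 fun s => (hUd s).continuousAt
  have hac : AbsolutelyContinuousOnInterval e α β :=
    he.lipschitzOnWith.absolutelyContinuousOnInterval
  have hnn : 0 ≤ ∫ s in α..β, (deriv e s + N * U s) ^ 2 :=
    intervalIntegral.integral_nonneg hab.le fun s _ => sq_nonneg _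
  have hz : ∫ s in α..β, (deriv e s + N * U s) ^ 2 = 0 := le_antisymm (by linarith) hnn
  have hintg : IntervalIntegrable (fun s => (deriv e s + N * U s) ^ 2) volume α β := by
    have h3 : IntervalIntegrable (fun s => deriv e s * U s) volume α β :=
      hac.intervalIntegrable_deriv.mul_continuousOn hUc.continuousOn
    have h4 : IntervalIntegrable (fun s => U s ^ 2) volume α β :=
      (hUc.pow 2).intervalIntegrable _ _
    have := ((lip_sq_integrable he α β).add (h3.const_mul (2 * N))).add (h4.const_mul (N ^ 2))
    refine this.congr ?_
    intro s _
    simp only [Pi.add_apply]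
    ring
  have hae : ∀ᵐ s, s ∈ Ioc α β → deriv e s = -N * U s := by
    rw [intervalIntegral.integral_of_le hab.le] at hz
    rw [integral_eq_zero_iff_of_nonneg (fun s => sq_nonneg _)
      ((intervalIntegrable_iff_integrableOn_Ioc_of_le hab.le).1 hintg)] at hz
    have := (ae_restrict_iff' measurableSet_Ioc).1 hz
    filter_upwards [this] with s hs hs2
    have := hs hs2
    simp at this
    linarith
  have heq : ∀ s ∈ Icc α β, e s = ∫ x in α..s, -N * U x := fun s hs => by
    have h3 := (hac.mono (c := α) (d := s) (by
      rw [uIcc_of_le hab.le, uIcc_of_le hs.1]; exact Icc_subset_Icc_right hs.2)).integral_deriv_eq_sub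
    rw [h0, sub_zero] at h3
    rw [← h3]
    apply intervalIntegral.integral_congr_ae
    filter_upwards [hae] with x hx hx2
    rw [uIoc_of_le hs.1] at hx2
    exact hx ⟨hx2.1, hx2.2.trans hs.2⟩
  have hed : ∀ s ∈ Ioo α β, HasDerivAt e (-N * U s) s := fun s hs => by
    have h3 : HasDerivAt (fun s => ∫ x in α..s, -N * U x) (-N * U s) s :=
      ((continuous_const.mul hUc).integral_hasStrictDerivAt α s).hasDerivAt
    refine h3.congr_of_eventuallyEq ?_
    filter_upwards [Ioo_mem_nhds hs.1 hs.2] with x hx using heq x (Ioo_subset_Icc_self hx)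
  have hzero : ¬ ∀ s ∈ Icc α β, e s = 0 := fun H => by
    have : ∫ s in α..β, e s ^ 2 * g s = ∫ s in α..β, (0 : ℝ) :=
      my_congr_Ioo hab.le fun s hs => by simp [H s (Ioo_subset_Icc_self hs)]
    rw [this] at hpos
    simp at hpos
  have hN0 : 0 < N := by
    refine lt_of_le_of_ne (massN_nonneg g hgp hab.le) fun h => hzero fun s hs => ?_
    rw [heq s hs, ← h]; simp
  refine ⟨hN0, fun s hs => lt_of_le_of_ne (he0 s) fun h => hzero ?_, U, hed, hUd⟩
  have hmin : IsLocalMin e s := Filter.Eventually.of_forall fun x => by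
    rw [← h]; exact he0 x
  have h3 := hmin.hasDerivAt_eq_zero (hed s hs)
  have h4 : U s = 0 := by
    rcases mul_eq_zero.1 h3 with h5 | h5
    · linarith
    · exact h5
  exact lin_unique g e U hg N he.continuous.continuousOn hUc.continuousOn hed
    (fun x _ => hUd x) (Ioo_subset_Icc_self hs) h.symm h4

lemma const_of_refl (g : ℝ → ℝ)
    (hgeven : ∀ x, g (-x) = g x) (hganti : AntitoneOn g (Ici 0))
    {α₁ α₂ d σ : ℝ} (hd : 0 < d) (h1 : -d / 2 < α₁) (h2 : α₁ < α₂)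
    (hσ : 2 * σ = α₁ + α₂ + d)
    (href : ∀ s ∈ Ico α₁ (α₁ + d), g s = g (2 * σ - s)) :
    ∃ C, ∀ s ∈ Icc α₁ (α₁ + d), g s = C := by
  have hσ0 : 0 < σ := by linarith
  have hA := href α₁ ⟨le_rfl, by linarith⟩
  rcases le_total 0 α₁ with h | h
  · refine ⟨g α₁, fun s hs => le_antisymm (hganti h (h.trans hs.1) hs.1) ?_⟩
    rw [hA]
    exact hganti (h.trans hs.1) (by simp; linarith) (by linarith [hs.2])
  · have hper : ∀ r, 0 ≤ r → r ≤ -α₁ → g r = g (r + 2 * σ) := fun r hr hr2 => by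
      have := href (-r) ⟨by linarith, by linarith⟩
      rw [hgeven] at this
      rw [this]; congr 1; ring
    have hn : ∀ n : ℕ, ∀ r, 0 ≤ r → r ≤ -α₁ → r ≤ 2 * σ * n → g r = g 0 := by
      intro n
      induction n with
      | zero =>
        intro r hr _ hr2
        simp at hr2
        rw [le_antisymm hr2 hr]
      | succ n ih =>
        intro r hr hr1 hr2
        push_cast at hr2
        rcases le_total 0 (r - 2 * σ) with h3 | h3
        · rw [← ih (r - 2 * σ) h3 (by linarith) (by linarith), hper (r - 2 * σ) h3 (by linarith)]
          congr 1; ring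
        · refine le_antisymm (hganti (by simp) hr hr) ?_
          rw [hper 0 le_rfl (by linarith)]
          exact hganti hr (by simp; linarith) (by linarith)
    obtain ⟨n, hn2⟩ := exists_nat_ge (-α₁ / (2 * σ))
    rw [div_le_iff₀ (by linarith)] at hn2
    have hB : g α₁ = g 0 := by
      rw [← hgeven]
      exact hn n _ (by linarith) le_rfl (by linarith)
    have hall : ∀ r, 0 ≤ r → r ≤ 2 * σ - α₁ → g r = g 0 := fun r hr hr2 => by
      refine le_antisymm (hganti (by simp) hr hr) ?_
      rw [← hB, hA]
      exact hganti hr (by simp; linarith) hr2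
    refine ⟨g 0, fun s hs => ?_⟩
    rcases le_total 0 s with h3 | h3
    · exact hall s h3 (by linarith [hs.2])
    · rw [← hgeven]
      exact hall (-s) (by linarith) (by linarith [hs.1])

lemma mass_strict (g Φ v : ℝ → ℝ) (hg : Continuous g) (hgp : ∀ x, 0 < g x)
    (hgeven : ∀ x, g (-x) = g x) (hganti : AntitoneOn g (Ici 0))
    {α₁ α₂ d : ℝ} (hd : 0 < d) (h1 : -d / 2 < α₁) (h2 : α₁ < α₂)
    (hv : Continuous v) (hΦ : ∀ s, HasDerivAt Φ (v s) s)
    (hΦ0 : Φ α₂ = 0) (hΦ1 : Φ (α₂ + d) = 0)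
    (hΦp : 0 < ∫ s in α₂..(α₂ + d), Φ s ^ 2 * g s)
    (hΦe : (∫ s in α₂..(α₂ + d), v s ^ 2) ≤
      massN g α₂ (α₂ + d) * ∫ s in α₂..(α₂ + d), Φ s ^ 2 * g s)
    (hnc : ¬ ∃ C, ∀ s ∈ Icc α₁ (α₁ + d), g s = C) :
    massN g α₁ (α₁ + d) < massN g α₂ (α₂ + d) := by
  refine lt_of_le_of_ne (mass_mono g hg hgp hgeven hganti hd h1.le h2.le) fun hEq => hnc ?_
  obtain ⟨σ, hσ⟩ : ∃ σ, 2 * σ = α₁ + α₂ + d := ⟨(α₁ + α₂ + d) / 2, by ring⟩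
  obtain ⟨f, K, hf, f0, fl, fr, ff, fd⟩ := trunc v Φ (show α₂ < α₂ + d by linarith)
    hv hΦ hΦ0 hΦ1
  have hfg : ∫ x in α₂..(α₂ + d), Φ x ^ 2 * g x =
      ∫ x in α₂..(α₂ + d), f x ^ 2 * g x := by
    refine my_congr_Ioo (by linarith) fun s hs => ?_
    rw [ff s (Ioo_subset_Icc_self hs), sq_abs]
  rw [hfg] at hΦp hΦe
  obtain ⟨e, K', he, e0, el, er, e1, e2, ed, eg⟩ := polarize g f hg hgeven hganti hf f0 hd h2.le
    hσ (by linarith) fl fr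
  obtain ⟨hN, fpos, V, hfV, hV⟩ := minimizer_pos g f hg hgp hf f0
    (show α₂ < α₂ + d by linarith) (fl _ le_rfl) (fr _ le_rfl) hΦp (fd.trans hΦe)
  obtain ⟨-, epos, U, heU, hU⟩ := minimizer_pos g e hg hgp he e0
    (show α₁ < α₁ + d by linarith) (el _ le_rfl) (er _ le_rfl) (hΦp.trans_le eg) (by
      rw [hEq]
      exact ed.trans (fd.trans (hΦe.trans (mul_le_mul_of_nonneg_left eg hN.le))))
  rw [hEq] at heU
  set N := massN g α₂ (α₂ + d) with hNd
  have hUc : Continuous U := continuous_iff_continuousAt.2 fun s => (hU s).continuousAt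
  have hVc : Continuous V := continuous_iff_continuousAt.2 fun s => (hV s).continuousAt
  -- comparison on the left half
  have hcmp : ∀ s, s < σ → f s ≤ f (2 * σ - s) := by
    intro s hs
    by_contra! hlt
    have hs2 : α₂ < s := by
      by_contra! h
      have := f0 (2 * σ - s)
      rw [fl s h] at hlt
      linarith
    have hev : e =ᶠ[nhds s] f := by
      have hc : ContinuousAt (fun x => f (2 * σ - x)) s :=
        (hf.continuous.comp (continuous_const.sub continuous_id)).continuousAt
      filter_upwards [hc.eventually_lt hf.continuous.continuousAt hlt, Iio_mem_nhds hs] with x hx hx2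
      rw [e1 x (le_of_lt hx2), max_eq_left hx.le]
    have hsI1 : s ∈ Ioo α₁ (α₁ + d) := ⟨by linarith, by linarith⟩
    have hsI2 : s ∈ Ioo α₂ (α₂ + d) := ⟨by linarith, by linarith⟩
    have hUV : U s = V s := by
      have h3 := ((hfV s hsI2).congr_of_eventuallyEq hev).unique (heU s hsI1)
      have : -N ≠ 0 := by linarith
      exact (mul_left_cancel₀ this h3).symm
    have hz := lin_unique g (fun x => e x - f x) (fun x => U x - V x) hg N (l := α₂) (r := s)
      (t := s) (he.continuous.sub hf.continuous).continuousOn (hUc.sub hVc).continuousOn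
      (fun x hx => ((heU x ⟨by linarith [hx.1], by linarith [hx.2, hsI1.2]⟩).sub
        (hfV x ⟨hx.1, by linarith [hx.2, hsI2.2]⟩)).congr_deriv (by ring))
      (fun x hx => ((hU x).sub (hV x)).congr_deriv (by ring))
      ⟨hs2.le, le_rfl⟩ (by simp [hev.eq_of_nhds]) (by simp [hUV]) α₂ ⟨le_rfl, hs2.le⟩
    have h5 := epos α₂ ⟨h2, by linarith⟩
    rw [fl α₂ le_rfl] at hz
    linarith
  have heF : ∀ s, e s = f (2 * σ - s) := by
    intro s
    rcases lt_trichotomy s σ with h | h | h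
    · rw [e1 s h.le, max_eq_right (hcmp s h)]
    · rw [e1 s h.le, h, show 2 * σ - σ = σ by ring, max_self]
    · rw [e2 s h.le, min_eq_right]
      have := hcmp (2 * σ - s) (by linarith)
      rwa [show 2 * σ - (2 * σ - s) = s by ring] at this
  have hUV : ∀ s ∈ Ioo α₁ (α₁ + d), U s = - V (2 * σ - s) := by
    intro s hs
    have h3 : HasDerivAt (fun x => f (2 * σ - x)) (-(-N * V (2 * σ - s))) s :=
      (hfV (2 * σ - s) ⟨by linarith [hs.2], by linarith [hs.1]⟩).comp_const_sub (2 * σ) s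
    have h4 : e = fun x => f (2 * σ - x) := funext heF
    have h5 := heU s hs
    rw [h4] at h5
    have h6 := h5.unique h3
    have : -N ≠ 0 := by linarith
    apply mul_left_cancel₀ this
    linarith
  have hrefo : ∀ s ∈ Ioo α₁ (α₁ + d), g s = g (2 * σ - s) := by
    intro s hs
    have h3 : HasDerivAt (fun x => -V (2 * σ - x)) (-(-(f (2 * σ - s) * g (2 * σ - s)))) s :=
      ((hV (2 * σ - s)).comp_const_sub (2 * σ) s).neg
    have h4 := h3.congr_of_eventuallyEq (f₁ := U) (by
      filter_upwards [Ioo_mem_nhds hs.1 hs.2] with x hx using hUV x hx)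
    have h5 := h4.unique (hU s)
    rw [neg_neg, ← heF] at h5
    exact (mul_left_cancel₀ (epos s hs).ne' h5).symm
  refine const_of_refl g hgeven hganti hd h1 h2 hσ fun s hs => ?_
  have hcl : s ∈ closure (Ioo α₁ (α₁ + d)) := by
    rw [closure_Ioo (by linarith)]; exact Ico_subset_Icc_self hs
  exact (isClosed_eq hg (hg.comp (continuous_const.sub continuous_id))).closure_subset_iff.2
    hrefo hcl

section
open Filter Topology

lemma cs_one (w : ℝ → ℝ) (hw : Continuous w) {a b : ℝ} (hab : a ≤ b) :
    (∫ x in a..b, w x) ^ 2 ≤ (b - a) * ∫ x in a..b, w x ^ 2 := by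
  rcases hab.eq_or_lt with rfl | h
  · simp
  have hw2 : IntervalIntegrable (fun s => w s ^ 2) volume a b := (hw.pow 2).intervalIntegrable _ _
  set I := ∫ x in a..b, w x with hI
  set c := I / (b - a) with hc
  have hba : 0 < b - a := by linarith
  have h0 : 0 ≤ ∫ x in a..b, (w x - c) ^ 2 :=
    intervalIntegral.integral_nonneg hab fun s _ => sq_nonneg _
  have h1 : ∫ x in a..b, (w x - c) ^ 2 =
      (∫ x in a..b, w x ^ 2) - 2 * c * I + c ^ 2 * (b - a) := by
    have h2 : ∀ x, (w x - c) ^ 2 = w x ^ 2 - 2 * c * w x + c ^ 2 := fun x => by ring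
    simp_rw [h2]
    rw [intervalIntegral.integral_add (hw2.sub ((hw.intervalIntegrable _ _).const_mul _)) (by simp),
      intervalIntegral.integral_sub hw2 ((hw.intervalIntegrable _ _).const_mul _),
      intervalIntegral.integral_const_mul]
    simp; ring
  rw [h1] at h0
  have h3 : c * (b - a) = I := by rw [hc]; field_simp
  nlinarith

lemma exists_min (g : ℝ → ℝ) (hg : Continuous g) (hgp : ∀ x, 0 < g x) {α β : ℝ} (hab : α < β) :
    ∃ Φ v : ℝ → ℝ, Continuous v ∧ (∀ s, HasDerivAt Φ (v s) s) ∧ Φ α = 0 ∧ Φ β = 0 ∧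
      (0 < ∫ s in α..β, Φ s ^ 2 * g s) ∧
      (∫ s in α..β, v s ^ 2) ≤ massN g α β * ∫ s in α..β, Φ s ^ 2 * g s := by
  set N := massN g α β with hN
  have hN0 : 0 ≤ N := massN_nonneg g hgp hab.le
  -- normalized minimizing sequence
  have hseq : ∀ n : ℕ, ∃ v : ℝ → ℝ, Continuous v ∧ (∫ x in α..β, v x) = 0 ∧
      (∫ x in α..β, v x ^ 2) = 1 ∧
      1 ≤ (N + 1 / ((n : ℝ) + 1)) * ∫ x in α..β, (∫ y in α..x, v y) ^ 2 * g x := by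
    intro n
    have hp : 0 < 1 / ((n : ℝ) + 1) := by positivity
    obtain ⟨v, hv, hv0, hvp, hvk⟩ := massN_exists g hab (k := N + 1 / ((n : ℝ) + 1)) (by linarith)
    have hΦ : ∀ s, HasDerivAt (fun s => ∫ x in α..s, v x) (v s) s := fun s =>
      (hv.continuous.integral_hasStrictDerivAt α s).hasDerivAt
    have hfw := forward g v _ hg hgp hab hv hΦ (by simp) hv0 (by linarith) hvk
    set V := ∫ x in α..β, v x ^ 2 with hV
    set c := (Real.sqrt V)⁻¹ with hc
    have hc2 : c ^ 2 * V = 1 := by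
      rw [hc, inv_pow, Real.sq_sqrt hvp.le]; field_simp
    refine ⟨fun x => c * v x, continuous_const.mul hv.continuous, ?_, ?_, ?_⟩
    · rw [intervalIntegral.integral_const_mul, hv0, mul_zero]
    · simp_rw [mul_pow]
      rw [intervalIntegral.integral_const_mul, hc2]
    · simp_rw [intervalIntegral.integral_const_mul, mul_pow, mul_assoc]
      rw [intervalIntegral.integral_const_mul, mul_left_comm]
      have := mul_le_mul_of_nonneg_left hfw (sq_nonneg c)
      rw [hc2] at this
      exact this
  choose v hvc hv0 hv1 hvk using hseq
  set F : ℕ → ℝ → ℝ := fun n s => ∫ y in α..s, v n y with hF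
  have hFd : ∀ n s, HasDerivAt (F n) (v n s) s := fun n s =>
    ((hvc n).integral_hasStrictDerivAt α s).hasDerivAt
  have hFc : ∀ n, Continuous (F n) := fun n =>
    continuous_iff_continuousAt.2 fun s => (hFd n s).continuousAt
  have hFα : ∀ n, F n α = 0 := fun n => by simp [hF]
  have hhol : ∀ n, ∀ x ∈ Icc α β, ∀ y ∈ Icc α β, x ≤ y → (F n y - F n x) ^ 2 ≤ y - x := by
    intro n x hx y hy hxy
    have h1 : F n y - F n x = ∫ s in x..y, v n s := by
      simp only [hF]
      rw [intervalIntegral.integral_interval_sub_left] <;> exact (hvc n).intervalIntegrable _ _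
    have h2 : (∫ s in x..y, v n s ^ 2) ≤ 1 := by
      rw [← hv1 n]
      exact intervalIntegral.integral_mono_interval hx.1 hxy hy.2
        (Eventually.of_forall fun s => by positivity) (((hvc n).pow 2).intervalIntegrable _ _)
    rw [h1]
    have := cs_one (v n) (hvc n) hxy
    nlinarith
  have hbd : ∀ n, ∀ x ∈ Icc α β, |F n x| ≤ Real.sqrt (β - α) := by
    intro n x hx
    have := hhol n α ⟨le_rfl, hab.le⟩ x hx hx.1
    rw [hFα, sub_zero] at this
    exact Real.abs_le_sqrt (this.trans (by linarith [hx.2]))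
  have hhol2 : ∀ n, ∀ x ∈ Icc α β, ∀ y ∈ Icc α β, |F n x - F n y| ≤ Real.sqrt |x - y| := by
    intro n x hx y hy
    apply Real.abs_le_sqrt
    rcases le_total x y with h | h
    · rw [abs_sub_comm, abs_of_nonneg (by linarith), ← neg_sub, neg_sq]
      exact hhol n x hx y hy h
    · rw [abs_of_nonneg (by linarith)]
      exact hhol n y hy x hx h
  -- Arzela-Ascoli
  let H : ℕ → BoundedContinuousFunction (Icc α β) ℝ := fun n =>
    BoundedContinuousFunction.mkOfCompact ⟨fun x => F n x, (hFc n).comp continuous_subtype_val⟩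
  have hcomp : IsCompact (closure (range H)) := by
    refine BoundedContinuousFunction.arzela_ascoli (Icc (-Real.sqrt (β - α)) (Real.sqrt (β - α)))
      isCompact_Icc _ ?_ ?_
    · rintro _ x ⟨n, rfl⟩
      exact abs_le.1 (hbd n x x.2)
    · refine Metric.equicontinuous_of_continuity_modulus (fun t => Real.sqrt t) ?_ _ ?_
      · have := Real.continuous_sqrt.tendsto 0
        simpa using this
      · rintro x y ⟨_, n, rfl⟩
        rw [Real.dist_eq]
        exact hhol2 n x x.2 y y.2
  obtain ⟨h, -, φ, hφ, hlim⟩ := hcomp.tendsto_subseq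
    (fun n => subset_closure (mem_range_self n) : ∀ n, H n ∈ closure (range H))
  set f : ℝ → ℝ := IccExtend hab.le h with hf
  have hfc : Continuous f := h.continuous.Icc_extend' 
  have hFlim : ∀ s ∈ Icc α β, Tendsto (fun n => F (φ n) s) atTop (𝓝 (f s)) := by
    intro s hs
    have h1 := ((continuous_eval_const (F := BoundedContinuousFunction (Icc α β) ℝ)
      (⟨s, hs⟩ : Icc α β)).tendsto h).comp hlim
    have h2 : f s = h ⟨s, hs⟩ := IccExtend_of_mem _ _ hs
    rw [h2]
    exact h1
  have hfbd : ∀ x ∈ Icc α β, |f x| ≤ Real.sqrt (β - α) := fun x hx =>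
    le_of_tendsto ((hFlim x hx).abs) (Eventually.of_forall fun n => hbd _ x hx)
  -- limits of integrals
  have hdom : ∀ (G : ℕ → ℝ → ℝ) (G0 : ℝ → ℝ) (C : ℝ), (∀ n, Continuous (G n)) →
      (∀ n, ∀ x ∈ Icc α β, |G n x| ≤ C) →
      (∀ x ∈ Icc α β, Tendsto (fun n => G n x) atTop (𝓝 (G0 x))) →
      ∀ s ∈ Icc α β, Tendsto (fun n => ∫ x in α..s, G n x) atTop (𝓝 (∫ x in α..s, G0 x)) := by
    intro G G0 C hGc hGb hGl s hs
    have hsub : ∀ x, x ∈ uIoc α s → x ∈ Icc α β := fun x hx => by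
      rw [uIoc_of_le hs.1] at hx
      exact ⟨hx.1.le, hx.2.trans hs.2⟩
    exact intervalIntegral.tendsto_integral_filter_of_dominated_convergence (fun _ => C)
      (Eventually.of_forall fun n => (hGc n).aestronglyMeasurable)
      (Eventually.of_forall fun n => Eventually.of_forall fun x hx => hGb n x (hsub x hx))
      (by simp) (Eventually.of_forall fun x hx => hGl x (hsub x hx))
  obtain ⟨Cg, hCg⟩ := (isCompact_Icc (a := α) (b := β)).exists_bound_of_continuousOn
    (f := g) (by fun_prop)
  have hβ : β ∈ Icc α β := ⟨hab.le, le_rfl⟩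
  have hsq : Tendsto (fun n => ∫ x in α..β, F (φ n) x ^ 2 * g x) atTop
      (𝓝 (∫ x in α..β, f x ^ 2 * g x)) := by
    refine hdom (fun n x => F (φ n) x ^ 2 * g x) _ (Real.sqrt (β - α) ^ 2 * Cg)
      (fun n => ((hFc _).pow 2).mul hg) (fun n x hx => ?_)
      (fun x hx => ((hFlim x hx).pow 2).mul_const _) β hβ
    rw [abs_mul, abs_pow]
    exact mul_le_mul (pow_le_pow_left₀ (abs_nonneg _) (hbd _ x hx) 2) (hCg x hx) (abs_nonneg _)
      (by positivity)
  have hP : ∀ s ∈ Icc α β, Tendsto (fun n => ∫ x in α..s, F (φ n) x * g x) atTop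
      (𝓝 (∫ x in α..s, f x * g x)) := by
    refine hdom (fun n x => F (φ n) x * g x) _ (Real.sqrt (β - α) * Cg)
      (fun n => (hFc _).mul hg) (fun n x hx => ?_)
      (fun x hx => (hFlim x hx).mul_const _)
    rw [abs_mul]
    exact mul_le_mul (hbd _ x hx) (hCg x hx) (abs_nonneg _) (by positivity)
  have hprim : ∀ w : ℝ → ℝ, Continuous w → Continuous fun s => ∫ x in α..s, w x * g x :=
    fun w hw => intervalIntegral.continuous_primitive
      (fun a b => (hw.mul hg).intervalIntegrable a b) α
  have hCg0 : 0 ≤ Cg := (norm_nonneg _).trans (hCg α ⟨le_rfl, hab.le⟩)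
  have hPb : ∀ n, ∀ s ∈ Icc α β, |∫ x in α..s, F n x * g x| ≤ Real.sqrt (β - α) * Cg * (β - α) := by
    intro n s hs
    have h1 := intervalIntegral.norm_integral_le_of_norm_le_const (a := α) (b := s)
      (f := fun x => F n x * g x) (C := Real.sqrt (β - α) * Cg) (fun x hx => by
        rw [uIoc_of_le hs.1] at hx
        have hx2 : x ∈ Icc α β := ⟨hx.1.le, hx.2.trans hs.2⟩
        rw [norm_mul]
        exact mul_le_mul (hbd _ x hx2) (hCg x hx2) (norm_nonneg _) (by positivity))
    refine h1.trans (mul_le_mul_of_nonneg_left ?_ (by positivity))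
    rw [abs_of_nonneg (by linarith [hs.1])]
    linarith [hs.2]
  have hPP := hdom (fun n s => ∫ x in α..s, F (φ n) x * g x) _ _ (fun n => hprim _ (hFc _))
    (fun n => hPb _) hP
  -- limit of dualU
  have hUl : ∀ s ∈ Icc α β, Tendsto (fun n => dualU g (F (φ n)) α β s) atTop
      (𝓝 (dualU g f α β s)) := fun s hs =>
    (hP s hs).sub ((hPP β hβ).div_const _)
  have hUint : ∀ w : ℝ → ℝ, Continuous w → ∀ s, ∫ x in α..s, dualU g w α β x =
      (∫ r in α..s, ∫ x in α..r, w x * g x) -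
        (s - α) * ((∫ r in α..β, ∫ x in α..r, w x * g x) / (β - α)) := by
    intro w hw s
    unfold dualU
    rw [intervalIntegral.integral_sub ((hprim w hw).intervalIntegrable _ _) (by simp)]
    simp
    ring
  have hUIl : ∀ s ∈ Icc α β, Tendsto (fun n => ∫ x in α..s, dualU g (F (φ n)) α β x) atTop
      (𝓝 (∫ x in α..s, dualU g f α β x)) := fun s hs => by
    rw [hUint f hfc]
    simp_rw [hUint _ (hFc _)]
    exact (hPP s hs).sub (((hPP β hβ).div_const _).const_mul _)
  have hk : Tendsto (fun n => N + 1 / (((φ n : ℕ) : ℝ) + 1)) atTop (𝓝 N) := by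
    have := (tendsto_one_div_add_atTop_nhds_zero_nat (𝕜 := ℝ)).comp hφ.tendsto_atTop
    simpa using this.const_add N
  have hone : 1 ≤ N * ∫ x in α..β, f x ^ 2 * g x :=
    ge_of_tendsto (hk.mul hsq) (Eventually.of_forall fun n => hvk (φ n))
  -- the defect
  have hkey : ∀ n, (∫ s in α..β, (v n s + N * dualU g (F n) α β s) ^ 2) ≤
      1 - N * ∫ s in α..β, F n s ^ 2 * g s := by
    intro n
    have hd : deriv (F n) = v n := funext fun s => (hFd n s).deriv
    have hcd : ContDiff ℝ 1 (F n) := by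
      rw [contDiff_one_iff_deriv, hd]
      exact ⟨fun s => (hFd n s).differentiableAt, hvc n⟩
    have := key_ineq g (F n) hg hgp (hFc n) hab hcd.contDiffOn.absolutelyContinuousOnInterval
      (hFα n) (hv0 n) (by rw [hd]; exact ((hvc n).pow 2).intervalIntegrable _ _)
    rw [hd, hv1 n] at this
    exact this
  have hUc : ∀ w : ℝ → ℝ, Continuous w → Continuous (dualU g w α β) := fun w hw =>
    (dualU_contDiff g w hg hw α β).continuous
  have hfeq : ∀ s ∈ Icc α β, f s = ∫ x in α..s, -N * dualU g f α β x := by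
    intro s hs
    have h1 : Tendsto (fun n => (F (φ n) s + N * ∫ x in α..s, dualU g (F (φ n)) α β x) ^ 2) atTop
        (𝓝 ((f s + N * ∫ x in α..s, dualU g f α β x) ^ 2)) :=
      ((hFlim s hs).add ((hUIl s hs).const_mul N)).pow 2
    have h2 : ∀ n, (F n s + N * ∫ x in α..s, dualU g (F n) α β x) ^ 2 ≤
        (β - α) * (1 - N * ∫ s in α..β, F n s ^ 2 * g s) := by
      intro n
      have hcw : Continuous fun x => v n x + N * dualU g (F n) α β x :=
        (hvc n).add (continuous_const.mul (hUc _ (hFc n)))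
      have h3 : F n s + N * ∫ x in α..s, dualU g (F n) α β x =
          ∫ x in α..s, (v n x + N * dualU g (F n) α β x) := by
        have hci : IntervalIntegrable (fun x => N * dualU g (F n) α β x) volume α s :=
          (continuous_const.mul (hUc _ (hFc n))).intervalIntegrable _ _
        rw [intervalIntegral.integral_add ((hvc n).intervalIntegrable _ _) hci,
          intervalIntegral.integral_const_mul]
      rw [h3]
      have h4 : (∫ x in α..s, (v n x + N * dualU g (F n) α β x) ^ 2) ≤
          ∫ x in α..β, (v n x + N * dualU g (F n) α β x) ^ 2 :=
        intervalIntegral.integral_mono_interval le_rfl hs.1 hs.2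
          (Eventually.of_forall fun s => by positivity) ((hcw.pow 2).intervalIntegrable _ _)
      have h5 : 0 ≤ ∫ x in α..s, (v n x + N * dualU g (F n) α β x) ^ 2 :=
        intervalIntegral.integral_nonneg hs.1 fun s _ => sq_nonneg _
      refine (cs_one _ hcw hs.1).trans ?_
      exact mul_le_mul (by linarith [hs.2]) (h4.trans (hkey n)) h5 (by linarith)
    have h6 : (f s + N * ∫ x in α..s, dualU g f α β x) ^ 2 ≤
        (β - α) * (1 - N * ∫ s in α..β, f s ^ 2 * g s) :=
      le_of_tendsto_of_tendsto h1 (((hsq.const_mul N).const_sub 1).const_mul (β - α))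
        (Eventually.of_forall fun n => h2 (φ n))
    have h7 : (f s + N * ∫ x in α..s, dualU g f α β x) ^ 2 ≤ 0 :=
      h6.trans (mul_nonpos_of_nonneg_of_nonpos (by linarith) (by linarith))
    have h8 : f s + N * ∫ x in α..s, dualU g f α β x = 0 := by
      have := le_antisymm h7 (sq_nonneg _)
      exact pow_eq_zero_iff (two_ne_zero) |>.1 this
    rw [intervalIntegral.integral_const_mul]
    linarith
  have hΦd : ∀ s, HasDerivAt (fun s => ∫ x in α..s, -N * dualU g f α β x)
      (-N * dualU g f α β s) s := fun s =>
    ((continuous_const.mul (hUc f hfc)).integral_hasStrictDerivAt α s).hasDerivAt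
  set Φ : ℝ → ℝ := fun s => ∫ x in α..s, -N * dualU g f α β x with hΦ
  have hvcont : Continuous fun s => -N * dualU g f α β s := continuous_const.mul (hUc f hfc)
  have hΦc : Continuous Φ := continuous_iff_continuousAt.2 fun s => (hΦd s).continuousAt
  have hfβ : f β = 0 := by
    refine tendsto_nhds_unique (hFlim β hβ) ?_
    have : ∀ n, F (φ n) β = 0 := fun n => hv0 (φ n)
    simp_rw [this]
    exact tendsto_const_nhds
  have hΦβ : Φ β = 0 := by rw [← hfβ]; exact (hfeq β hβ).symm
  have hΦα : Φ α = 0 := by simp [hΦ]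
  have hintg : ∫ s in α..β, Φ s ^ 2 * g s = ∫ s in α..β, f s ^ 2 * g s :=
    my_congr_Ioo hab.le fun s hs => by rw [hfeq s (Ioo_subset_Icc_self hs)]
  refine ⟨Φ, _, hvcont, hΦd, hΦα, hΦβ, ?_, ?_⟩
  · rw [hintg]
    exact pos_of_mul_pos_right (by linarith) hN0
  · have ibp := intervalIntegral.integral_mul_deriv_eq_deriv_mul (a := α) (b := β)
      (u := Φ) (v := dualU g f α β) (u' := fun s => -N * dualU g f α β s)
      (v' := fun s => f s * g s)
      (fun x _ => hΦd x) (fun x _ => dualU_hasDeriv g f hg hfc α β x)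
      (hvcont.intervalIntegrable _ _) ((hfc.mul hg).intervalIntegrable _ _)
    rw [hΦα, hΦβ] at ibp
    have e1 : ∫ s in α..β, Φ s * (f s * g s) = ∫ s in α..β, f s ^ 2 * g s :=
      my_congr_Ioo hab.le fun s hs => by
        have := hfeq s (Ioo_subset_Icc_self hs)
        rw [show Φ s = f s from this.symm]; ring
    have e2 : ∫ s in α..β, (-N * dualU g f α β s) ^ 2 =
        -N * ∫ s in α..β, -N * dualU g f α β s * dualU g f α β s := by
      rw [← intervalIntegral.integral_const_mul]
      congr 1; ext s; ring
    rw [hintg, e2]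
    rw [e1] at ibp
    rw [ibp]
    linarith

end


lemma trans_eq (q Q X : ℝ → ℝ) (hq : Continuous q) (hqpos : ∀ x, 0 < q x)
    (hQd : ∀ x, HasDerivAt Q (q x) x) (hXc : Continuous X) (hQX : ∀ s, Q (X s) = s)
    (hXQ : ∀ x, X (Q x) = x) (a b : ℝ) :
    neumannMu1 q a b = massN (fun s => 1 / q (X s) ^ 2) (Q a) (Q b) := by
  have hcov : ∀ F : ℝ → ℝ, Continuous F →
      ∫ s in (Q a)..(Q b), F s = ∫ x in a..b, F (Q x) * q x := by
    intro F hF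
    exact (intervalIntegral.integral_comp_mul_deriv (fun x _ => hQd x) hq.continuousOn hF).symm
  have hXd : ∀ s, HasDerivAt X (q (X s))⁻¹ s := fun s =>
    HasDerivAt.of_local_left_inverse hXc.continuousAt (hQd (X s)) (hqpos _).ne'
      (Filter.Eventually.of_forall hQX)
  have hQ1 : ContDiff ℝ 1 Q := by
    rw [contDiff_one_iff_deriv]
    refine ⟨fun s => (hQd s).differentiableAt, ?_⟩
    rw [show deriv Q = q from funext fun s => (hQd s).deriv]
    exact hq
  have hX1 : ContDiff ℝ 1 X := by
    rw [contDiff_one_iff_deriv]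
    refine ⟨fun s => (hXd s).differentiableAt, ?_⟩
    rw [show deriv X = fun s => (q (X s))⁻¹ from funext fun s => (hXd s).deriv]
    exact (hq.comp hXc).inv₀ fun s => (hqpos _).ne'
  have hids : ∀ v : ℝ → ℝ, ContDiff ℝ 1 v →
      (∫ s in (Q a)..(Q b), v s ^ 2) = (∫ x in a..b, v (Q x) ^ 2 * q x) ∧
      (∫ s in (Q a)..(Q b), v s) = (∫ x in a..b, v (Q x) * q x) ∧
      (∫ s in (Q a)..(Q b), deriv v s ^ 2 / (1 / q (X s) ^ 2)) =
        ∫ x in a..b, deriv (fun x => v (Q x)) x ^ 2 * q x := by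
    intro v hv
    refine ⟨hcov _ (hv.continuous.pow 2), hcov _ hv.continuous, ?_⟩
    have hdv : Continuous (deriv v) := hv.continuous_deriv le_rfl
    rw [hcov (fun s => deriv v s ^ 2 / (1 / q (X s) ^ 2))
      ((hdv.pow 2).div (continuous_const.div ((hq.comp hXc).pow 2)
        fun s => (pow_pos (hqpos _) 2).ne')
        fun s => (div_pos one_pos (pow_pos (hqpos _) 2)).ne')]
    congr 1
    ext x
    have h1 : HasDerivAt (fun x => v (Q x)) (deriv v (Q x) * q x) x :=
      ((hv.differentiable one_ne_zero (Q x)).hasDerivAt).comp x (hQd x)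
    rw [h1.deriv, hXQ]
    have := (hqpos x).ne'
    field_simp
  unfold neumannMu1 massN
  congr 1
  ext μ
  constructor
  · rintro ⟨u, hu, h1, h2, h3⟩
    obtain ⟨i1, i2, i3⟩ := hids (fun s => u (X s)) (hu.comp hX1)
    simp only [hXQ] at i1 i2 i3
    refine ⟨fun s => u (X s), hu.comp hX1, ?_, ?_, ?_⟩
    · rw [i1]; exact h1
    · rw [i2]; exact h2
    · rw [i1, i3]; exact h3
  · rintro ⟨v, hv, h1, h2, h3⟩
    obtain ⟨i1, i2, i3⟩ := hids v hv
    refine ⟨fun x => v (Q x), hv.comp hQ1, ?_, ?_, ?_⟩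
    · rw [← i1]; exact h1
    · rw [← i2]; exact h2
    · rw [← i1, ← i3]; exact h3

lemma setup (q : ℝ → ℝ) (hq : Continuous q) (hqd : Differentiable ℝ q) (hqpos : ∀ x, 0 < q x)
    (hqeven : ∀ x, q (-x) = q x) (hq' : ∀ x, 0 ≤ x → 0 ≤ deriv q x) :
    ∃ Q X : ℝ → ℝ, (∀ x, HasDerivAt Q (q x) x) ∧ Continuous X ∧ (∀ s, Q (X s) = s) ∧
      (∀ x, X (Q x) = x) ∧ StrictMono Q ∧ (∀ x, Q (-x) = - Q x) ∧
      (∀ x y, ∫ t in x..y, q t = Q y - Q x) ∧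
      (∀ s, 1 / q (X (-s)) ^ 2 = 1 / q (X s) ^ 2) ∧
      AntitoneOn (fun s => 1 / q (X s) ^ 2) (Ici 0) := by
  have hmono : MonotoneOn q (Ici 0) :=
    monotoneOn_of_deriv_nonneg (convex_Ici 0) hq.continuousOn hqd.differentiableOn
      fun x hx => hq' x (interior_subset hx)
  have hq0 : ∀ x, q 0 ≤ q x := by
    intro x
    rcases le_total 0 x with h | h
    · exact hmono self_mem_Ici h h
    · rw [← hqeven x]
      have h' : 0 ≤ -x := by linarith
      exact hmono self_mem_Ici h' h'
  set Q : ℝ → ℝ := fun x => ∫ t in (0:ℝ)..x, q t with hQ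
  have hQd : ∀ x, HasDerivAt Q (q x) x := fun x =>
    (hq.integral_hasStrictDerivAt 0 x).hasDerivAt
  have hQc : Continuous Q := continuous_iff_continuousAt.2 fun s => (hQd s).continuousAt
  have hQs : StrictMono Q := strictMono_of_deriv_pos fun x => by
    rw [(hQd x).deriv]; exact hqpos x
  have hQ0 : Q 0 = 0 := by simp [hQ]
  have hQodd : ∀ x, Q (-x) = - Q x := by
    intro x
    have h := intervalIntegral.integral_comp_neg (a := 0) (b := x) (f := q)
    simp only [hqeven, neg_zero] at h
    simp only [hQ]
    rw [h, intervalIntegral.integral_symm]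
  have hsub : ∀ x y, ∫ t in x..y, q t = Q y - Q x := by
    intro x y
    simp only [hQ]
    rw [intervalIntegral.integral_interval_sub_left] <;> exact hq.intervalIntegrable _ _
  have hlow : ∀ x, 0 ≤ x → q 0 * x ≤ Q x := by
    intro x hx
    have := intervalIntegral.integral_mono_on (a := 0) (b := x) (μ := volume)
      (f := fun _ => q 0) (g := q) hx (by simp) (hq.intervalIntegrable _ _) fun t _ => hq0 t
    simp at this
    linarith
  have hsurj : Function.Surjective Q := by
    intro y
    have hp := hqpos 0
    set M := |y| / q 0 with hM
    have hM0 : 0 ≤ M := by positivity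
    have h1 : |y| ≤ Q M := by
      have := hlow M hM0
      rw [hM, mul_div_cancel₀ _ hp.ne'] at this
      exact this
    have h2 : Q (-M) ≤ -|y| := by rw [hQodd]; linarith
    have := intermediate_value_Icc (a := -M) (b := M) (by linarith) hQc.continuousOn
    obtain ⟨x, -, hx⟩ := this (show y ∈ Icc (Q (-M)) (Q M) from
      ⟨by linarith [neg_abs_le y], by linarith [le_abs_self y]⟩)
    exact ⟨x, hx⟩
  let e := hQs.orderIsoOfSurjective Q hsurj
  have hQX : ∀ s, Q (e.symm s) = s := fun s => e.apply_symm_apply s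
  have hXQ : ∀ x, e.symm (Q x) = x := fun x => e.symm_apply_apply x
  have hXodd : ∀ s, e.symm (-s) = - e.symm s := by
    intro s
    apply hQs.injective
    rw [hQX, hQodd, hQX]
  refine ⟨Q, fun s => e.symm s, hQd, e.symm.continuous, hQX, hXQ, hQs, hQodd, hsub, ?_, ?_⟩
  · intro s
    simp only [hXodd, hqeven]
  · intro s hs t ht hst
    have h0 : e.symm 0 = 0 := by
      have := hXQ 0
      rwa [hQ0] at this
    have hXs : 0 ≤ e.symm s := by
      have := e.symm.monotone hs
      rwa [h0] at this
    have hXt : 0 ≤ e.symm t := by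
      have := e.symm.monotone ht
      rwa [h0] at this
    have h1 : q (e.symm s) ≤ q (e.symm t) := hmono hXs hXt (e.symm.monotone hst)
    have := hqpos (e.symm s)
    exact one_div_le_one_div_of_le (by positivity) (pow_le_pow_left₀ this.le h1 2)

/-- Theorem 1.1 (ii)-(iii), increasing case: if `q` is a positive, even `C²` weight
with `q' ≥ 0` on `[0,∞)`, `d ∈ (0, c)` where `c = ∫_ℝ q`, `ā > 0` satisfies
`∫_{-ā}^{ā} q = d`, and `b(a)` is the unique real with `∫_a^{b(a)} q = d`
(defined whenever `∫_a^∞ q > d`, i.e. `a < a₊`), then `a ↦ μ₁((a,b(a));q)` is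
nondecreasing on `[-ā, a₊)`, and strictly increasing from any `a₁ ∈ (-ā, a₊)`
on whose interval `(a₁, b(a₁))` the weight `q` is not constant. -/
theorem stmt_1 (q : ℝ → ℝ) (hq : ContDiff ℝ 2 q) (hqpos : ∀ x, 0 < q x)
    (hqeven : ∀ x, q (-x) = q x) (hq' : ∀ x, 0 ≤ x → 0 ≤ deriv q x)
    (d : ℝ) (hd : 0 < d)
    (hdc : ENNReal.ofReal d < ∫⁻ t, ENNReal.ofReal (q t))
    (abar : ℝ) (habar : 0 < abar) (habar2 : (∫ t in (-abar)..abar, q t) = d)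
    (b : ℝ → ℝ)
    (hb : ∀ a : ℝ, ENNReal.ofReal d < (∫⁻ t in Set.Ioi a, ENNReal.ofReal (q t)) →
      (∫ t in a..(b a), q t) = d) :
    (∀ a₁ a₂ : ℝ, -abar ≤ a₁ → a₁ ≤ a₂ →
      ENNReal.ofReal d < (∫⁻ t in Set.Ioi a₂, ENNReal.ofReal (q t)) →
      neumannMu1 q a₁ (b a₁) ≤ neumannMu1 q a₂ (b a₂)) ∧
    (∀ a₁ a₂ : ℝ, -abar < a₁ → a₁ < a₂ →
      ENNReal.ofReal d < (∫⁻ t in Set.Ioi a₂, ENNReal.ofReal (q t)) →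
      (¬ ∃ C : ℝ, ∀ x ∈ Set.Ioo a₁ (b a₁), q x = C) →
      neumannMu1 q a₁ (b a₁) < neumannMu1 q a₂ (b a₂)) := by
  obtain ⟨Q, X, hQd, hXc, hQX, hXQ, hQs, hQodd, hsub, hge, hga⟩ :=
    setup q hq.continuous (hq.differentiable two_ne_zero) hqpos hqeven hq'
  have hgp : ∀ s, 0 < 1 / q (X s) ^ 2 := fun s => div_pos one_pos (pow_pos (hqpos _) 2)
  have hgc : Continuous fun s => 1 / q (X s) ^ 2 :=
    continuous_const.div ((hq.continuous.comp hXc).pow 2) fun s => (pow_pos (hqpos _) 2).ne'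
  have hQb : ∀ a, ENNReal.ofReal d < (∫⁻ t in Set.Ioi a, ENNReal.ofReal (q t)) →
      Q (b a) = Q a + d := by
    intro a ha
    have := hb a ha
    rw [hsub] at this
    linarith
  have hle : ∀ a₁ a₂ : ℝ, a₁ ≤ a₂ →
      ENNReal.ofReal d < (∫⁻ t in Set.Ioi a₂, ENNReal.ofReal (q t)) →
      ENNReal.ofReal d < (∫⁻ t in Set.Ioi a₁, ENNReal.ofReal (q t)) := fun a₁ a₂ h h2 =>
    h2.trans_le (lintegral_mono_set (Ioi_subset_Ioi h))
  have hQa : Q (-abar) = -d / 2 := by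
    have h := habar2
    rw [hsub, hQodd] at h
    rw [hQodd]
    linarith
  refine ⟨fun a₁ a₂ h1 h2 h3 => ?_, fun a₁ a₂ h1 h2 h3 h4 => ?_⟩
  · rw [trans_eq q Q X hq.continuous hqpos hQd hXc hQX hXQ,
      trans_eq q Q X hq.continuous hqpos hQd hXc hQX hXQ,
      hQb a₁ (hle _ _ h2 h3), hQb a₂ h3]
    exact mass_mono _ hgc hgp hge hga hd (hQa ▸ hQs.monotone h1) (hQs.monotone h2)
  · have hb1 := hQb a₁ (hle _ _ h2.le h3)
    rw [trans_eq q Q X hq.continuous hqpos hQd hXc hQX hXQ,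
      trans_eq q Q X hq.continuous hqpos hQd hXc hQX hXQ, hb1, hQb a₂ h3]
    obtain ⟨Φ, v, hv, hΦ, e0, e1, e2, e3⟩ :=
      exists_min (fun s => 1 / q (X s) ^ 2) hgc hgp (show Q a₂ < Q a₂ + d by linarith)
    refine mass_strict _ Φ v hgc hgp hge hga hd (hQa ▸ hQs h1) (hQs h2) hv hΦ e0 e1 e2 e3 ?_
    rintro ⟨C, hC⟩
    apply h4
    refine ⟨q a₁, fun x hx => ?_⟩
    have hm : ∀ y, a₁ ≤ y → y ≤ b a₁ → 1 / q y ^ 2 = C := by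
      intro y hy1 hy2
      have := hC (Q y) ⟨hQs.monotone hy1, hb1 ▸ hQs.monotone hy2⟩
      simpa only [hXQ] using this
    have h5 := (hm x hx.1.le hx.2.le).trans (hm a₁ le_rfl (hx.1.trans hx.2).le).symm
    rw [one_div, one_div, inv_inj] at h5
    exact (pow_left_inj₀ (hqpos x).le (hqpos a₁).le two_ne_zero).1 h5
end

section
/- Let q ∈ C²(ℝ) with q(x) > 0 for all x ∈ ℝ, q even, and q'(x) ≤ 0 for all x ≥ 0. Fix d ∈ (0, c) where c = ∫_ℝ q(t) dt ∈ (0, +∞]. Let ā > 0 be the unique positive number with ∫_{−ā}^{ā} q(t) dt = d; if c < +∞ let a₊ be defined by ∫_{a₊}^{+∞} q(t) dt = d, otherwise a₊ = +∞. For a < a₊ let b(a) be the unique real with ∫_a^{b(a)} q(t) dt = d and set μ₁(a) := μ₁((a, b(a)); q). Then: (a) μ₁ is nonincreasing on [−ā, a₊), i.e. μ₁(a₁) ≥ μ₁(a₂) whenever −ā ≤ a₁ ≤ a₂ < a₊; (b) if moreover q is not constant on the interval (a₁, b(a₁)) for some a₁ ∈ (−ā, a₊), then μ₁(a₁) > μ₁(a₂)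 for every a₂ with a₁ < a₂ < a₊. -/
open MeasureTheory Set

lemma aux_sin_sq_lip (a b : ℝ) : |Real.sin a ^ 2 - Real.sin b ^ 2| ≤ |a - b| := by
  have h : Real.sin a ^ 2 - Real.sin b ^ 2 = Real.sin (a + b) * Real.sin (a - b) := by
    rw [Real.sin_add, Real.sin_sub]
    have h1 := Real.sin_sq_add_cos_sq a
    have h2 := Real.sin_sq_add_cos_sq b
    have h3 : Real.cos a ^ 2 = 1 - Real.sin a ^ 2 := by linarith
    have h4 : Real.cos b ^ 2 = 1 - Real.sin b ^ 2 := by linarith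
    ring_nf
    rw [h3, h4]; ring
  rw [h, abs_mul]
  calc |Real.sin (a + b)| * |Real.sin (a - b)| ≤ 1 * |a - b| := by
        apply mul_le_mul (Real.abs_sin_le_one _) Real.abs_sin_le_abs (abs_nonneg _) zero_le_one
    _ = |a - b| := one_mul _

lemma aux_field_lip (κ r M a b : ℝ) (hκ : 0 ≤ κ) (hr : 0 < r) (hM : r ≤ M) :
    |κ * (1 + (r - 1) * Real.sin a ^ 2) - κ * (1 + (r - 1) * Real.sin b ^ 2)|
      ≤ κ * (M + 1) * |a - b| := by
  have : κ * (1 + (r - 1) * Real.sin a ^ 2) - κ * (1 + (r - 1) * Real.sin b ^ 2)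
    = κ * (r - 1) * (Real.sin a ^ 2 - Real.sin b ^ 2) := by ring
  rw [this, abs_mul, abs_mul, abs_of_nonneg hκ]
  have h1 : |r - 1| ≤ M + 1 := by rw [abs_le]; constructor <;> linarith
  have h2 := aux_sin_sq_lip a b
  have h3 : 0 ≤ M := by linarith
  have h4 : 0 ≤ κ * (M + 1) := by positivity
  gcongr

lemma aux_field_bd (r M a : ℝ) (hr : 0 < r) (hM : r ≤ M) :
    0 ≤ 1 + (r - 1) * Real.sin a ^ 2 ∧ 1 + (r - 1) * Real.sin a ^ 2 ≤ M + 1 := by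
  have h1 := Real.sin_sq_add_cos_sq a
  have h2 := sq_nonneg (Real.cos a)
  have h3 := sq_nonneg (Real.sin a)
  constructor <;> nlinarith

lemma prufer_exists (ρ : ℝ → ℝ) (hρ : Continuous ρ) (M : ℝ)
    (hpos : ∀ t, 0 < ρ t) (hM : ∀ t, ρ t ≤ M) (A B κ : ℝ) (hAB : A < B) (hκ : 0 ≤ κ) :
    ∃ θ : ℝ → ℝ, θ A = 0 ∧ ∀ t ∈ Ioo (A - 1) (B + 1),
      HasDerivAt θ (κ * (1 + (ρ t - 1) * Real.sin (θ t) ^ 2)) t := by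
  have hM0 : 0 ≤ M := (hpos 0).le.trans (hM 0)
  let L : NNReal := ⟨κ * (M + 1), by positivity⟩
  let R : NNReal := ⟨κ * (M + 1) * (B - A + 1), by
    have : 0 ≤ B - A := by linarith
    positivity⟩
  have hA : A ∈ Icc (A - 1) (B + 1) := ⟨by linarith, by linarith⟩
  have hPL : IsPicardLindelof (fun t θ => κ * (1 + (ρ t - 1) * Real.sin θ ^ 2))
      (⟨A, hA⟩ : Icc (A - 1) (B + 1)) (0 : ℝ) R 0 L L := by
    constructor
    · intro t _
      apply LipschitzOnWith.of_dist_le_mul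
      intro x _ y _
      rw [Real.dist_eq, Real.dist_eq]
      exact aux_field_lip κ (ρ t) M x y hκ (hpos t) (hM t)
    · intro x _
      fun_prop
    · intro t _ x _
      have := aux_field_bd (ρ t) M x (hpos t) (hM t)
      rw [Real.norm_eq_abs, abs_mul, abs_of_nonneg hκ, abs_of_nonneg this.1]
      exact mul_le_mul_of_nonneg_left this.2 hκ
    · have : max (B + 1 - A) (A - (A - 1)) = B - A + 1 := by
        rw [max_eq_left] <;> linarith
      show κ * (M + 1) * max (B + 1 - A) (A - (A - 1)) ≤ κ * (M + 1) * (B - A + 1) - 0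
      rw [this]; linarith
  obtain ⟨θ, h0, h1⟩ := hPL.exists_eq_forall_mem_Icc_hasDerivWithinAt₀
  refine ⟨θ, h0, fun t ht => ?_⟩
  exact (h1 t (Ioo_subset_Icc_self ht)).hasDerivAt (Icc_mem_nhds ht.1 ht.2)

/-- continuity in the parameter -/
lemma prufer_lip (ρ : ℝ → ℝ) (M : ℝ)
    (hpos : ∀ t, 0 < ρ t) (hM : ∀ t, ρ t ≤ M) (A B : ℝ) (hAB : A < B)
    (κ₁ κ₂ : ℝ) (h1 : 0 ≤ κ₁) (θ₁ θ₂ : ℝ → ℝ)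
    (hA1 : θ₁ A = 0) (hA2 : θ₂ A = 0)
    (hd1 : ∀ t ∈ Ioo (A - 1) (B + 1),
      HasDerivAt θ₁ (κ₁ * (1 + (ρ t - 1) * Real.sin (θ₁ t) ^ 2)) t)
    (hd2 : ∀ t ∈ Ioo (A - 1) (B + 1),
      HasDerivAt θ₂ (κ₂ * (1 + (ρ t - 1) * Real.sin (θ₂ t) ^ 2)) t) :
    |θ₁ B - θ₂ B| ≤ gronwallBound 0 (κ₁ * (M + 1)) (|κ₁ - κ₂| * (M + 1)) (B - A) := by
  have hM0 : 0 ≤ M := (hpos 0).le.trans (hM 0)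
  let L : NNReal := ⟨κ₁ * (M + 1), by positivity⟩
  have hsub : ∀ t ∈ Icc A B, t ∈ Ioo (A - 1) (B + 1) := fun t ht =>
    ⟨by linarith [ht.1], by linarith [ht.2]⟩
  have key := dist_le_of_approx_trajectories_ODE (K := L)
    (v := fun t θ => κ₁ * (1 + (ρ t - 1) * Real.sin θ ^ 2)) (f := θ₁) (g := θ₂) (a := A) (b := B)
    (f' := fun t => κ₁ * (1 + (ρ t - 1) * Real.sin (θ₁ t) ^ 2))
    (g' := fun t => κ₂ * (1 + (ρ t - 1) * Real.sin (θ₂ t) ^ 2))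
    (εf := 0) (εg := |κ₁ - κ₂| * (M + 1)) (δ := 0) ?_ ?_ ?_ ?_ ?_ ?_ ?_ ?_ B ⟨hAB.le, le_rfl⟩
  · rw [Real.dist_eq, zero_add] at key
    exact key
  · intro t
    apply LipschitzWith.of_dist_le_mul
    intro x y
    rw [Real.dist_eq, Real.dist_eq]
    exact aux_field_lip κ₁ (ρ t) M x y h1 (hpos t) (hM t)
  · exact fun t ht => (hd1 t (hsub t ht)).continuousAt.continuousWithinAt
  · exact fun t ht => (hd1 t (hsub t (Ico_subset_Icc_self ht))).hasDerivWithinAt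
  · intro t _; simp
  · exact fun t ht => (hd2 t (hsub t ht)).continuousAt.continuousWithinAt
  · exact fun t ht => (hd2 t (hsub t (Ico_subset_Icc_self ht))).hasDerivWithinAt
  · intro t _
    have := aux_field_bd (ρ t) M (θ₂ t) (hpos t) (hM t)
    rw [Real.dist_eq, ← sub_mul, abs_mul, abs_of_nonneg this.1, abs_sub_comm]
    exact mul_le_mul_of_nonneg_left this.2 (abs_nonneg _)
  · rw [hA1, hA2]; simp

lemma prufer_pi (ρ : ℝ → ℝ) (hρ : Continuous ρ) (m M : ℝ) (hm : 0 < m)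
    (hm' : ∀ t, m ≤ ρ t) (hM : ∀ t, ρ t ≤ M) (A B : ℝ) (hAB : A < B) :
    ∃ κ : ℝ, 0 < κ ∧ ∃ θ : ℝ → ℝ, θ A = 0 ∧ θ B = Real.pi ∧ ∀ t ∈ Ioo (A - 1) (B + 1),
      HasDerivAt θ (κ * (1 + (ρ t - 1) * Real.sin (θ t) ^ 2)) t := by
  have hpos : ∀ t, 0 < ρ t := fun t => hm.trans_le (hm' t)
  have hM0 : 0 ≤ M := (hpos 0).le.trans (hM 0)
  have hex : ∀ κ : ℝ, ∃ θ : ℝ → ℝ, 0 ≤ κ → (θ A = 0 ∧ ∀ t ∈ Ioo (A - 1) (B + 1),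
      HasDerivAt θ (κ * (1 + (ρ t - 1) * Real.sin (θ t) ^ 2)) t) := by
    intro κ
    by_cases hκ : 0 ≤ κ
    · obtain ⟨θ, h⟩ := prufer_exists ρ hρ M hpos hM A B κ hAB hκ
      exact ⟨θ, fun _ => h⟩
    · exact ⟨0, fun h => absurd h hκ⟩
  choose Θ hΘ using hex
  set m' := min m 1 with hm1
  have hm'0 : 0 < m' := lt_min hm one_pos
  set K0 := Real.pi / (m' * (B - A)) with hK0
  have hBA : 0 < B - A := by linarith
  have hK0pos : 0 < K0 := by positivity
  have hsub : ∀ t ∈ Icc A B, t ∈ Ioo (A - 1) (B + 1) := fun t ht =>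
    ⟨by linarith [ht.1], by linarith [ht.2]⟩
  have hcont : ContinuousOn (fun κ => Θ κ B) (Icc 0 K0) := by
    intro κ hκ
    have h1 : Filter.Tendsto (fun κ' => gronwallBound 0 (κ * (M + 1)) (|κ - κ'| * (M + 1)) (B - A))
        (nhdsWithin κ (Icc 0 K0)) (nhds 0) := by
      have hc : Continuous (fun κ' =>
          gronwallBound 0 (κ * (M + 1)) (|κ - κ'| * (M + 1)) (B - A)) := by
        apply (gronwallBound_continuous_ε 0 (κ * (M + 1)) (B - A)).comp
          (g := fun ε => gronwallBound 0 (κ * (M + 1)) ε (B - A))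
        fun_prop
      have := hc.continuousWithinAt (s := Icc 0 K0) (x := κ)
      unfold ContinuousWithinAt at this
      simpa [gronwallBound_ε0_δ0] using this
    unfold ContinuousWithinAt
    rw [tendsto_iff_dist_tendsto_zero]
    refine tendsto_of_tendsto_of_tendsto_of_le_of_le' tendsto_const_nhds h1 ?_ ?_
    · exact Filter.Eventually.of_forall fun _ => dist_nonneg
    · filter_upwards [self_mem_nhdsWithin] with κ' hκ'
      rw [dist_comm, Real.dist_eq]
      exact prufer_lip ρ M hpos hM A B hAB κ κ' hκ.1 _ _ (hΘ κ hκ.1).1 (hΘ κ' hκ'.1).1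
        (hΘ κ hκ.1).2 (hΘ κ' hκ'.1).2
  have hlow : ∀ κ, 0 ≤ κ → κ * m' * (B - A) ≤ Θ κ B := by
    intro κ hκ
    have h := hΘ κ hκ
    have := Convex.mul_sub_le_image_sub_of_le_deriv (convex_Icc A B) (f := Θ κ) (C := κ * m')
      (fun t ht => (h.2 t (hsub t ht)).continuousAt.continuousWithinAt)
      (fun t ht => (h.2 t (hsub t (interior_subset ht))).differentiableAt.differentiableWithinAt)
      (fun t ht => by
        rw [(h.2 t (hsub t (interior_subset ht))).deriv]
        apply mul_le_mul_of_nonneg_left _ hκ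
        have e1 := Real.sin_sq_add_cos_sq (Θ κ t)
        have e2 := sq_nonneg (Real.cos (Θ κ t))
        have e3 := sq_nonneg (Real.sin (Θ κ t))
        have e4 : m' ≤ ρ t := (min_le_left _ _).trans (hm' t)
        have e5 : m' ≤ 1 := min_le_right _ _
        nlinarith)
      A ⟨le_rfl, hAB.le⟩ B ⟨hAB.le, le_rfl⟩ hAB.le
    rw [h.1] at this; linarith
  have h0 : Θ 0 B ≤ Real.pi := by
    have h := hΘ 0 le_rfl
    have := Convex.image_sub_le_mul_sub_of_deriv_le (convex_Icc A B) (f := Θ 0) (C := 0)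
      (fun t ht => (h.2 t (hsub t ht)).continuousAt.continuousWithinAt)
      (fun t ht => (h.2 t (hsub t (interior_subset ht))).differentiableAt.differentiableWithinAt)
      (fun t ht => by
        rw [(h.2 t (hsub t (interior_subset ht))).deriv]; simp)
      A ⟨le_rfl, hAB.le⟩ B ⟨hAB.le, le_rfl⟩ hAB.le
    rw [h.1] at this; linarith [Real.pi_pos]
  have h0' : Θ 0 B < Real.pi := by
    have h := hΘ 0 le_rfl
    have := Convex.image_sub_le_mul_sub_of_deriv_le (convex_Icc A B) (f := Θ 0) (C := 0)
      (fun t ht => (h.2 t (hsub t ht)).continuousAt.continuousWithinAt)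
      (fun t ht => (h.2 t (hsub t (interior_subset ht))).differentiableAt.differentiableWithinAt)
      (fun t ht => by
        rw [(h.2 t (hsub t (interior_subset ht))).deriv]; simp)
      A ⟨le_rfl, hAB.le⟩ B ⟨hAB.le, le_rfl⟩ hAB.le
    rw [h.1] at this; linarith [Real.pi_pos]
  have h1 : Real.pi ≤ Θ K0 B := by
    have := hlow K0 hK0pos.le
    have e : K0 * m' * (B - A) = Real.pi := by rw [hK0]; field_simp
    linarith
  obtain ⟨κ, hκ, hκπ⟩ := intermediate_value_Icc hK0pos.le hcont ⟨h0, h1⟩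
  have hκ0 : κ ≠ 0 := by
    rintro rfl
    simp only at hκπ
    linarith
  exact ⟨κ, lt_of_le_of_ne hκ.1 hκ0.symm, Θ κ, (hΘ κ hκ.1).1, hκπ, (hΘ κ hκ.1).2⟩

/-- Dirichlet eigenpair `w' = κ p v`, `v' = -κ σ w`. -/
structure Eig (p σ : ℝ → ℝ) (A B κ : ℝ) (w v : ℝ → ℝ) : Prop where
  hκ : 0 < κ
  hw : ∀ t ∈ Icc A B, HasDerivAt w (κ * p t * v t) t
  hv : ∀ t ∈ Icc A B, HasDerivAt v (-(κ * σ t * w t)) t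
  wA : w A = 0
  wB : w B = 0
  vA : 0 < v A
  vB : v B ≠ 0
  wpos : ∀ t ∈ Ioo A B, 0 < w t

lemma eig_exists (ρ : ℝ → ℝ) (hρ : Continuous ρ) (m M : ℝ) (hm : 0 < m)
    (hm' : ∀ t, m ≤ ρ t) (hM : ∀ t, ρ t ≤ M) (A B : ℝ) (hAB : A < B) :
    ∃ κ w v, Eig (fun _ => 1) ρ A B κ w v := by
  obtain ⟨κ, hκ, θ, hA, hB, hθ⟩ := prufer_pi ρ hρ m M hm hm' hM A B hAB
  have hpos : ∀ t, 0 < ρ t := fun t => hm.trans_le (hm' t)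
  have hsub : ∀ t ∈ Icc A B, t ∈ Ioo (A - 1) (B + 1) := fun t ht =>
    ⟨by linarith [ht.1], by linarith [ht.2]⟩
  have hθc : ContinuousOn θ (Ioo (A - 1) (B + 1)) :=
    fun t ht => (hθ t ht).continuousAt.continuousWithinAt
  set g : ℝ → ℝ := fun t => κ * (1 - ρ t) * Real.sin (θ t) * Real.cos (θ t) with hg
  have hgc : ContinuousOn g (Ioo (A - 1) (B + 1)) := by
    apply ContinuousOn.mul
    · apply ContinuousOn.mul (by fun_prop)
      exact Real.continuous_sin.comp_continuousOn hθc
    · exact Real.continuous_cos.comp_continuousOn hθc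
  set r : ℝ → ℝ := fun t => Real.exp (∫ s in A..t, g s) with hr
  have hrpos : ∀ t, 0 < r t := fun t => Real.exp_pos _
  have hrd : ∀ t ∈ Icc A B, HasDerivAt r (r t * g t) t := by
    intro t ht
    have ht' := hsub t ht
    have : HasDerivAt (fun t => ∫ s in A..t, g s) (g t) t := by
      apply intervalIntegral.integral_hasDerivAt_right
      · apply ContinuousOn.intervalIntegrable
        apply hgc.mono
        rw [uIcc_of_le ht.1]
        exact fun x hx => hsub x ⟨hx.1, hx.2.trans ht.2⟩
      · exact hgc.stronglyMeasurableAtFilter isOpen_Ioo t ht'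
      · exact hgc.continuousAt (isOpen_Ioo.mem_nhds ht')
    exact this.exp
  have hmono : StrictMonoOn θ (Icc A B) := by
    apply strictMonoOn_of_deriv_pos (convex_Icc A B)
    · exact hθc.mono hsub
    · intro t ht
      have ht' := hsub t (interior_subset ht)
      rw [(hθ t ht').deriv]
      apply mul_pos hκ
      have e1 := Real.sin_sq_add_cos_sq (θ t)
      have e2 := sq_nonneg (Real.cos (θ t))
      have e3 := sq_nonneg (Real.sin (θ t))
      have e4 := hpos t
      by_cases h : Real.sin (θ t) = 0
      · rw [h]; norm_num
      · have : 0 < Real.sin (θ t) ^ 2 := by positivity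
        nlinarith
  refine ⟨κ, fun t => r t * Real.sin (θ t), fun t => r t * Real.cos (θ t), ⟨hκ, ?_, ?_, ?_, ?_, ?_, ?_, ?_⟩⟩
  · intro t ht
    refine ((hrd t ht).mul (hθ t (hsub t ht)).sin).congr_deriv ?_
    have e : g t = κ * (1 - ρ t) * Real.sin (θ t) * Real.cos (θ t) := rfl
    rw [e]
    ring
  · intro t ht
    refine ((hrd t ht).mul (hθ t (hsub t ht)).cos).congr_deriv ?_
    have e : g t = κ * (1 - ρ t) * Real.sin (θ t) * Real.cos (θ t) := rfl
    rw [e]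
    linear_combination (κ * r t * Real.sin (θ t) * (1 - ρ t)) * Real.sin_sq_add_cos_sq (θ t)
  · simp [hA]
  · simp [hB]
  · simp [hA, hrpos]
  · simp [hB, (hrpos B).ne']
  · intro t ht
    apply mul_pos (hrpos t)
    apply Real.sin_pos_of_pos_of_lt_pi
    · rw [← hA]; exact hmono ⟨le_rfl, hAB.le⟩ (Ioo_subset_Icc_self ht) ht.1
    · rw [← hB]; exact hmono (Ioo_subset_Icc_self ht) ⟨hAB.le, le_rfl⟩ ht.2

lemma picone_endpoint (φ w v : ℝ → ℝ) (c φ' w' : ℝ) (hφ : HasDerivAt φ φ' c)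
    (hw : HasDerivAt w w' c) (hw' : w' ≠ 0) (hv : ContinuousAt v c) (h1 : φ c = 0) (h2 : w c = 0) :
    ContinuousAt (fun t => φ t ^ 2 * v t / w t) c := by
  rw [continuousAt_iff_punctured_nhds]
  have e1 := hasDerivAt_iff_tendsto_slope.1 hφ
  have e2 := hasDerivAt_iff_tendsto_slope.1 hw
  have e3 := hφ.continuousAt.tendsto.mono_left (nhdsWithin_le_nhds (s := {c}ᶜ))
  have e4 := hv.tendsto.mono_left (nhdsWithin_le_nhds (s := {c}ᶜ))
  have e5 := ((e3.mul e1).mul e4).div e2 hw'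
  have : φ c * φ' * v c / w' = φ c ^ 2 * v c / w c := by rw [h1, h2]; simp
  rw [this] at e5
  refine e5.congr' ?_
  filter_upwards [self_mem_nhdsWithin] with t ht
  have ht' : t - c ≠ 0 := sub_ne_zero.2 ht
  simp only [slope_def_field, h1, h2, sub_zero, Pi.div_apply]
  by_cases hwt : w t = 0
  · simp [hwt]
  · field_simp

lemma picone (p σ : ℝ → ℝ) (hp : ∀ t, 0 < p t) (hpc : Continuous p) (hσc : Continuous σ)
    (A B κ : ℝ) (w v : ℝ → ℝ) (hAB : A < B) (E : Eig p σ A B κ w v) (φ φ' : ℝ → ℝ)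
    (hφ : ∀ t ∈ Icc A B, HasDerivAt φ (φ' t) t) (hφ' : ContinuousOn φ' (Icc A B))
    (hA : φ A = 0) (hB : φ B = 0) :
    κ ^ 2 * (∫ t in A..B, σ t * φ t ^ 2) ≤ ∫ t in A..B, φ' t ^ 2 / p t := by
  have hκ := E.hκ
  have hφc : ContinuousOn φ (Icc A B) := fun t ht => (hφ t ht).continuousAt.continuousWithinAt
  have c1 : ContinuousOn (fun t => φ' t ^ 2 / p t) (Icc A B) :=
    (hφ'.pow 2).div hpc.continuousOn (fun t _ => (hp t).ne')
  have c2 : ContinuousOn (fun t => σ t * φ t ^ 2) (Icc A B) := hσc.continuousOn.mul (hφc.pow 2)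
  have hAm : A ∈ Icc A B := ⟨le_rfl, hAB.le⟩
  have hBm : B ∈ Icc A B := ⟨hAB.le, le_rfl⟩
  have key := intervalIntegral.sub_le_integral_of_hasDeriv_right_of_le (a := A) (b := B) hAB.le
    (g := fun t => κ * (φ t ^ 2 * v t / w t))
    (g' := fun t => κ * (((2 * φ t * φ' t) * v t + φ t ^ 2 * (-(κ * σ t * w t))) * w t
      - φ t ^ 2 * v t * (κ * p t * v t)) / w t ^ 2)
    (φ := fun t => φ' t ^ 2 / p t - κ ^ 2 * (σ t * φ t ^ 2)) ?_ ?_ ?_ ?_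
  · rw [intervalIntegral.integral_sub, intervalIntegral.integral_const_mul] at key
    · simp only [hA, hB] at key
      norm_num at key
      linarith
    · exact (c1.mono (by rw [uIcc_of_le hAB.le])).intervalIntegrable
    · exact ((c2.const_mul (κ ^ 2)).mono (by rw [uIcc_of_le hAB.le])).intervalIntegrable
  · apply ContinuousOn.const_mul
    intro t ht
    apply ContinuousAt.continuousWithinAt
    rcases eq_or_lt_of_le ht.1 with rfl | h1
    · exact picone_endpoint φ w v _ _ _ (hφ _ ht) (E.hw _ ht)
        (by have := E.vA; have := hp A; positivity) (E.hv _ ht).continuousAt hA E.wA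
    rcases eq_or_lt_of_le ht.2 with rfl | h2
    · exact picone_endpoint φ w v _ _ _ (hφ _ ht) (E.hw _ ht)
        (mul_ne_zero (mul_ne_zero hκ.ne' (hp _).ne') E.vB) (E.hv _ ht).continuousAt hB E.wB
    exact (((hφ t ht).continuousAt.pow 2).mul (E.hv t ht).continuousAt).div
      (E.hw t ht).continuousAt (E.wpos t ⟨h1, h2⟩).ne'
  · intro t ht
    have ht' := Ioo_subset_Icc_self ht
    apply HasDerivAt.hasDerivWithinAt
    refine ((((((hφ t ht').pow 2).mul (E.hv t ht')).div (E.hw t ht')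
      (E.wpos t ht).ne')).const_mul κ).congr_deriv ?_
    simp
    ring
  · exact (c1.sub (c2.const_mul (κ ^ 2))).integrableOn_Icc
  · intro t ht
    have hw := E.wpos t ht
    have hpt := hp t
    have e : φ' t ^ 2 / p t - κ ^ 2 * (σ t * φ t ^ 2)
       - κ * (((2 * φ t * φ' t) * v t + φ t ^ 2 * (-(κ * σ t * w t))) * w t
      - φ t ^ 2 * v t * (κ * p t * v t)) / w t ^ 2 = (φ' t - κ * φ t * p t * v t / w t) ^ 2 / p t := by
      field_simp
      ring
    have : 0 ≤ (φ' t - κ * φ t * p t * v t / w t) ^ 2 / p t := by positivity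
    have e2 : κ * ((2 * φ t * φ' t * v t + φ t ^ 2 * -(κ * σ t * w t)) * w t
       - φ t ^ 2 * v t * (κ * p t * v t)) / w t ^ 2 ≤ φ' t ^ 2 / p t - κ ^ 2 * (σ t * φ t ^ 2) := by
      linarith
    exact e2

lemma Eig.wcont {p σ : ℝ → ℝ} {A B κ : ℝ} {w v : ℝ → ℝ} (E : Eig p σ A B κ w v) :
    ContinuousOn w (Icc A B) := fun t ht => (E.hw t ht).continuousAt.continuousWithinAt

lemma Eig.vcont {p σ : ℝ → ℝ} {A B κ : ℝ} {w v : ℝ → ℝ} (E : Eig p σ A B κ w v) :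
    ContinuousOn v (Icc A B) := fun t ht => (E.hv t ht).continuousAt.continuousWithinAt

lemma Eig.wnonneg {p σ : ℝ → ℝ} {A B κ : ℝ} {w v : ℝ → ℝ} (E : Eig p σ A B κ w v)
    (t : ℝ) (ht : t ∈ Icc A B) : 0 ≤ w t := by
  rcases eq_or_lt_of_le ht.1 with rfl | h1
  · rw [E.wA]
  rcases eq_or_lt_of_le ht.2 with rfl | h2
  · rw [E.wB]
  exact (E.wpos t ⟨h1, h2⟩).le

/-- energy identity -/
lemma Eig.energy {p σ : ℝ → ℝ} {A B κ : ℝ} {w v : ℝ → ℝ} (E : Eig p σ A B κ w v) (hAB : A < B)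
    (hpc : Continuous p) (hσc : Continuous σ) :
    (∫ t in A..B, p t * v t ^ 2) = ∫ t in A..B, σ t * w t ^ 2 := by
  have hκ := E.hκ
  have c1 : IntervalIntegrable (fun t => p t * v t ^ 2) volume A B := by
    apply ContinuousOn.intervalIntegrable
    rw [uIcc_of_le hAB.le]
    exact hpc.continuousOn.mul (E.vcont.pow 2)
  have c2 : IntervalIntegrable (fun t => σ t * w t ^ 2) volume A B := by
    apply ContinuousOn.intervalIntegrable
    rw [uIcc_of_le hAB.le]
    exact hσc.continuousOn.mul (E.wcont.pow 2)
  have := intervalIntegral.integral_eq_sub_of_hasDerivAt (a := A) (b := B) (f := fun t => w t * v t)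
    (f' := fun t => κ * (p t * v t ^ 2 - σ t * w t ^ 2)) ?_ ((c1.sub c2).const_mul κ)
  · rw [intervalIntegral.integral_const_mul, intervalIntegral.integral_sub c1 c2] at this
    simp only [E.wA, E.wB, zero_mul, sub_zero] at this
    have := (mul_eq_zero.1 this).resolve_left hκ.ne'
    linarith
  · intro t ht
    rw [uIcc_of_le hAB.le] at ht
    refine ((E.hw t ht).mul (E.hv t ht)).congr_deriv ?_
    ring

lemma Eig.norm_pos {p σ : ℝ → ℝ} {A B κ : ℝ} {w v : ℝ → ℝ} (E : Eig p σ A B κ w v) (hAB : A < B)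
    (hσc : Continuous σ) (hσ : ∀ t, 0 < σ t) :
    0 < ∫ t in A..B, σ t * w t ^ 2 := by
  apply intervalIntegral.integral_pos hAB
  · exact hσc.continuousOn.mul (E.wcont.pow 2)
  · intro t _
    have := hσ t
    positivity
  · refine ⟨(A + B) / 2, ⟨by linarith, by linarith⟩, ?_⟩
    have := hσ ((A + B) / 2)
    have := E.wpos ((A + B) / 2) ⟨by linarith, by linarith⟩
    positivity

/-- Comparison of the eigenfunction on the two sides of the origin. -/
lemma Eig.sides {ρ : ℝ → ℝ} (hpos : ∀ t, 0 < ρ t) (heven : ∀ t, ρ (-t) = ρ t)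
    {A B κ : ℝ} {w v : ℝ → ℝ} (E : Eig (fun _ => 1) ρ A B κ w v)
    (hA : A < 0) (hAB : -A ≤ B) :
    StrictMonoOn w (Icc A 0) ∧ ∀ y, 0 ≤ y → y < -A → w (-y) ≤ w y := by
  have hκ := E.hκ
  set Wr : ℝ → ℝ := fun y => v y * w (-y) + w y * v (-y) with hWr
  have hm1 : ∀ y ∈ Icc 0 (-A), y ∈ Icc A B := fun y hy =>
    ⟨by linarith [hy.1], by linarith [hy.2]⟩
  have hm2 : ∀ y ∈ Icc 0 (-A), -y ∈ Icc A B := fun y hy =>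
    ⟨by linarith [hy.2], by linarith [hy.1]⟩
  have dw : ∀ y ∈ Icc 0 (-A), HasDerivAt (fun y => w (-y)) (-(κ * v (-y))) y := by
    intro y hy
    refine ((E.hw (-y) (hm2 y hy)).comp y (hasDerivAt_neg y)).congr_deriv ?_
    ring
  have dv : ∀ y ∈ Icc 0 (-A), HasDerivAt (fun y => v (-y)) (κ * ρ y * w (-y)) y := by
    intro y hy
    refine ((E.hv (-y) (hm2 y hy)).comp y (hasDerivAt_neg y)).congr_deriv ?_
    rw [heven]; ring
  have dW : ∀ y ∈ Icc 0 (-A), HasDerivAt Wr 0 y := by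
    intro y hy
    refine (((E.hv y (hm1 y hy)).mul (dw y hy)).add
      ((E.hw y (hm1 y hy)).mul (dv y hy))).congr_deriv ?_
    ring
  have hconst := constant_of_has_deriv_right_zero (f := Wr) (a := 0) (b := -A)
    (fun y hy => (dW y hy).continuousAt.continuousWithinAt)
    (fun y hy => (dW y (Ico_subset_Icc_self hy)).hasDerivWithinAt)
  have hend : 0 ≤ Wr (-A) := by
    have h1 := E.wnonneg (-A) ⟨by linarith, hAB⟩
    have h2 := E.vA
    simp only [hWr, neg_neg, E.wA]
    nlinarith
  have hW0 : 0 ≤ Wr 0 := by rw [← hconst (-A) ⟨by linarith, le_rfl⟩]; exact hend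
  have hW : ∀ y ∈ Icc 0 (-A), 0 ≤ Wr y := fun y hy => by rw [hconst y hy]; exact hW0
  have hw0 : 0 < w 0 := E.wpos 0 ⟨hA, by linarith⟩
  have hv0 : 0 ≤ v 0 := by
    simp only [hWr, neg_zero] at hW0
    by_contra hcon
    push Not at hcon
    nlinarith
  have hvanti : StrictAntiOn v (Icc A B) := by
    apply strictAntiOn_of_deriv_neg (convex_Icc A B) E.vcont
    intro t ht
    rw [interior_Icc] at ht
    rw [(E.hv t (Ioo_subset_Icc_self ht)).deriv]
    have := E.wpos t ht
    have := hpos t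
    have : 0 < κ * ρ t * w t := by positivity
    linarith
  constructor
  · apply strictMonoOn_of_deriv_pos (convex_Icc A 0)
    · exact E.wcont.mono (fun t ht => ⟨ht.1, by linarith [ht.2]⟩)
    · intro t ht
      rw [interior_Icc] at ht
      have ht' : t ∈ Icc A B := ⟨ht.1.le, by linarith [ht.2]⟩
      rw [(E.hw t ht').deriv]
      have := hvanti ht' ⟨hA.le, by linarith⟩ ht.2
      have : 0 < v t := by linarith
      positivity
  · intro y hy0 hyA
    have hp : ∀ t ∈ Ico 0 (-A), 0 < w (-t) := fun t ht =>
      E.wpos (-t) ⟨by linarith [ht.2], by linarith [ht.1]⟩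
    have hd : ∀ t ∈ Ico 0 (-A), HasDerivAt (fun t => w t / w (-t))
        (κ * Wr t / w (-t) ^ 2) t := by
      intro t ht
      have ht' := Ico_subset_Icc_self ht
      refine ((E.hw t (hm1 t ht')).div (dw t ht') (hp t ht).ne').congr_deriv ?_
      simp only [hWr]
      congr 1
      ring
    have hmono : MonotoneOn (fun t => w t / w (-t)) (Ico 0 (-A)) := by
      apply monotoneOn_of_deriv_nonneg (convex_Ico 0 (-A))
      · exact fun t ht => (hd t ht).continuousAt.continuousWithinAt
      · exact fun t ht => (hd t (interior_subset ht)).differentiableAt.differentiableWithinAt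
      · intro t ht
        have ht' := interior_subset ht
        rw [(hd t ht').deriv]
        have := hW t (Ico_subset_Icc_self ht')
        positivity
    have := hmono (a := 0) (b := y) ⟨le_rfl, by linarith⟩ ⟨hy0, hyA⟩ hy0
    simp only [neg_zero, div_self hw0.ne'] at this
    rwa [le_div_iff₀ (hp y ⟨hy0, hyA⟩), one_mul] at this

lemma even_mono_abs {ρ : ℝ → ℝ} (heven : ∀ t, ρ (-t) = ρ t) (hmono : MonotoneOn ρ (Ici 0))
    {x y : ℝ} (h : |x| ≤ |y|) : ρ x ≤ ρ y := by
  have e : ∀ t, ρ |t| = ρ t := by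
    intro t
    rcases abs_choice t with h | h <;> rw [h]
    exact heven t
  rw [← e x, ← e y]
  exact hmono (abs_nonneg x) (abs_nonneg y) h

lemma const_of_shift {ρ : ℝ → ℝ} (heven : ∀ t, ρ (-t) = ρ t) (hmono : MonotoneOn ρ (Ici 0))
    {A B h : ℝ} (hh : 0 < h) (hAB : -A ≤ B) (hlt : A < B)
    (hg : ∀ c ∈ Ioo (max A (-h / 2)) B, ρ (c + h) ≤ ρ c) :
    ∃ C, ∀ s ∈ Ioo A B, ρ s = C := by
  have step : ∀ n : ℕ, ∀ x ∈ Ioo (max A (-h / 2)) B, 0 ≤ x → ∀ y, y < B → 0 ≤ y →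
      y ≤ x + n * h → ρ y ≤ ρ x := by
    intro n
    induction n with
    | zero =>
      intro x hx hx0 y hy hy0 hyx
      simp only [Nat.cast_zero, zero_mul, add_zero] at hyx
      exact hmono hy0 hx0 hyx
    | succ n ih =>
      intro x hx hx0 y hy hy0 hyx
      push_cast at hyx
      by_cases hc : y - h ≤ x
      · exact (hmono hy0 (show (0:ℝ) ≤ x + h by linarith) (by linarith)).trans (hg x hx)
      · push Not at hc
        have h1 := ih x hx hx0 (y - h) (by linarith) (by linarith) (by linarith)
        have h2 := hg (y - h) ⟨lt_trans hx.1 hc, by linarith⟩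
        rw [sub_add_cancel] at h2
        exact h2.trans h1
  have habs : ∀ s ∈ Ioo A B, |s| ∈ Ioo (max A (-h / 2)) B := by
    intro s hs
    refine ⟨max_lt (hs.1.trans_le (le_abs_self s)) ?_, abs_lt.2 ⟨by linarith [hs.1], hs.2⟩⟩
    have := abs_nonneg s
    linarith
  have e : ∀ t, ρ |t| = ρ t := by
    intro t
    rcases abs_choice t with h | h <;> rw [h]
    exact heven t
  have le : ∀ s ∈ Ioo A B, ∀ t ∈ Ioo A B, ρ s ≤ ρ t := by
    intro s hs t ht
    obtain ⟨n, hn⟩ := exists_nat_ge ((|s| - |t|) / h)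
    rw [div_le_iff₀ hh] at hn
    rw [← e s, ← e t]
    exact step n |t| (habs t ht) (abs_nonneg _) |s| (habs s hs).2 (abs_nonneg _) (by linarith)
  have hmid : (A + B) / 2 ∈ Ioo A B := ⟨by linarith, by linarith⟩
  exact ⟨ρ ((A + B) / 2), fun s hs => le_antisymm (le _ hs _ hmid) (le _ hmid _ hs)⟩

lemma shift_J {ρ : ℝ → ℝ} (hρ : Continuous ρ) (hpos : ∀ t, 0 < ρ t) (heven : ∀ t, ρ (-t) = ρ t)
    (hmono : MonotoneOn ρ (Ici 0)) {A B κ h : ℝ} {w v : ℝ → ℝ}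
    (E : Eig (fun _ => 1) ρ A B κ w v) (hlt : A < B) (hAB : -A ≤ B) (hh : 0 < h) :
    0 ≤ (∫ y in A..B, w y ^ 2 * (ρ (y + h) - ρ y)) ∧
    ((¬ ∃ C, ∀ s ∈ Ioo A B, ρ s = C) → 0 < ∫ y in A..B, w y ^ 2 * (ρ (y + h) - ρ y)) := by
  set g : ℝ → ℝ := fun y => ρ (y + h) - ρ y with hg
  have hgc : Continuous g := by fun_prop
  have hgodd : ∀ y, g (-h - y) = - g y := by
    intro y
    simp only [hg]
    have e1 : -h - y + h = -y := by ring
    have e2 : -h - y = -(y + h) := by ring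
    rw [e1, e2, heven, heven]; ring
  have hgnn : ∀ y, -h / 2 ≤ y → 0 ≤ g y := by
    intro y hy
    have : |y| ≤ |y + h| := by
      rw [abs_of_nonneg (show 0 ≤ y + h by linarith)]
      exact abs_le.2 ⟨by linarith, by linarith⟩
    have := even_mono_abs heven hmono this
    simp only [hg]; linarith
  set y0 := max A (-h / 2) with hy0
  have hy0B : y0 < B := max_lt hlt (by linarith)
  have hy0A : A ≤ y0 := le_max_left _ _
  have hy0h : -h / 2 ≤ y0 := le_max_right _ _
  set H : ℝ → ℝ := fun y => (w y ^ 2 - w (max A (-h - y)) ^ 2) * g y with hH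
  have hzmem : ∀ y ∈ Icc y0 B, max A (-h - y) ∈ Icc A B := by
    intro y hy
    refine ⟨le_max_left _ _, max_le hlt.le ?_⟩
    linarith [hy.1]
  have hHc : ContinuousOn H (Icc y0 B) := by
    apply ContinuousOn.mul _ hgc.continuousOn
    apply ContinuousOn.sub
    · exact (E.wcont.mono (fun t ht => ⟨hy0A.trans ht.1, ht.2⟩)).pow 2
    · apply ContinuousOn.pow
      exact E.wcont.comp (by fun_prop) hzmem
  have hstrict : ∀ y ∈ Ioo y0 B, w (max A (-h - y)) < w y := by
    intro y hy
    have hyA : A < y := hy0A.trans_lt hy.1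
    have hyh : -h / 2 < y := hy0h.trans_lt hy.1
    have hwy := E.wpos y ⟨hyA, hy.2⟩
    by_cases hc : -h - y ≤ A
    · rw [max_eq_left hc, E.wA]; exact hwy
    · push Not at hc
      rw [max_eq_right hc.le]
      obtain ⟨s1, s2⟩ := E.sides hpos heven (by linarith) hAB
      rcases le_or_gt y 0 with hy' | hy'
      · exact s1 ⟨hc.le, by linarith⟩ ⟨hyA.le, hy'⟩ (by linarith)
      · exact (s1 (a := -h - y) (b := -y) ⟨hc.le, by linarith⟩ ⟨by linarith, by linarith⟩
          (by linarith)).trans_le (s2 y hy'.le (by linarith))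
  have hnn : ∀ y ∈ Ioo y0 B, 0 ≤ H y := by
    intro y hy
    have h1 := hstrict y hy
    have h2 := E.wnonneg _ (hzmem y (Ioo_subset_Icc_self hy))
    apply mul_nonneg _ (hgnn y (by linarith [hy.1]))
    nlinarith
  have hnn' : ∀ y ∈ Icc y0 B, 0 ≤ H y := by
    have hcl : closure (Ioo y0 B) = Icc y0 B := closure_Ioo hy0B.ne
    intro y hy
    have h1 : H '' closure (Ioo y0 B) ⊆ closure (H '' Ioo y0 B) :=
      ContinuousOn.image_closure (by rwa [hcl])
    have h2 : closure (H '' Ioo y0 B) ⊆ Ici 0 := by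
      apply closure_minimal _ isClosed_Ici
      rintro _ ⟨z, hz, rfl⟩
      exact hnn z hz
    exact h2 (h1 ⟨y, by rwa [hcl], rfl⟩)
  have hFc : ContinuousOn (fun y => w y ^ 2 * g y) (Icc A B) :=
    (E.wcont.pow 2).mul hgc.continuousOn
  have hFi : ∀ c e, A ≤ c → c ≤ e → e ≤ B →
      IntervalIntegrable (fun y => w y ^ 2 * g y) volume c e := by
    intro c e h1 h2 h3
    apply ContinuousOn.intervalIntegrable
    rw [uIcc_of_le h2]
    exact hFc.mono (Icc_subset_Icc h1 h3)
  have hJ : (∫ y in A..B, w y ^ 2 * g y) = ∫ y in y0..B, H y := by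
    rcases le_or_gt (-h / 2) A with hc | hc
    · have : y0 = A := max_eq_left hc
      rw [this]
      apply intervalIntegral.integral_congr
      intro y hy
      rw [uIcc_of_le hlt.le] at hy
      have : max A (-h - y) = A := max_eq_left (by linarith [hy.1])
      simp only [hH, this, E.wA]
      ring
    · have hy : y0 = -h / 2 := max_eq_right hc.le
      rw [hy] at hHc hy0B hzmem ⊢
      have hGc : ContinuousOn (fun y => w (max A (-h - y)) ^ 2 * g y) (Icc (-h / 2) B) := by
        apply ContinuousOn.mul _ hgc.continuousOn
        apply ContinuousOn.pow
        exact E.wcont.comp (by fun_prop) hzmem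
      have hGi : ∀ c e, -h / 2 ≤ c → c ≤ e → e ≤ B →
          IntervalIntegrable (fun y => w (max A (-h - y)) ^ 2 * g y) volume c e := by
        intro c e h1 h2 h3
        apply ContinuousOn.intervalIntegrable
        rw [uIcc_of_le h2]
        exact hGc.mono (Icc_subset_Icc h1 h3)
      have e1 : (∫ y in A..B, w y ^ 2 * g y) = (∫ y in A..(-h / 2), w y ^ 2 * g y)
          + ∫ y in (-h / 2)..B, w y ^ 2 * g y :=
        (intervalIntegral.integral_add_adjacent_intervals
          (hFi _ _ le_rfl hc.le hy0B.le) (hFi _ _ hc.le hy0B.le le_rfl)).symm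
      have e2 : (∫ y in (-h / 2)..B, H y) = (∫ y in (-h / 2)..B, w y ^ 2 * g y)
          - ∫ y in (-h / 2)..B, w (max A (-h - y)) ^ 2 * g y := by
        rw [← intervalIntegral.integral_sub (hFi _ _ hc.le hy0B.le le_rfl)
          (hGi _ _ le_rfl hy0B.le le_rfl)]
        apply intervalIntegral.integral_congr
        intro y _
        simp only [hH]; ring
      have e3 : (∫ y in (-h / 2)..B, w (max A (-h - y)) ^ 2 * g y)
          = (∫ y in (-h / 2)..(-h - A), w (max A (-h - y)) ^ 2 * g y)
          + ∫ y in (-h - A)..B, w (max A (-h - y)) ^ 2 * g y :=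
        (intervalIntegral.integral_add_adjacent_intervals
          (hGi _ _ le_rfl (by linarith) (by linarith)) (hGi _ _ (by linarith) (by linarith) le_rfl)).symm
      have e4 : (∫ y in (-h - A)..B, w (max A (-h - y)) ^ 2 * g y) = 0 := by
        rw [intervalIntegral.integral_congr (g := fun _ => (0:ℝ))]
        · simp
        · intro y hy
          rw [uIcc_of_le (by linarith)] at hy
          have : max A (-h - y) = A := max_eq_left (by linarith [hy.1])
          simp [this, E.wA]
      have e5 : (∫ y in (-h / 2)..(-h - A), w (max A (-h - y)) ^ 2 * g y)
          = - ∫ y in A..(-h / 2), w y ^ 2 * g y := by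
        have := intervalIntegral.integral_comp_sub_left (a := -h / 2) (b := -h - A)
          (fun y => w y ^ 2 * g y) (-h)
        have q1 : -h - (-h - A) = A := by ring
        have q2 : -h - (-h / 2) = -h / 2 := by ring
        rw [q1, q2] at this
        rw [← this, ← intervalIntegral.integral_neg]
        apply intervalIntegral.integral_congr
        intro y hy
        rw [uIcc_of_le (by linarith)] at hy
        have : max A (-h - y) = -h - y := max_eq_right (by linarith [hy.2])
        simp only [this, hgodd]
        ring
      rw [e1, e2, e3, e4, e5]; ring
  have hJ' : (∫ y in A..B, w y ^ 2 * (ρ (y + h) - ρ y)) = ∫ y in y0..B, H y := hJ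
  rw [hJ']
  constructor
  · exact intervalIntegral.integral_nonneg hy0B.le hnn'
  · intro hnc
    have : ∃ c ∈ Ioo y0 B, ρ c < ρ (c + h) := by
      by_contra hcon
      push Not at hcon
      exact hnc (const_of_shift heven hmono hh hAB hlt hcon)
    obtain ⟨c, hc, hcg⟩ := this
    apply intervalIntegral.integral_pos hy0B hHc (fun y hy => hnn' y (Ioc_subset_Icc_self hy))
    refine ⟨c, Ioo_subset_Icc_self hc, ?_⟩
    have h1 := hstrict c hc
    have h2 := E.wnonneg _ (hzmem c (Ioo_subset_Icc_self hc))
    apply mul_pos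
    · nlinarith
    · simp only [hg]; linarith

lemma shift_compare {ρ : ℝ → ℝ} (hρ : Continuous ρ) (hpos : ∀ t, 0 < ρ t)
    (heven : ∀ t, ρ (-t) = ρ t)
    (hmono : MonotoneOn ρ (Ici 0)) {A B κ κ₂ h : ℝ} {w v w₂ v₂ : ℝ → ℝ}
    (E : Eig (fun _ => 1) ρ A B κ w v) (E₂ : Eig (fun _ => 1) ρ (A + h) (B + h) κ₂ w₂ v₂)
    (hlt : A < B) (hAB : -A ≤ B) (hh : 0 < h) :
    κ₂ ≤ κ ∧ ((¬ ∃ C, ∀ s ∈ Ioo A B, ρ s = C) → κ₂ < κ) := by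
  obtain ⟨J1, J2⟩ := shift_J hρ hpos heven hmono E hlt hAB hh
  set J := ∫ y in A..B, w y ^ 2 * (ρ (y + h) - ρ y) with hJ
  set N := ∫ t in A..B, ρ t * w t ^ 2 with hN
  have hNpos : 0 < N := E.norm_pos hlt hρ hpos
  have hκ := E.hκ
  have hκ₂ := E₂.hκ
  have hm : ∀ t ∈ Icc (A + h) (B + h), t - h ∈ Icc A B := fun t ht =>
    ⟨by linarith [ht.1], by linarith [ht.2]⟩
  have P := picone (fun _ => 1) ρ (fun _ => one_pos) continuous_const hρ (A + h) (B + h) κ₂ w₂ v₂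
    (by linarith) E₂ (fun t => w (t - h)) (fun t => κ * v (t - h))
    (by
      intro t ht
      refine ((E.hw (t - h) (hm t ht)).comp t ((hasDerivAt_id t).sub_const h)).congr_deriv ?_
      ring)
    (ContinuousOn.const_mul (E.vcont.comp (by fun_prop) hm) κ)
    (by simp [E.wA]) (by simp [E.wB])
  have i1 : (∫ t in (A + h)..(B + h), ρ t * w (t - h) ^ 2) = N + J := by
    have := intervalIntegral.integral_comp_add_right (a := A) (b := B)
      (fun t => ρ t * w (t - h) ^ 2) h
    rw [← this, hN, hJ, ← intervalIntegral.integral_add]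
    · apply intervalIntegral.integral_congr
      intro y _
      simp only [add_sub_cancel_right]
      ring
    · apply ContinuousOn.intervalIntegrable
      rw [uIcc_of_le hlt.le]
      exact hρ.continuousOn.mul (E.wcont.pow 2)
    · apply ContinuousOn.intervalIntegrable
      rw [uIcc_of_le hlt.le]
      exact (E.wcont.pow 2).mul (by fun_prop)
  have i2 : (∫ t in (A + h)..(B + h), (κ * v (t - h)) ^ 2 / 1) = κ ^ 2 * N := by
    have := intervalIntegral.integral_comp_add_right (a := A) (b := B)
      (fun t => (κ * v (t - h)) ^ 2 / 1) h
    rw [← this, hN, ← E.energy hlt continuous_const hρ, ← intervalIntegral.integral_const_mul]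
    apply intervalIntegral.integral_congr
    intro y _
    simp only [add_sub_cancel_right]
    ring
  have P' : κ₂ ^ 2 * (N + J) ≤ κ ^ 2 * N := by
    rw [← i1, ← i2]; exact P
  constructor
  · by_contra hcon
    push Not at hcon
    have : κ ^ 2 < κ₂ ^ 2 := by nlinarith
    nlinarith [mul_nonneg (sq_nonneg κ₂) J1]
  · intro hnc
    have J3 := J2 hnc
    by_contra hcon
    push Not at hcon
    have : κ ^ 2 ≤ κ₂ ^ 2 := by nlinarith
    have : 0 < κ₂ ^ 2 * J := by positivity
    nlinarith

lemma neumann_lower {q : ℝ → ℝ} (hq : Continuous q) (hpos : ∀ x, 0 < q x) {a b κ : ℝ}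
    {W V : ℝ → ℝ} (hab : a < b) (E : Eig q (fun x => (q x)⁻¹) a b κ W V)
    (u : ℝ → ℝ) (hu : ContDiff ℝ 1 u) (h0 : (∫ x in a..b, u x * q x) = 0) :
    κ ^ 2 * (∫ x in a..b, (u x) ^ 2 * q x) ≤ ∫ x in a..b, (deriv u x) ^ 2 * q x := by
  have huc : Continuous u := hu.continuous
  have hu'c : Continuous (deriv u) := hu.continuous_deriv le_rfl
  have hud : ∀ x, HasDerivAt u (deriv u x) x := fun x =>
    (hu.differentiable one_ne_zero x).hasDerivAt
  have hqi : Continuous (fun x => (q x)⁻¹) := hq.inv₀ (fun x => (hpos x).ne')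
  set φ : ℝ → ℝ := fun x => ∫ t in a..x, u t * q t with hφ
  have hφd : ∀ x, HasDerivAt φ (u x * q x) x := fun x =>
    (huc.mul hq).integral_hasStrictDerivAt a x |>.hasDerivAt
  have hφc : Continuous φ := continuous_iff_continuousAt.2 fun x => (hφd x).continuousAt
  have hφa : φ a = 0 := by simp [hφ]
  have hφb : φ b = 0 := h0
  have P := picone q (fun x => (q x)⁻¹) hpos hq hqi a b κ W V hab E φ
    (fun x => u x * q x) (fun t _ => hφd t) (huc.mul hq).continuousOn hφa hφb
  have e1 : (∫ t in a..b, (u t * q t) ^ 2 / q t) = ∫ x in a..b, u x ^ 2 * q x := by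
    apply intervalIntegral.integral_congr
    intro x _
    have := (hpos x).ne'
    simp only
    field_simp
  rw [e1] at P
  have parts := intervalIntegral.integral_mul_deriv_eq_deriv_mul (a := a) (b := b)
    (u := u) (v := φ) (u' := deriv u) (v' := fun x => u x * q x)
    (fun x _ => hud x) (fun x _ => hφd x) (hu'c.intervalIntegrable _ _)
    ((huc.mul hq).intervalIntegrable _ _)
  rw [hφa, hφb] at parts
  have e2 : (∫ x in a..b, u x * (u x * q x)) = ∫ x in a..b, u x ^ 2 * q x := by
    apply intervalIntegral.integral_congr
    intro x _
    simp only; ring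
  rw [e2] at parts
  have nn : 0 ≤ ∫ x in a..b, (deriv u x + κ ^ 2 * φ x * (q x)⁻¹) ^ 2 * q x := by
    apply intervalIntegral.integral_nonneg hab.le
    intro x _
    have := hpos x
    positivity
  have e3 : (∫ x in a..b, (deriv u x + κ ^ 2 * φ x * (q x)⁻¹) ^ 2 * q x)
      = (∫ x in a..b, deriv u x ^ 2 * q x) + 2 * κ ^ 2 * (∫ x in a..b, deriv u x * φ x)
        + κ ^ 4 * ∫ x in a..b, (q x)⁻¹ * φ x ^ 2 := by
    rw [← intervalIntegral.integral_const_mul, ← intervalIntegral.integral_const_mul,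
      ← intervalIntegral.integral_add, ← intervalIntegral.integral_add]
    · apply intervalIntegral.integral_congr
      intro x _
      have := (hpos x).ne'
      simp only
      field_simp
      ring
    all_goals apply Continuous.intervalIntegrable
    all_goals fun_prop
  have hκ := E.hκ
  have := mul_le_mul_of_nonneg_left P (sq_nonneg κ)
  nlinarith

lemma neumann_eq {q : ℝ → ℝ} (hq : Continuous q) (hpos : ∀ x, 0 < q x) {a b κ : ℝ}
    {W V : ℝ → ℝ} (hab : a < b) (E : Eig q (fun x => (q x)⁻¹) a b κ W V) :
    neumannMu1 q a b = κ ^ 2 := by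
  have hκ := E.hκ
  have hqi : Continuous (fun x => (q x)⁻¹) := hq.inv₀ (fun x => (hpos x).ne')
  apply IsLeast.csInf_eq
  constructor
  · set f : ℝ → ℝ := fun x => -(κ * (q x)⁻¹ * W x) with hf
    have hfc : ContinuousOn f (Icc a b) :=
      ((continuousOn_const.mul hqi.continuousOn).mul E.wcont).neg
    set g : ℝ → ℝ := IccExtend hab.le ((Icc a b).domRestrict f) with hg
    have hgc : Continuous g := hfc.domRestrict.Icc_extend'
    have hgf : ∀ x ∈ Icc a b, g x = f x := fun x hx => by
      simp only [hg, IccExtend_of_mem _ _ hx, domRestrict_apply]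
    set u : ℝ → ℝ := fun x => V a + ∫ t in a..x, g t with hu
    have hud : ∀ x, HasDerivAt u (g x) x := fun x =>
      (hgc.integral_hasStrictDerivAt a x).hasDerivAt.const_add _
    have hderiv : deriv u = g := funext fun x => (hud x).deriv
    have huV : ∀ x ∈ Icc a b, u x = V x := by
      intro x hx
      have : (∫ t in a..x, g t) = V x - V a := by
        apply intervalIntegral.integral_eq_sub_of_hasDerivAt
        · intro t ht
          rw [uIcc_of_le hx.1] at ht
          have ht' : t ∈ Icc a b := ⟨ht.1, ht.2.trans hx.2⟩
          rw [hgf t ht']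
          exact E.hv t ht'
        · exact hgc.intervalIntegrable _ _
      simp only [hu, this]; ring
    have i1 : (∫ x in a..b, u x ^ 2 * q x) = ∫ x in a..b, (q x)⁻¹ * W x ^ 2 := by
      rw [← E.energy hab hq hqi]
      apply intervalIntegral.integral_congr
      intro x hx
      rw [uIcc_of_le hab.le] at hx
      simp only [huV x hx]; ring
    have i2 := E.norm_pos hab hqi (fun x => inv_pos.2 (hpos x))
    have i3 : (∫ x in a..b, (deriv u x) ^ 2 * q x) = κ ^ 2 * ∫ x in a..b, (q x)⁻¹ * W x ^ 2 := by
      rw [← intervalIntegral.integral_const_mul]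
      apply intervalIntegral.integral_congr
      intro x hx
      rw [uIcc_of_le hab.le] at hx
      have := (hpos x).ne'
      simp only [hderiv, hgf x hx, hf]
      field_simp
    refine ⟨u, ?_, ?_, ?_, ?_⟩
    · rw [contDiff_one_iff_deriv, hderiv]
      exact ⟨fun x => (hud x).differentiableAt, hgc⟩
    · rw [i1]; exact i2
    · have : (∫ x in a..b, κ * q x * V x) = W b - W a := by
        apply intervalIntegral.integral_eq_sub_of_hasDerivAt
        · intro t ht
          rw [uIcc_of_le hab.le] at ht
          exact E.hw t ht
        · apply ContinuousOn.intervalIntegrable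
          rw [uIcc_of_le hab.le]
          exact (continuousOn_const.mul hq.continuousOn).mul E.vcont
      rw [E.wA, E.wB, sub_zero] at this
      have h2 : (∫ x in a..b, κ * q x * V x) = κ * ∫ x in a..b, u x * q x := by
        rw [← intervalIntegral.integral_const_mul]
        apply intervalIntegral.integral_congr
        intro x hx
        rw [uIcc_of_le hab.le] at hx
        simp only [huV x hx]; ring
      rw [h2] at this
      exact (mul_eq_zero.1 this).resolve_left hκ.ne'
    · rw [i1, i3, mul_div_assoc, div_self i2.ne', mul_one]
  · rintro μ ⟨u, hu, hupos, hu0, rfl⟩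
    rw [le_div_iff₀ hupos]
    exact neumann_lower hq hpos hab E u hu hu0

lemma neumann_congr {q p : ℝ → ℝ} {a b : ℝ} (hab : a ≤ b) (h : ∀ x ∈ Icc a b, q x = p x) :
    neumannMu1 q a b = neumannMu1 p a b := by
  have key : ∀ f : ℝ → ℝ, (∫ x in a..b, f x * q x) = ∫ x in a..b, f x * p x := by
    intro f
    apply intervalIntegral.integral_congr
    intro x hx
    rw [uIcc_of_le hab] at hx
    simp only [h x hx]
  unfold neumannMu1
  have k1 : ∀ u : ℝ → ℝ, _ := fun u => key (fun x => u x ^ 2)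
  have k2 : ∀ u : ℝ → ℝ, _ := fun u => key (fun x => deriv u x ^ 2)
  simp only [k1, k2, key]

lemma core {q : ℝ → ℝ} (hq : Continuous q) (m : ℝ) (hm : 0 < m) (hm' : ∀ x, m ≤ q x)
    (heven : ∀ x, q (-x) = q x) (hanti : AntitoneOn q (Ici 0)) {a₁ b₁ a₂ b₂ d : ℝ}
    (hd : 0 < d) (h1 : (∫ t in a₁..b₁, q t) = d) (h2 : (∫ t in a₂..b₂, q t) = d)
    (hA : -d / 2 ≤ ∫ t in (0:ℝ)..a₁, q t) (ha : a₁ < a₂) :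
    neumannMu1 q a₂ b₂ ≤ neumannMu1 q a₁ b₁ ∧
    ((¬ ∃ C : ℝ, ∀ x ∈ Ioo a₁ b₁, q x = C) → neumannMu1 q a₂ b₂ < neumannMu1 q a₁ b₁) := by
  have hpos : ∀ x, 0 < q x := fun x => hm.trans_le (hm' x)
  have hq0 : ∀ x, q x ≤ q 0 := by
    intro x
    rcases le_total 0 x with h | h
    · exact hanti (le_refl (0:ℝ)) h h
    · rw [← heven x]; exact hanti (le_refl (0:ℝ)) (show (0:ℝ) ≤ -x by linarith) (by linarith)
  set F : ℝ → ℝ := fun x => ∫ t in (0:ℝ)..x, q t with hF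
  have hFd : ∀ x, HasDerivAt F (q x) x := fun x => (hq.integral_hasStrictDerivAt 0 x).hasDerivAt
  have hFc : Continuous F := continuous_iff_continuousAt.2 fun x => (hFd x).continuousAt
  have hFmono : StrictMono F := strictMono_of_deriv_pos fun x => by rw [(hFd x).deriv]; exact hpos x
  have hF0 : F 0 = 0 := by simp [hF]
  have hFodd : ∀ x, F (-x) = - F x := by
    intro x
    have := intervalIntegral.integral_comp_neg (a := 0) (b := x) q
    simp only [heven, neg_zero] at this
    simp only [hF, this]
    exact intervalIntegral.integral_symm _ _
  have hFlow : ∀ x, 0 ≤ x → m * x ≤ F x := by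
    intro x hx
    have : (∫ t in (0:ℝ)..x, m) ≤ ∫ t in (0:ℝ)..x, q t :=
      intervalIntegral.integral_mono_on hx (by simp) (hq.intervalIntegrable _ _) (fun t _ => hm' t)
    simp at this
    linarith
  have hFsurj : Function.Surjective F := by
    apply hFc.surjective
    · apply Filter.tendsto_atTop_mono' _ _ (Filter.tendsto_id.const_mul_atTop hm)
      filter_upwards [Filter.eventually_ge_atTop 0] with x hx using hFlow x hx
    · apply Filter.tendsto_atBot_mono' _ _ (Filter.tendsto_id.const_mul_atBot hm)
      filter_upwards [Filter.eventually_le_atBot 0] with x hx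
      have h1 := hFlow (-x) (by linarith)
      rw [hFodd] at h1
      simp only [id]
      linarith
  let e := hFmono.orderIsoOfSurjective F hFsurj
  have heF : ∀ x, e.symm (F x) = x := fun x => e.symm_apply_apply x
  have hFe : ∀ s, F (e.symm s) = s := fun x => e.apply_symm_apply x
  have hec : Continuous e.symm := e.symm.continuous
  set ρ : ℝ → ℝ := fun s => ((q (e.symm s)) ^ 2)⁻¹ with hρ
  have hρF : ∀ x, ρ (F x) = ((q x) ^ 2)⁻¹ := fun x => by simp only [hρ, heF]
  have hρc : Continuous ρ :=
    ((hq.comp hec).pow 2).inv₀ (fun s => pow_ne_zero 2 (hpos _).ne')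
  have hρpos : ∀ s, 0 < ρ s := fun s => inv_pos.2 (pow_pos (hpos _) 2)
  have hρeven : ∀ s, ρ (-s) = ρ s := by
    intro s
    obtain ⟨x, rfl⟩ := hFsurj s
    rw [← hFodd, hρF, hρF, heven]
  have hρmono : MonotoneOn ρ (Ici 0) := by
    intro s hs t ht hst
    have hs' : 0 ≤ e.symm s := by
      rw [← hFmono.le_iff_le, hFe, hF0]; exact hs
    have ht' : 0 ≤ e.symm t := by
      rw [← hFmono.le_iff_le, hFe, hF0]; exact ht
    have := hanti hs' ht' (e.symm.monotone hst)
    have h3 := hpos (e.symm t)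
    simp only [hρ]
    gcongr
  have hρlow : ∀ s, ((q 0) ^ 2)⁻¹ ≤ ρ s := by
    intro s
    have := hq0 (e.symm s)
    have h3 := hpos (e.symm s)
    simp only [hρ]
    gcongr
  have hρup : ∀ s, ρ s ≤ (m ^ 2)⁻¹ := by
    intro s
    have := hm' (e.symm s)
    simp only [hρ]
    gcongr
  have hFab : ∀ a b, (∫ t in a..b, q t) = F b - F a := by
    intro a b
    simp only [hF]
    rw [intervalIntegral.integral_interval_sub_left (hq.intervalIntegrable _ _)
      (hq.intervalIntegrable _ _)]
  rw [hFab] at h1 h2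
  have hab1 : a₁ < b₁ := by rw [← hFmono.lt_iff_lt]; linarith
  have hab2 : a₂ < b₂ := by rw [← hFmono.lt_iff_lt]; linarith
  have conv : ∀ a b κ w v, Eig (fun _ => 1) ρ (F a) (F b) κ w v →
      Eig q (fun x => (q x)⁻¹) a b κ (w ∘ F) (v ∘ F) := by
    intro a b κ w v E
    have hmem : ∀ x ∈ Icc a b, F x ∈ Icc (F a) (F b) := fun x hx =>
      ⟨hFmono.monotone hx.1, hFmono.monotone hx.2⟩
    refine ⟨E.hκ, ?_, ?_, E.wA, E.wB, E.vA, E.vB, ?_⟩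
    · intro x hx
      refine ((E.hw (F x) (hmem x hx)).comp x (hFd x)).congr_deriv ?_
      simp only [Function.comp]
      ring
    · intro x hx
      refine ((E.hv (F x) (hmem x hx)).comp x (hFd x)).congr_deriv ?_
      have := (hpos x).ne'
      rw [hρF]
      simp only [Function.comp]
      field_simp
    · intro x hx
      exact E.wpos _ ⟨hFmono hx.1, hFmono hx.2⟩
  have hq0pos := hpos 0
  obtain ⟨κ₁, w₁, v₁, E₁⟩ := eig_exists ρ hρc _ _ (by positivity) hρlow hρup (F a₁) (F b₁)
    (hFmono hab1)
  obtain ⟨κ₂, w₂, v₂, E₂⟩ := eig_exists ρ hρc _ _ (by positivity) hρlow hρup (F a₂) (F b₂)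
    (hFmono hab2)
  have n1 := neumann_eq hq hpos hab1 (conv _ _ _ _ _ E₁)
  have n2 := neumann_eq hq hpos hab2 (conv _ _ _ _ _ E₂)
  have hκ1 := E₁.hκ
  have hκ2 := E₂.hκ
  have e1 : F a₂ = F a₁ + (F a₂ - F a₁) := by ring
  have e2 : F b₂ = F b₁ + (F a₂ - F a₁) := by linarith
  rw [e1, e2] at E₂
  have hA' : -d / 2 ≤ F a₁ := hA
  obtain ⟨c1, c2⟩ := shift_compare hρc hρpos hρeven hρmono E₁ E₂ (hFmono hab1) (by linarith)
    (sub_pos.2 (hFmono ha))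
  rw [n1, n2]
  refine ⟨by gcongr, fun hnc => ?_⟩
  have := c2 (by
    rintro ⟨C, hC⟩
    apply hnc
    have hmid : (a₁ + b₁) / 2 ∈ Ioo a₁ b₁ := ⟨by linarith, by linarith⟩
    refine ⟨q ((a₁ + b₁) / 2), fun x hx => ?_⟩
    have k1 := hC (F x) ⟨hFmono hx.1, hFmono hx.2⟩
    have k2 := hC (F ((a₁ + b₁) / 2)) ⟨hFmono hmid.1, hFmono hmid.2⟩
    rw [hρF] at k1 k2
    rw [← k2, inv_inj] at k1
    exact (pow_left_inj₀ (hpos _).le (hpos _).le two_ne_zero).1 k1)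
  gcongr

/-- Theorem 1.1 (ii)-(iii), decreasing case: if `q` is a positive, even `C²` weight
with `q' ≤ 0` on `[0,∞)`, `d ∈ (0, c)` where `c = ∫_ℝ q`, `ā > 0` satisfies
`∫_{-ā}^{ā} q = d`, and `b(a)` is the unique real with `∫_a^{b(a)} q = d`
(defined whenever `∫_a^∞ q > d`, i.e. `a < a₊`), then `a ↦ μ₁((a,b(a));q)` is
nonincreasing on `[-ā, a₊)`, and strictly decreasing from any `a₁ ∈ (-ā, a₊)`
on whose interval `(a₁, b(a₁))` the weight `q` is not constant. -/
theorem stmt_2 (q : ℝ → ℝ) (hq : ContDiff ℝ 2 q) (hqpos : ∀ x, 0 < q x)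
    (hqeven : ∀ x, q (-x) = q x) (hq' : ∀ x, 0 ≤ x → deriv q x ≤ 0)
    (d : ℝ) (hd : 0 < d)
    (hdc : ENNReal.ofReal d < ∫⁻ t, ENNReal.ofReal (q t))
    (abar : ℝ) (habar : 0 < abar) (habar2 : (∫ t in (-abar)..abar, q t) = d)
    (b : ℝ → ℝ)
    (hb : ∀ a : ℝ, ENNReal.ofReal d < (∫⁻ t in Set.Ioi a, ENNReal.ofReal (q t)) →
      (∫ t in a..(b a), q t) = d) :
    (∀ a₁ a₂ : ℝ, -abar ≤ a₁ → a₁ ≤ a₂ →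
      ENNReal.ofReal d < (∫⁻ t in Set.Ioi a₂, ENNReal.ofReal (q t)) →
      neumannMu1 q a₂ (b a₂) ≤ neumannMu1 q a₁ (b a₁)) ∧
    (∀ a₁ a₂ : ℝ, -abar < a₁ → a₁ < a₂ →
      ENNReal.ofReal d < (∫⁻ t in Set.Ioi a₂, ENNReal.ofReal (q t)) →
      (¬ ∃ C : ℝ, ∀ x ∈ Set.Ioo a₁ (b a₁), q x = C) →
      neumannMu1 q a₂ (b a₂) < neumannMu1 q a₁ (b a₁)) := by
  have hqc : Continuous q := hq.continuous
  have hanti : AntitoneOn q (Ici 0) := by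
    apply antitoneOn_of_deriv_nonpos (convex_Ici 0) hqc.continuousOn
    · exact (hq.differentiable two_ne_zero).differentiableOn
    · intro x hx
      exact hq' x (interior_subset hx)
  have main : ∀ a₁ a₂ : ℝ, -abar ≤ a₁ → a₁ < a₂ →
      ENNReal.ofReal d < (∫⁻ t in Set.Ioi a₂, ENNReal.ofReal (q t)) →
      neumannMu1 q a₂ (b a₂) ≤ neumannMu1 q a₁ (b a₁) ∧
      ((¬ ∃ C : ℝ, ∀ x ∈ Set.Ioo a₁ (b a₁), q x = C) →
      neumannMu1 q a₂ (b a₂) < neumannMu1 q a₁ (b a₁)) := by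
    intro a₁ a₂ h1 h12 h2
    have h1' : ENNReal.ofReal d < (∫⁻ t in Set.Ioi a₁, ENNReal.ofReal (q t)) :=
      h2.trans_le (lintegral_mono_set (Ioi_subset_Ioi h12.le))
    have i1 := hb a₁ h1'
    have i2 := hb a₂ h2
    have hlt : ∀ a c : ℝ, (∫ t in a..c, q t) = d → a < c := by
      intro a c h
      by_contra hcon
      push Not at hcon
      rw [intervalIntegral.integral_symm] at h
      have := intervalIntegral.integral_nonneg hcon (μ := volume) (f := q) (fun x _ => (hqpos x).le)
      linarith
    have l1 := hlt _ _ i1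
    have l2 := hlt _ _ i2
    set X := max abar (max (max |a₁| |b a₁|) (max |a₂| |b a₂|)) with hX
    have X0 : abar ≤ X := le_max_left _ _
    have X1 : |a₁| ≤ X := by simp [hX]
    have X2 : |b a₁| ≤ X := by simp [hX]
    have X3 : |a₂| ≤ X := by simp [hX]
    have X4 : |b a₂| ≤ X := by simp [hX]
    have hXpos : 0 < X := habar.trans_le X0
    set p : ℝ → ℝ := fun x => q (min |x| X) with hp
    have hpq : ∀ x, |x| ≤ X → q x = p x := by
      intro x hx
      simp only [hp, min_eq_left hx]
      rcases abs_choice x with h | h <;> rw [h]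
      exact (hqeven x).symm
    have hpqI : ∀ a c, |a| ≤ X → |c| ≤ X → ∀ x ∈ Icc a c, q x = p x := by
      intro a c ha hc x hx
      apply hpq
      rw [abs_le] at *
      exact ⟨by linarith [hx.1], by linarith [hx.2]⟩
    have hint : ∀ a c, a ≤ c → |a| ≤ X → |c| ≤ X → (∫ t in a..c, p t) = ∫ t in a..c, q t := by
      intro a c hac ha hc
      apply intervalIntegral.integral_congr
      intro x hx
      rw [uIcc_of_le hac] at hx
      exact (hpqI a c ha hc x hx).symm
    have hpc : Continuous p := hqc.comp (by fun_prop)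
    have hpeven : ∀ x, p (-x) = p x := fun x => by simp only [hp, abs_neg]
    have hplow : ∀ x, q X ≤ p x := fun x =>
      hanti (le_min (abs_nonneg x) hXpos.le) hXpos.le (min_le_right _ _)
    have hpanti : AntitoneOn p (Ici 0) := by
      intro x hx y hy hxy
      apply hanti (le_min (abs_nonneg x) hXpos.le) (le_min (abs_nonneg y) hXpos.le)
      rw [abs_of_nonneg hx, abs_of_nonneg hy]
      exact min_le_min_right _ hxy
    have hppos : ∀ x, 0 < p x := fun x => hqpos _
    have hA : -d / 2 ≤ ∫ t in (0:ℝ)..a₁, p t := by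
      have ii : ∀ a c, IntervalIntegrable p volume a c := fun a c => hpc.intervalIntegrable _ _
      have s1 : (∫ t in (-abar)..abar, p t) = d := by
        rw [hint _ _ (by linarith) (by rw [abs_neg, abs_of_pos habar]; exact X0)
          (by rw [abs_of_pos habar]; exact X0), habar2]
      have s2 := intervalIntegral.integral_add_adjacent_intervals (ii (-abar) 0) (ii 0 abar)
      have s3 := intervalIntegral.integral_comp_neg (a := 0) (b := abar) p
      simp only [hpeven, neg_zero] at s3
      have s4 := intervalIntegral.integral_add_adjacent_intervals (ii (-abar) 0) (ii 0 a₁)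
      have s5 := intervalIntegral.integral_nonneg h1 (μ := volume) (f := p) (fun x _ => (hppos x).le)
      linarith
    have C := core hpc (q X) (hqpos X) hplow hpeven hpanti hd
      ((hint _ _ l1.le X1 X2).trans i1) ((hint _ _ l2.le X3 X4).trans i2) hA h12
    rw [neumann_congr l1.le (hpqI _ _ X1 X2), neumann_congr l2.le (hpqI _ _ X3 X4)]
    refine ⟨C.1, fun hnc => C.2 ?_⟩
    rintro ⟨c, hc⟩
    exact hnc ⟨c, fun x hx => by
      rw [hpqI _ _ X1 X2 x (Ioo_subset_Icc_self hx)]; exact hc x hx⟩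
  constructor
  · intro a₁ a₂ h1 h12 h2
    rcases eq_or_lt_of_le h12 with rfl | h
    · exact le_rfl
    · exact (main a₁ a₂ h1 h h2).1
  · intro a₁ a₂ h1 h12 h2 h3
    exact (main a₁ a₂ h1.le h12 h2).2 h3
end

section
/- In ℝ² with the weight e^{x²+y²} (i.e. dγ₂ = e^{x²+y²} dx dy), let c and d be respectively the first and second positive zeros of the polynomial 8t⁶ − 60t⁴ + 90t² − 15 (so that c ∈ (0.43, 0.44) and d ∈ (1.33, 1.34)), let T = (c,d) × (−c,c), and let r_T > 0 be the unique radius with π(e^{r_T²} − 1) = γ₂(T). Then μ₁(B_{r_T}; γ₂) < μ₁(T; γ₂). Consequently, without the assumption of symmetry about the origin, the ball centered at the origin does not in general maximize the first nontrivial weighted Neumann eigenvalue among domains of prescribed γ₂-measure. -/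
open MeasureTheory Set

/-- The first nontrivial Neumann eigenvalue of `-div(e^{h(|x|)} ∇v) = μ e^{h(|x|)} v`
on `Ω ⊆ ℝᴺ`, defined variationally as the infimum of the weighted Rayleigh quotient
over smooth trial functions with weighted mean zero. -/
noncomputable def weightedMu1 (N : ℕ) (h : ℝ → ℝ) (Ω : Set (EuclideanSpace ℝ (Fin N))) : ℝ :=
  sInf { μ : ℝ | ∃ v : EuclideanSpace ℝ (Fin N) → ℝ, ContDiff ℝ 1 v ∧
    0 < (∫ x in Ω, (v x) ^ 2 * Real.exp (h ‖x‖)) ∧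
    (∫ x in Ω, v x * Real.exp (h ‖x‖)) = 0 ∧
    μ = (∫ x in Ω, ‖fderiv ℝ v x‖ ^ 2 * Real.exp (h ‖x‖)) /
        ∫ x in Ω, (v x) ^ 2 * Real.exp (h ‖x‖) }

/-- One-dimensional weighted Poincare inequality on `(a,b)` with constant `K`. -/
def Poin (K a b : ℝ) : Prop := ∀ f f' : ℝ → ℝ, (∀ x, HasDerivAt f (f' x) x) → Continuous f' →
  (∫ x in a..b, f x * Real.exp (x ^ 2)) = 0 →
  K * (∫ x in a..b, f x ^ 2 * Real.exp (x ^ 2)) ≤ ∫ x in a..b, f' x ^ 2 * Real.exp (x ^ 2)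

lemma poin_of_super (K a b : ℝ) (hK : 0 ≤ K) (hab : a ≤ b) (G G1 G2 : ℝ → ℝ)
    (h1 : ∀ x, HasDerivAt G (G1 x) x) (h2 : ∀ x, HasDerivAt G1 (G2 x) x)
    (hG2 : Continuous G2)
    (hpos : ∀ x ∈ Icc a b, 0 < G x)
    (hle : ∀ x ∈ Icc a b, G2 x - 2 * x * G1 x + K * G x ≤ 0) : Poin K a b := by
  intro f f' hf hf' hmean
  have cf : Continuous f := continuous_iff_continuousAt.2 fun x => (hf x).continuousAt
  have cG : Continuous G := continuous_iff_continuousAt.2 fun x => (h1 x).continuousAt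
  have cG1 : Continuous G1 := continuous_iff_continuousAt.2 fun x => (h2 x).continuousAt
  have cw : Continuous (fun x => f x * Real.exp (x ^ 2)) := by fun_prop
  set F : ℝ → ℝ := fun x => ∫ t in a..x, f t * Real.exp (t ^ 2) with hF
  have dF : ∀ x, HasDerivAt F (f x * Real.exp (x ^ 2)) x := fun x =>
    intervalIntegral.integral_hasDerivAt_right (cw.intervalIntegrable _ _)
      (cw.stronglyMeasurableAtFilter _ _) cw.continuousAt
  have cF : Continuous F := continuous_iff_continuousAt.2 fun x => (dF x).continuousAt
  have Fa : F a = 0 := by simp [hF]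
  have Fb : F b = 0 := hmean
  set D : ℝ → ℝ := fun x => -2 * K * (f' x * F x + f x * (f x * Real.exp (x ^ 2))) +
    K * ((2 * F x * (f x * Real.exp (x ^ 2)) * (G1 x / G x) + F x ^ 2 * 
      (G2 x / G x - (G1 x / G x)^2)) * Real.exp (-x ^ 2) + 
      F x ^ 2 * (G1 x / G x) * (-2 * x * Real.exp (-x ^ 2))) with hD
  have dP : ∀ x ∈ Icc a b, HasDerivAt (fun x => -2 * K * (f x * F x) +
      K * (F x ^ 2 * (G1 x / G x) * Real.exp (-x ^ 2))) (D x) x := by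
    intro x hx
    have hg := (hpos x hx).ne'
    have e1 := (((hf x).mul (dF x)).const_mul (-2 * K))
    have e2 := (((((dF x).pow 2).mul ((h2 x).div (h1 x) hg)).mul
      (((hasDerivAt_id x).pow 2).neg.exp))).const_mul K
    refine (e1.add e2).congr_deriv ?_
    simp [hD]
    field_simp
    ring_nf
    simp
  have cD : ContinuousOn D (Icc a b) := by
    have q1 : ContinuousOn (fun x => G1 x / G x) (Icc a b) :=
      cG1.continuousOn.div cG.continuousOn fun x hx => (hpos x hx).ne'
    have q2 : ContinuousOn (fun x => G2 x / G x) (Icc a b) :=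
      hG2.continuousOn.div cG.continuousOn fun x hx => (hpos x hx).ne'
    simp only [hD]
    fun_prop
  have iD : IntervalIntegrable D volume a b := by
    apply ContinuousOn.intervalIntegrable
    rwa [uIcc_of_le hab]
  have key : ∫ x in a..b, D x = 0 := by
    rw [intervalIntegral.integral_eq_sub_of_hasDerivAt (f := fun x => -2 * K * (f x * F x) +
      K * (F x ^ 2 * (G1 x / G x) * Real.exp (-x ^ 2))) (f' := D) _ iD]
    · simp [Fa, Fb]
    · rw [uIcc_of_le hab]; exact dP
  have i1 : IntervalIntegrable (fun x => f' x ^ 2 * Real.exp (x ^ 2)) volume a b :=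
    Continuous.intervalIntegrable (by fun_prop) _ _
  have i2 : IntervalIntegrable (fun x => K * (f x ^ 2 * Real.exp (x ^ 2))) volume a b :=
    Continuous.intervalIntegrable (by fun_prop) _ _
  have mono : ∫ x in a..b, D x ≤ ∫ x in a..b, (f' x ^ 2 * Real.exp (x ^ 2) -
      K * (f x ^ 2 * Real.exp (x ^ 2))) := by
    apply intervalIntegral.integral_mono_on hab iD (i1.sub i2)
    intro x hx
    have hg := hpos x hx
    have hl := hle x hx
    have hR : G2 x / G x - 2 * x * (G1 x / G x) + K ≤ 0 := by
      have : G2 x / G x - 2 * x * (G1 x / G x) + K = (G2 x - 2 * x * G1 x + K * G x) / G x := by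
        field_simp
      rw [this]; exact div_nonpos_of_nonpos_of_nonneg hl hg.le
    simp only [hD]
    generalize G2 x / G x = r2 at *
    generalize G1 x / G x = r1 at *
    rw [Real.exp_neg]
    have hE := Real.exp_pos (x ^ 2)
    generalize Real.exp (x ^ 2) = E at *
    generalize F x = u at *
    generalize f x = y at *
    generalize f' x = z at *
    have id1 : z ^ 2 * E - K * (y ^ 2 * E) - (-2 * K * (z * u + y * (y * E)) +
      K * ((2 * u * (y * E) * r1 + u ^ 2 * (r2 - r1^2)) * E⁻¹ + u ^ 2 * r1 * (-2 * x * E⁻¹)))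
      = E⁻¹ * (z * E + K * u) ^ 2 + K * E⁻¹ * (y * E - u * r1) ^ 2
        + K * E⁻¹ * u ^ 2 * (-(r2 - 2 * x * r1 + K)) := by
      field_simp
      ring
    have : 0 ≤ E⁻¹ * (z * E + K * u) ^ 2 + K * E⁻¹ * (y * E - u * r1) ^ 2
        + K * E⁻¹ * u ^ 2 * (-(r2 - 2 * x * r1 + K)) := by
      have : 0 ≤ -(r2 - 2 * x * r1 + K) := by linarith
      positivity
    linarith
  rw [key, intervalIntegral.integral_sub i1 i2, intervalIntegral.integral_const_mul] at mono
  linarith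

lemma poin_y (c : ℝ) (hc0 : 0 < c) (hc : c < 0.44) : Poin 10 (-c) c := by
  apply poin_of_super 10 (-c) c (by norm_num) (by linarith) (fun x => 1 - 5 * x ^ 2)
    (fun x => -10 * x) (fun x => -10)
  · intro x
    refine HasDerivAt.congr_deriv (((hasDerivAt_id x).pow 2).const_mul 5 |>.const_sub 1) ?_
    simp; try ring
  · intro x
    simpa using (hasDerivAt_id x).const_mul (-10)
  · fun_prop
  · intro x hx
    have : x ^ 2 ≤ c ^ 2 := sq_le_sq' hx.1 hx.2
    nlinarith
  · intro x hx
    nlinarith [sq_nonneg x]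

lemma poin_x (c d : ℝ) (hcd : c < d) (hc : 0.43 < c) (hd : d < 1.34) : Poin 10 c d := by
  have hh : ∀ x ∈ Icc c d, 0 ≤ (x - 0.43) * (1.34 - x) ∧ 0.43 < x ∧ x < 1.34 := by
    intro x hx
    have h1 : 0.43 < x := lt_of_lt_of_le hc hx.1
    have h2 : x < 1.34 := lt_of_le_of_lt hx.2 hd
    exact ⟨mul_nonneg (by linarith) (by linarith), h1, h2⟩
  apply poin_of_super 10 c d (by norm_num) hcd.le
    (fun x => 1 + 0.6 * (x - 0.9) - 4.7 * (x - 0.9) ^ 2 - 3.6 * (x - 0.9) ^ 3)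
    (fun x => 0.6 - 9.4 * (x - 0.9) - 10.8 * (x - 0.9) ^ 2)
    (fun x => -9.4 - 21.6 * (x - 0.9))
  · intro x
    have h := (hasDerivAt_id x).sub_const 0.9
    refine HasDerivAt.congr_deriv ((((h.const_mul 0.6).const_add 1).sub ((h.pow 2).const_mul 4.7)).sub 
      ((h.pow 3).const_mul 3.6)) ?_
    simp; try ring
  · intro x
    have h := (hasDerivAt_id x).sub_const 0.9
    refine HasDerivAt.congr_deriv (((h.const_mul 9.4).const_sub 0.6).sub ((h.pow 2).const_mul 10.8)) ?_
    simp; try ring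
  · fun_prop
  · intro x hx
    obtain ⟨h1, h2, h3⟩ := hh x hx
    obtain ⟨t, rfl⟩ : ∃ t, x = t + 0.9 := ⟨x - 0.9, by ring⟩
    nlinarith [mul_nonneg h1 (by linarith : 0 ≤ t + 0.9 - 0.43), sq_nonneg t]
  · intro x hx
    obtain ⟨h1, h2, h3⟩ := hh x hx
    obtain ⟨t, rfl⟩ : ∃ t, x = t + 0.9 := ⟨x - 0.9, by ring⟩
    nlinarith [mul_nonneg h1 (by linarith : 0 ≤ t + 0.9 - 0.43), mul_nonneg h1 (by linarith : 0 ≤ 1.34 - (t + 0.9)), sq_nonneg t, mul_nonneg h1 (sq_nonneg t), mul_nonneg h1 (sq_nonneg (t+0.2)), mul_nonneg h1 (sq_nonneg (t-0.2)), sq_nonneg (t ^ 2 - 0.1),sq_nonneg (t ^ 2 + 0.5 *t - 0.1)]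

lemma poin_two (K a b p q : ℝ) (hab : a ≤ b) (hpq : p < q)
    (P1 : Poin K a b) (P2 : Poin K p q)
    (V Vx Vy : ℝ → ℝ → ℝ) (cV : Continuous (Function.uncurry V))
    (cVx : Continuous (Function.uncurry Vx)) (cVy : Continuous (Function.uncurry Vy))
    (hx : ∀ x y, HasDerivAt (fun s => V s y) (Vx x y) x)
    (hy : ∀ x y, HasDerivAt (fun s => V x s) (Vy x y) y)
    (hmean : ∫ x in a..b, ∫ y in p..q, V x y * Real.exp (x ^ 2 + y ^ 2) = 0) :
    K * (∫ x in a..b, ∫ y in p..q, V x y ^ 2 * Real.exp (x ^ 2 + y ^ 2)) ≤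
      ∫ x in a..b, ∫ y in p..q, (Vx x y ^ 2 + Vy x y ^ 2) * Real.exp (x ^ 2 + y ^ 2) := by
  have cV1 : Continuous (fun z : ℝ × ℝ => V z.1 z.2) := cV
  have cVx1 : Continuous (fun z : ℝ × ℝ => Vx z.1 z.2) := cVx
  have cVy1 : Continuous (fun z : ℝ × ℝ => Vy z.1 z.2) := cVy
  have sV : ∀ x, Continuous (V x) := fun x => cV1.comp (Continuous.prodMk_right x)
  have sVx : ∀ x, Continuous (Vx x) := fun x => cVx1.comp (Continuous.prodMk_right x)
  have sVy : ∀ x, Continuous (Vy x) := fun x => cVy1.comp (Continuous.prodMk_right x)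
  set w : ℝ → ℝ := fun x => Real.exp (x ^ 2) with hw
  have cw : Continuous w := by simp only [hw]; fun_prop
  have wpos : ∀ x, 0 < w x := fun x => Real.exp_pos _
  have pull : ∀ U : ℝ → ℝ → ℝ, (∫ x in a..b, ∫ y in p..q, U x y * Real.exp (x ^ 2 + y ^ 2)) =
      ∫ x in a..b, (∫ y in p..q, U x y * w y) * w x := by
    intro U
    congr 1; ext x
    rw [← intervalIntegral.integral_mul_const]
    congr 1; ext y
    simp only [hw, Real.exp_add]; ring
  rw [pull] at hmean
  rw [pull (fun x y => V x y ^ 2), pull (fun x y => Vx x y ^ 2 + Vy x y ^ 2)]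
  set Z : ℝ := ∫ y in p..q, w y with hZ
  have Zpos : 0 < Z := intervalIntegral.intervalIntegral_pos_of_pos
    (cw.intervalIntegrable _ _) wpos hpq
  have cpar : ∀ U : ℝ → ℝ → ℝ, Continuous (fun z : ℝ × ℝ => U z.1 z.2) →
      Continuous (fun x => ∫ y in p..q, U x y * w y) := by
    intro U hU
    apply intervalIntegral.continuous_parametric_intervalIntegral_of_continuous'
    simp only [Function.uncurry_def]
    fun_prop
  set M : ℝ → ℝ := fun x => ∫ y in p..q, V x y * w y with hM
  set M' : ℝ → ℝ := fun x => ∫ y in p..q, Vx x y * w y with hM'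
  set A : ℝ → ℝ := fun x => ∫ y in p..q, V x y ^ 2 * w y with hA
  set B : ℝ → ℝ := fun x => ∫ y in p..q, Vx x y ^ 2 * w y with hB
  set C : ℝ → ℝ := fun x => ∫ y in p..q, Vy x y ^ 2 * w y with hC
  have cM : Continuous M := cpar V cV1
  have cM' : Continuous M' := cpar Vx cVx1
  have cA : Continuous A := cpar (fun x y => V x y ^ 2) (by fun_prop)
  have cB : Continuous B := cpar (fun x y => Vx x y ^ 2) (by fun_prop)
  have cC : Continuous C := cpar (fun x y => Vy x y ^ 2) (by fun_prop)
  have BC : ∀ x, (∫ y in p..q, (Vx x y ^ 2 + Vy x y ^ 2) * w y) = B x + C x := by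
    intro x
    have u1 := sVx x
    have u2 := sVy x
    rw [hB, hC, ← intervalIntegral.integral_add
      (Continuous.intervalIntegrable (by fun_prop) _ _)
      (Continuous.intervalIntegrable (by fun_prop) _ _)]
    congr 1; ext y; ring
  simp only [BC]
  have dM : ∀ x, HasDerivAt M (M' x) x := by
    intro x₀
    obtain ⟨R, hR⟩ := ((isCompact_Icc (a := x₀ - 1) (b := x₀ + 1)).prod
      (isCompact_uIcc (a := p) (b := q))).exists_bound_of_continuousOn
        (f := fun z : ℝ × ℝ => Vx z.1 z.2 * w z.2) (by fun_prop)
    refine (intervalIntegral.hasDerivAt_integral_of_dominated_loc_of_deriv_le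
      (F := fun x y => V x y * w y) (F' := fun x y => Vx x y * w y) (bound := fun _ => R)
      (s := Icc (x₀ - 1) (x₀ + 1)) (Icc_mem_nhds (by linarith) (by linarith)) ?_ ?_ ?_ ?_ ?_ ?_).2
    · refine Filter.Eventually.of_forall fun x => ?_
      have := sV x
      exact Continuous.aestronglyMeasurable (by fun_prop)
    · have := sV x₀
      exact Continuous.intervalIntegrable (by fun_prop) _ _
    · have := sVx x₀
      exact Continuous.aestronglyMeasurable (by fun_prop)
    · refine Filter.Eventually.of_forall fun y hy x hx => ?_
      exact hR (x, y) ⟨hx, uIoc_subset_uIcc hy⟩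
    · exact continuous_const.intervalIntegrable _ _
    · refine Filter.Eventually.of_forall fun y _ x _ => ?_
      exact (hx x y).mul_const _
  have expand : ∀ (g : ℝ → ℝ) (m : ℝ), Continuous g →
      ∫ y in p..q, (g y - m) ^ 2 * w y =
        (∫ y in p..q, g y ^ 2 * w y) - 2 * m * (∫ y in p..q, g y * w y) + m ^ 2 * Z := by
    intro g m hg
    rw [hZ, ← intervalIntegral.integral_const_mul, ← intervalIntegral.integral_const_mul,
      ← intervalIntegral.integral_sub
      (Continuous.intervalIntegrable (by fun_prop) _ _)
      (Continuous.intervalIntegrable (by fun_prop) _ _), ← intervalIntegral.integral_add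
      (Continuous.intervalIntegrable (by fun_prop) _ _)
      (Continuous.intervalIntegrable (by fun_prop) _ _)]
    congr 1; ext y; ring
  have s1 : ∀ x, K * (A x - M x ^ 2 / Z) ≤ C x := by
    intro x
    have := P2 (fun y => V x y - M x / Z) (Vy x) (fun y => (hy x y).sub_const _) (sVy x) ?_
    · have e := expand (V x) (M x / Z) (sV x)
      simp only [hw] at e
      rw [e] at this
      refine le_trans (le_of_eq ?_) this
      simp only [hA, hM, hw]
      field_simp
      ring
    · have := sV x
      have e : ∀ y, (V x y - M x / Z) * Real.exp (y ^ 2) = V x y * w y - M x / Z * w y := by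
        intro y; simp only [hw]; ring
      simp only [e]
      rw [intervalIntegral.integral_sub
        (Continuous.intervalIntegrable (by fun_prop) _ _)
        (Continuous.intervalIntegrable (by fun_prop) _ _), intervalIntegral.integral_const_mul]
      change M x - M x / Z * Z = 0
      field_simp
      ring
  have s2 : ∀ x, M' x ^ 2 / Z ≤ B x := by
    intro x
    have e := expand (Vx x) (M' x / Z) (sVx x)
    have h0 : 0 ≤ ∫ y in p..q, (Vx x y - M' x / Z) ^ 2 * w y :=
      intervalIntegral.integral_nonneg hpq.le fun y _ => by have := wpos y; positivity
    rw [e] at h0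
    change 0 ≤ B x - 2 * (M' x / Z) * M' x + (M' x / Z) ^ 2 * Z at h0
    have : B x - 2 * (M' x / Z) * M' x + (M' x / Z) ^ 2 * Z = B x - M' x ^ 2 / Z := by
      field_simp; ring
    linarith
  have s3 := P1 M M' dM cM' hmean
  change K * (∫ x in a..b, M x ^ 2 * w x) ≤ ∫ x in a..b, M' x ^ 2 * w x at s3
  have t1 : ∫ x in a..b, (K * (A x * w x) - K / Z * (M x ^ 2 * w x)) ≤ ∫ x in a..b, C x * w x := by
    apply intervalIntegral.integral_mono_on hab
      (Continuous.intervalIntegrable (by fun_prop) _ _)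
      (Continuous.intervalIntegrable (by fun_prop) _ _)
    intro x _
    have := mul_le_mul_of_nonneg_right (s1 x) (wpos x).le
    refine le_trans (le_of_eq ?_) this
    ring
  have t2 : ∫ x in a..b, (1 / Z * (M' x ^ 2 * w x)) ≤ ∫ x in a..b, B x * w x := by
    apply intervalIntegral.integral_mono_on hab
      (Continuous.intervalIntegrable (by fun_prop) _ _)
      (Continuous.intervalIntegrable (by fun_prop) _ _)
    intro x _
    have := mul_le_mul_of_nonneg_right (s2 x) (wpos x).le
    refine le_trans (le_of_eq ?_) this
    ring
  rw [intervalIntegral.integral_sub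
        (Continuous.intervalIntegrable (by fun_prop) _ _)
        (Continuous.intervalIntegrable (by fun_prop) _ _), intervalIntegral.integral_const_mul,
        intervalIntegral.integral_const_mul] at t1
  rw [intervalIntegral.integral_const_mul] at t2
  have fin : ∫ x in a..b, (B x + C x) * w x = (∫ x in a..b, B x * w x) + ∫ x in a..b, C x * w x := by
    rw [← intervalIntegral.integral_add
        (Continuous.intervalIntegrable (by fun_prop) _ _)
        (Continuous.intervalIntegrable (by fun_prop) _ _)]
    congr 1; ext x; ring
  rw [fin]
  have t3 := mul_le_mul_of_nonneg_left s3 (by positivity : 0 ≤ 1 / Z)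
  have : 1 / Z * (K * ∫ x in a..b, M x ^ 2 * w x) = K / Z * ∫ x in a..b, M x ^ 2 * w x := by ring
  change K * (∫ x in a..b, A x * w x) ≤ _
  linarith

abbrev E2 := EuclideanSpace ℝ (Fin 2)

lemma int_rect (a b p q : ℝ) (hab : a ≤ b) (hpq : p ≤ q) (U : E2 → ℝ) (hU : Continuous U) :
    ∫ x in {z : E2 | z 0 ∈ Ioo a b ∧ z 1 ∈ Ioo p q}, U x =
      ∫ x in a..b, ∫ y in p..q, U !₂[x, y] := by
  have mp := ((PiLp.volume_preserving_toLp (Fin 2)).comp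
    ((volume_preserving_finTwoArrow ℝ).symm _))
  have me : MeasurableEmbedding ((WithLp.toLp 2 : (Fin 2 → ℝ) → E2) ∘
      (MeasurableEquiv.finTwoArrow (α := ℝ)).symm) :=
    (MeasurableEquiv.toLp 2 (Fin 2 → ℝ)).measurableEmbedding.comp
      (MeasurableEquiv.finTwoArrow (α := ℝ)).symm.measurableEmbedding
  have hfun : ∀ z : ℝ × ℝ, ((WithLp.toLp 2 : (Fin 2 → ℝ) → E2) ∘
      (MeasurableEquiv.finTwoArrow (α := ℝ)).symm) z = !₂[z.1, z.2] := by
    intro z; rfl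
  rw [← mp.setIntegral_preimage_emb me]
  have hpre : (((WithLp.toLp 2 : (Fin 2 → ℝ) → E2) ∘
      (MeasurableEquiv.finTwoArrow (α := ℝ)).symm) ⁻¹'
      {z : E2 | z 0 ∈ Ioo a b ∧ z 1 ∈ Ioo p q}) = Ioo a b ×ˢ Ioo p q := by
    ext z
    simp only [mem_preimage, hfun, mem_ofPred_eq, mem_prod]
    simp
  rw [hpre]
  simp only [hfun]
  have cU : Continuous (fun z : ℝ × ℝ => U !₂[z.1, z.2]) := by fun_prop
  rw [Measure.volume_eq_prod, setIntegral_prod]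
  · rw [intervalIntegral.integral_of_le hab, ← integral_Ioc_eq_integral_Ioo]
    congr 1; ext x
    rw [intervalIntegral.integral_of_le hpq, ← integral_Ioc_eq_integral_Ioo]
  · exact (cU.continuousOn.integrableOn_compact
      ((isCompact_Icc (a := a) (b := b)).prod (isCompact_Icc (a := p) (b := q)))).mono_set
        (prod_mono Ioo_subset_Icc_self Ioo_subset_Icc_self)

lemma rect_intOn (a b p q : ℝ) (U : E2 → ℝ) (hU : Continuous U) :
    IntegrableOn U {z : E2 | z 0 ∈ Ioo a b ∧ z 1 ∈ Ioo p q} := by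
  have hcpt : IsCompact ((fun z : ℝ × ℝ => (!₂[z.1, z.2] : E2)) '' (Icc a b ×ˢ Icc p q)) :=
    ((isCompact_Icc).prod (isCompact_Icc)).image (by fun_prop)
  refine (hU.continuousOn.integrableOn_compact hcpt).mono_set ?_
  intro z hz
  refine ⟨(z 0, z 1), ⟨Ioo_subset_Icc_self hz.1, Ioo_subset_Icc_self hz.2⟩, ?_⟩
  ext i; fin_cases i <;> simp

lemma norm_sq_vec (x y : ℝ) : ‖(!₂[x, y] : E2)‖ ^ 2 = x ^ 2 + y ^ 2 := by
  rw [EuclideanSpace.norm_sq_eq]; simp [Fin.sum_univ_two]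

lemma dual_norm (L : E2 →L[ℝ] ℝ) : L !₂[1, 0] ^ 2 + L !₂[0, 1] ^ 2 ≤ ‖L‖ ^ 2 := by
  set p := L !₂[1, 0]
  set q := L !₂[0, 1]
  have h1 : L !₂[p, q] = p ^ 2 + q ^ 2 := by
    have : (!₂[p, q] : E2) = p • !₂[1, 0] + q • !₂[0, 1] := by
      ext i; fin_cases i <;> simp
    rw [this, map_add, map_smul, map_smul]
    simp only [smul_eq_mul]
    change p * p + q * q = _
    ring
  have h2 := L.le_opNorm !₂[p, q]
  have h3 := norm_sq_vec p q
  rw [h1, Real.norm_of_nonneg (by positivity), ← h3] at h2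
  rw [← h3]
  rcases (norm_nonneg (!₂[p, q] : E2)).eq_or_lt with h | h
  · rw [← h]; nlinarith [sq_nonneg ‖L‖]
  · have : ‖(!₂[p, q] : E2)‖ ≤ ‖L‖ := by
      rw [sq] at h2; exact le_of_mul_le_mul_right h2 h
    gcongr

lemma rect_poin (K a b p q : ℝ) (hab : a ≤ b) (hpq : p < q)
    (P1 : Poin K a b) (P2 : Poin K p q) (v : E2 → ℝ) (hv : ContDiff ℝ 1 v)
    (hm : ∫ x in {z : E2 | z 0 ∈ Ioo a b ∧ z 1 ∈ Ioo p q}, v x * Real.exp (‖x‖ ^ 2) = 0) :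
    K * (∫ x in {z : E2 | z 0 ∈ Ioo a b ∧ z 1 ∈ Ioo p q}, v x ^ 2 * Real.exp (‖x‖ ^ 2)) ≤
    ∫ x in {z : E2 | z 0 ∈ Ioo a b ∧ z 1 ∈ Ioo p q}, ‖fderiv ℝ v x‖ ^ 2 * Real.exp (‖x‖ ^ 2) := by
  have cv := hv.continuous
  have cd := hv.continuous_fderiv (by norm_num)
  have hcd : ∀ e : E2, Continuous (fun x => fderiv ℝ v x e) := fun e => cd.clm_apply continuous_const
  have d0 := hcd !₂[1, 0]
  have d1 := hcd !₂[0, 1]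
  rw [int_rect a b p q hab hpq.le _ (by fun_prop)] at hm
  simp only [norm_sq_vec] at hm
  have main := poin_two K a b p q hab hpq P1 P2 (fun x y => v !₂[x, y])
    (fun x y => fderiv ℝ v !₂[x, y] !₂[1, 0]) (fun x y => fderiv ℝ v !₂[x, y] !₂[0, 1])
    (by simp only [Function.uncurry_def]; fun_prop)
    (by simp only [Function.uncurry_def]; exact d0.comp (by fun_prop))
    (by simp only [Function.uncurry_def]; exact d1.comp (by fun_prop))
    (by
      intro x y
      have h := (hv.differentiable (by norm_num) !₂[x, y]).hasFDerivAt
      have h2 : HasDerivAt (fun s : ℝ => (!₂[s, y] : E2)) !₂[1, 0] x := by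
        have e : (fun s : ℝ => (!₂[s, y] : E2)) = fun s => s • (!₂[1, 0] : E2) + !₂[0, y] := by
          ext s i; fin_cases i <;> simp
        rw [e]
        simpa using ((hasDerivAt_id x).smul_const (!₂[1, 0] : E2)).add_const !₂[0, y]
      exact h.comp_hasDerivAt x h2)
    (by
      intro x y
      have h := (hv.differentiable (by norm_num) !₂[x, y]).hasFDerivAt
      have h2 : HasDerivAt (fun s : ℝ => (!₂[x, s] : E2)) !₂[0, 1] y := by
        have e : (fun s : ℝ => (!₂[x, s] : E2)) = fun s => s • (!₂[0, 1] : E2) + !₂[x, 0] := by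
          ext s i; fin_cases i <;> simp
        rw [e]
        simpa using ((hasDerivAt_id y).smul_const (!₂[0, 1] : E2)).add_const !₂[x, 0]
      exact h.comp_hasDerivAt y h2)
    hm
  rw [int_rect a b p q hab hpq.le _ (by fun_prop)]
  simp only [norm_sq_vec]
  refine main.trans ?_
  have e := int_rect a b p q hab hpq.le (fun z => (fderiv ℝ v z !₂[1, 0] ^ 2 +
    fderiv ℝ v z !₂[0, 1] ^ 2) * Real.exp (‖z‖ ^ 2)) (by fun_prop)
  simp only [norm_sq_vec] at e
  rw [← e]
  apply setIntegral_mono (rect_intOn a b p q _ (by fun_prop)) (rect_intOn a b p q _ (by fun_prop))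
  intro z
  exact mul_le_mul_of_nonneg_right (dual_norm _) (Real.exp_pos _).le

lemma ball_int (r : ℝ) (U : E2 → ℝ) (hU : Continuous U) : IntegrableOn U (Metric.ball 0 r) :=
  (hU.continuousOn.integrableOn_compact (isCompact_closedBall 0 r)).mono_set
    Metric.ball_subset_closedBall

lemma ball_mean (r : ℝ) : ∫ x in Metric.ball (0 : E2) r, x 0 * Real.exp (‖x‖ ^ 2) = 0 := by
  have h := (LinearIsometryEquiv.neg ℝ (E := E2)).measurePreserving.setIntegral_preimage_emb
    (LinearIsometryEquiv.neg ℝ (E := E2)).toHomeomorph.measurableEmbedding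
    (fun x : E2 => x 0 * Real.exp (‖x‖ ^ 2)) (Metric.ball 0 r)
  rw [LinearIsometryEquiv.preimage_ball] at h
  simp only [LinearIsometryEquiv.symm_neg, LinearIsometryEquiv.coe_neg, neg_zero, norm_neg,
    PiLp.neg_apply, neg_mul, integral_neg] at h
  linarith

lemma ball_swap (r : ℝ) : ∫ x in Metric.ball (0 : E2) r, x 1 ^ 2 * Real.exp (‖x‖ ^ 2) =
    ∫ x in Metric.ball (0 : E2) r, x 0 ^ 2 * Real.exp (‖x‖ ^ 2) := by
  set S : E2 ≃ₗᵢ[ℝ] E2 := LinearIsometryEquiv.piLpCongrLeft 2 ℝ ℝ (Equiv.swap (0 : Fin 2) 1) with hS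
  have h := S.measurePreserving.setIntegral_preimage_emb
    S.toHomeomorph.measurableEmbedding
    (fun x : E2 => x 0 ^ 2 * Real.exp (‖x‖ ^ 2)) (Metric.ball 0 r)
  rw [LinearIsometryEquiv.preimage_ball] at h
  have e : ∀ x, S x 0 = x 1 := by
    intro x; simp [hS, LinearIsometryEquiv.piLpCongrLeft_apply, Equiv.piCongrLeft']
  simp only [e, LinearIsometryEquiv.norm_map, map_zero] at h
  exact h

lemma ball_radial (r : ℝ) (hr : 0 < r) (hE : 0 < (5 * r ^ 2 - 6) * Real.exp (r ^ 2) + 6) :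
    0 < ∫ x in Metric.ball (0 : E2) r, (5 * ‖x‖ ^ 2 - 1) * Real.exp (‖x‖ ^ 2) := by
  have h := integral_fun_norm_addHaar (volume : Measure E2)
    (indicator (Iio r) fun t => (5 * t ^ 2 - 1) * Real.exp (t ^ 2))
  have e1 : ∀ x : E2, (indicator (Iio r) fun t => (5 * t ^ 2 - 1) * Real.exp (t ^ 2)) ‖x‖ =
      indicator (Metric.ball (0 : E2) r) (fun x => (5 * ‖x‖ ^ 2 - 1) * Real.exp (‖x‖ ^ 2)) x := by
    intro x; simp [indicator]
  simp only [e1] at h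
  rw [integral_indicator Metric.isOpen_ball.measurableSet] at h
  rw [h]
  have e2 : ∫ y in Ioi (0 : ℝ), y ^ (Module.finrank ℝ E2 - 1) • 
      (indicator (Iio r) fun t => (5 * t ^ 2 - 1) * Real.exp (t ^ 2)) y =
      ∫ y in (0 : ℝ)..r, y * ((5 * y ^ 2 - 1) * Real.exp (y ^ 2)) := by
    rw [intervalIntegral.integral_of_le hr.le, integral_Ioc_eq_integral_Ioo, ← Ioi_inter_Iio,
      ← setIntegral_indicator measurableSet_Iio]
    congr 1; ext y
    by_cases hy : y < r <;> simp [indicator, hy]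
  rw [e2, intervalIntegral.integral_eq_sub_of_hasDerivAt
    (f := fun y => (5 * y ^ 2 - 6) * Real.exp (y ^ 2) / 2)]
  · have : 0 < (volume : Measure E2).real (Metric.ball 0 1) :=
      ENNReal.toReal_pos (Metric.measure_ball_pos _ _ one_pos).ne' measure_ball_lt_top.ne
    simp only [nsmul_eq_mul, smul_eq_mul]
    have h2 : 0 < Module.finrank ℝ E2 := by simp
    have : 0 < (5 * r ^ 2 - 6) * Real.exp (r ^ 2) / 2 -
      (5 * 0 ^ 2 - 6) * Real.exp (0 ^ 2) / 2 := by norm_num; linarith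
    positivity
  · intro y _
    have h := (hasDerivAt_id y).pow 2
    refine HasDerivAt.congr_deriv ((((h.const_mul 5).sub_const 6).mul h.exp).div_const 2) ?_
    simp; ring
  · exact Continuous.intervalIntegrable (by fun_prop) _ _

lemma ball_ineq (r : ℝ) (hr : 0 < r) (hE : 0 < (5 * r ^ 2 - 6) * Real.exp (r ^ 2) + 6) :
    ∫ x in Metric.ball (0 : E2) r, Real.exp (‖x‖ ^ 2) <
      10 * ∫ x in Metric.ball (0 : E2) r, x 0 ^ 2 * Real.exp (‖x‖ ^ 2) := by
  have h := ball_radial r hr hE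
  have e : ∀ x : E2, (5 * ‖x‖ ^ 2 - 1) * Real.exp (‖x‖ ^ 2) = 
      5 * (x 0 ^ 2 * Real.exp (‖x‖ ^ 2)) + 5 * (x 1 ^ 2 * Real.exp (‖x‖ ^ 2)) - Real.exp (‖x‖ ^ 2) := by
    intro x
    have : ‖x‖ ^ 2 = x 0 ^ 2 + x 1 ^ 2 := by
      rw [EuclideanSpace.norm_sq_eq]; simp [Fin.sum_univ_two]
    rw [this]; ring
  simp only [e] at h
  have i0 := ball_int r (fun x => 5 * (x 0 ^ 2 * Real.exp (‖x‖ ^ 2))) (by fun_prop)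
  have i1 := ball_int r (fun x => 5 * (x 1 ^ 2 * Real.exp (‖x‖ ^ 2))) (by fun_prop)
  have i2 := ball_int r (fun x => Real.exp (‖x‖ ^ 2)) (by fun_prop)
  rw [integral_sub (by exact i0.add i1) i2, integral_add i0 i1, integral_const_mul, integral_const_mul,
    ball_swap] at h
  linarith

lemma exp_cond (s : ℝ) (hs : 1.5 ≤ Real.exp s) : 0 < (5 * s - 6) * Real.exp s + 6 := by
  have h4 : Real.exp 0.4 < 1.4925 := by
    have h : Real.exp 0.4 ^ 5 = Real.exp 1 ^ 2 := by
      rw [← Real.exp_nat_mul, ← Real.exp_nat_mul]; norm_num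
    have h1 := Real.exp_one_lt_d9
    have h0 := Real.exp_pos 1
    by_contra! hc
    have : (1.4925 : ℝ) ^ 5 ≤ Real.exp 0.4 ^ 5 := by gcongr
    rw [h] at this
    have : Real.exp 1 ^ 2 < 2.7182818286 ^ 2 := by gcongr
    norm_num at *
    linarith
  have s4 : 0.4 < s := by
    by_contra! hc
    have := Real.exp_le_exp.2 hc
    linarith
  have hE := Real.exp_pos s
  by_cases h12 : 1.2 ≤ s
  · have : 0 ≤ (5 * s - 6) * Real.exp s := mul_nonneg (by linarith) hE.le
    linarith
  push Not at h12
  have a1 : 1 - (s - 0.4) ≤ Real.exp (0.4 - s) := by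
    have := Real.add_one_le_exp (0.4 - s); linarith
  have a2 : Real.exp s * Real.exp (0.4 - s) = Real.exp 0.4 := by
    rw [← Real.exp_add]; ring_nf
  -- exp s * (1.4 - s) ≤ exp 0.4 < 1.4925
  have a3 : Real.exp s * (1 - (s - 0.4)) < 1.4925 := 
    lt_of_le_of_lt (by rw [← a2]; gcongr) h4
  nlinarith

lemma root_bounds (c d : ℝ) (hc : 0 < c)
    (hcz : 8 * c ^ 6 - 60 * c ^ 4 + 90 * c ^ 2 - 15 = 0)
    (hcfirst : ∀ t : ℝ, 0 < t → 8 * t ^ 6 - 60 * t ^ 4 + 90 * t ^ 2 - 15 = 0 → c ≤ t)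
    (hcd : c < d)
    (hdz : 8 * d ^ 6 - 60 * d ^ 4 + 90 * d ^ 2 - 15 = 0)
    (hdsecond : ∀ t : ℝ, c < t → 8 * t ^ 6 - 60 * t ^ 4 + 90 * t ^ 2 - 15 = 0 → d ≤ t) :
    0.43 < c ∧ c < 0.44 ∧ 1.33 < d ∧ d < 1.34 := by
  have cont : Continuous (fun t : ℝ => 8 * t ^ 6 - 60 * t ^ 4 + 90 * t ^ 2 - 15) := by fun_prop
  have c44 : c < 0.44 := by
    obtain ⟨t, ht, h0⟩ := intermediate_value_Ioo (by norm_num : (0.1 : ℝ) ≤ 0.44) cont.continuousOn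
      (show (0 : ℝ) ∈ _ by constructor <;> norm_num)
    exact lt_of_le_of_lt (hcfirst t (by linarith [ht.1]) h0) ht.2
  have d134 : d < 1.34 := by
    obtain ⟨t, ht, h0⟩ := intermediate_value_Ioo' (by norm_num : (0.44 : ℝ) ≤ 1.34) cont.continuousOn
      (show (0 : ℝ) ∈ _ by constructor <;> norm_num)
    exact lt_of_le_of_lt (hdsecond t (by linarith [ht.1]) h0) ht.2
  have c43 : 0.43 < c := by
    by_contra! h
    have h1 : c ^ 2 ≤ 0.43 ^ 2 := by gcongr
    have h2 : 0 < c ^ 2 := by positivity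
    have e : 8 * c ^ 6 - 60 * c ^ 4 + 90 * c ^ 2 - 15 = 
      8 * (c ^ 2) ^ 3 - 60 * (c ^ 2) ^ 2 + 90 * (c ^ 2) - 15 := by ring
    rw [e] at hcz
    generalize c ^ 2 = s at *
    norm_num at *
    nlinarith [mul_pos h2 h2, mul_nonneg h2.le (sub_nonneg.2 h1),
      mul_nonneg (mul_pos h2 h2).le (sub_nonneg.2 h1)]
  refine ⟨c43, c44, ?_, d134⟩
  by_contra! h
  have d0 : 0 < d := by linarith
  have e : ∀ t : ℝ, 8 * t ^ 6 - 60 * t ^ 4 + 90 * t ^ 2 - 15 = 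
      8 * (t ^ 2) ^ 3 - 60 * (t ^ 2) ^ 2 + 90 * (t ^ 2) - 15 := by intro t; ring
  rw [e] at hcz hdz
  have h1 : d ^ 2 ≤ 1.33 ^ 2 := by gcongr
  have h2 : c ^ 2 < d ^ 2 := by gcongr
  have h3 : c ^ 2 < 0.44 ^ 2 := by gcongr
  have h4 : 0.43 ^ 2 < c ^ 2 := by gcongr
  generalize c ^ 2 = s at *
  generalize d ^ 2 = u at *
  norm_num at h1 h3 h4
  rcases lt_or_ge u 0.2 with hu | hu
  · have : 0 < (u - s) * (8 * (u ^ 2 + u * s + s ^ 2) - 60 * (u + s) + 90) := by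
      apply mul_pos (by linarith)
      have : 0 ≤ u ^ 2 + u * s + s ^ 2 := by
        have : 0 < s := by linarith
        have : 0 < u := by linarith
        positivity
      linarith
    nlinarith
  · nlinarith [mul_nonneg (sub_nonneg.2 hu) (sub_nonneg.2 h1),
      mul_nonneg (mul_nonneg (sub_nonneg.2 hu) (sub_nonneg.2 h1)) (by linarith : 0 ≤ 6 - u)]

lemma meas_lower (c d : ℝ) (hc : 0.43 < c) (hc' : c < 0.44) (hd : 1.33 < d) :
    Real.pi * 0.5 ≤ ∫ x in {p : E2 | p 0 ∈ Ioo c d ∧ p 1 ∈ Ioo (-c) c}, Real.exp (‖x‖ ^ 2) := by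
  have h1 : ∫ x in {p : E2 | p 0 ∈ Ioo c d ∧ p 1 ∈ Ioo (-c) c}, (1 + x 0 ^ 2 + x 0 ^ 4 / 2) ≤
      ∫ x in {p : E2 | p 0 ∈ Ioo c d ∧ p 1 ∈ Ioo (-c) c}, Real.exp (‖x‖ ^ 2) := by
    apply setIntegral_mono (rect_intOn _ _ _ _ _ (by fun_prop)) (rect_intOn _ _ _ _ _ (by fun_prop))
    intro x
    have : x 0 ^ 2 ≤ ‖x‖ ^ 2 := by
      rw [EuclideanSpace.norm_sq_eq]; simp [Fin.sum_univ_two]; positivity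
    have h := Real.quadratic_le_exp_of_nonneg (sq_nonneg (x 0))
    have h' := Real.exp_le_exp.2 this
    simp only
    nlinarith
  refine le_trans ?_ h1
  rw [int_rect c d (-c) c (by linarith) (by linarith) _ (by fun_prop)]
  simp only [Matrix.cons_val_zero, intervalIntegral.integral_const]
  have e : ∫ x in c..d, (c - -c) • (1 + x ^ 2 + x ^ 4 / 2) =
      2 * c * ((d + d ^ 3 / 3 + d ^ 5 / 10) - (c + c ^ 3 / 3 + c ^ 5 / 10)) := by
    rw [intervalIntegral.integral_smul, intervalIntegral.integral_eq_sub_of_hasDerivAt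
      (f := fun y => y + y ^ 3 / 3 + y ^ 5 / 10)]
    · simp only [smul_eq_mul]; ring
    · intro y _
      have h := hasDerivAt_id y
      refine HasDerivAt.congr_deriv ((h.add ((h.pow 3).div_const 3)).add ((h.pow 5).div_const 10)) ?_
      simp; ring
    · exact Continuous.intervalIntegrable (by fun_prop) _ _
  rw [e]
  have hpi := Real.pi_lt_d2
  have d3 : (1.33 : ℝ) ^ 3 ≤ d ^ 3 := by gcongr
  have d5 : (1.33 : ℝ) ^ 5 ≤ d ^ 5 := by gcongr
  have c3 : c ^ 3 ≤ 0.44 ^ 3 := by gcongr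
  have c5 : c ^ 5 ≤ 0.44 ^ 5 := by gcongr
  norm_num at d3 d5 c3 c5
  have : 2 ≤ (d + d ^ 3 / 3 + d ^ 5 / 10) - (c + c ^ 3 / 3 + c ^ 5 / 10) := by linarith
  nlinarith

lemma rect_test_mean (c d : ℝ) (hc : 0 < c) (hcd : c < d) :
    ∫ x in {p : E2 | p 0 ∈ Ioo c d ∧ p 1 ∈ Ioo (-c) c}, x 1 * Real.exp (‖x‖ ^ 2) = 0 := by
  rw [int_rect c d (-c) c (by linarith) (by linarith) _ (by fun_prop)]
  simp only [norm_sq_vec]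
  have : ∀ x : ℝ, ∫ y in -c..c, y * Real.exp (x ^ 2 + y ^ 2) = 0 := by
    intro x
    rw [intervalIntegral.integral_eq_sub_of_hasDerivAt (f := fun y => Real.exp (x ^ 2 + y ^ 2) / 2)]
    · simp
    · intro y _
      refine HasDerivAt.congr_deriv ((((hasDerivAt_id y).pow 2).const_add (x ^ 2)).exp.div_const 2) ?_
      simp; ring
    · exact Continuous.intervalIntegrable (by fun_prop) _ _
  simp [this]

lemma rect_test_pos (c d : ℝ) (hc : 0 < c) (hcd : c < d) :
    0 < ∫ x in {p : E2 | p 0 ∈ Ioo c d ∧ p 1 ∈ Ioo (-c) c}, x 1 ^ 2 * Real.exp (‖x‖ ^ 2) := by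
  rw [int_rect c d (-c) c (by linarith) (by linarith) _ (by fun_prop)]
  simp only [norm_sq_vec]
  have e : ∀ x : ℝ, ∫ y in -c..c, (!₂[x, y] : E2) 1 ^ 2 * Real.exp (x ^ 2 + y ^ 2) =
      Real.exp (x ^ 2) * ∫ y in -c..c, y ^ 2 * Real.exp (y ^ 2) := by
    intro x
    rw [← intervalIntegral.integral_const_mul]
    congr 1; ext y; rw [Real.exp_add]; simp; ring
  simp only [e]
  have h : 0 < ∫ y in -c..c, y ^ 2 * Real.exp (y ^ 2) := by
    apply intervalIntegral.integral_pos (by linarith) (by fun_prop)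
    · intro y _; positivity
    · exact ⟨c, ⟨by linarith, le_rfl⟩, by positivity⟩
  apply intervalIntegral.intervalIntegral_pos_of_pos
    (Continuous.intervalIntegrable (by fun_prop) _ _) _ hcd
  intro x; positivity

/-- The counterexample in ℝ² with anti-Gaussian weight `e^{x²+y²}`: with `c` and `d`
the first and second positive zeros of `8t⁶ - 60t⁴ + 90t² - 15`,
`T = (c,d) × (-c,c)`, and `r_T > 0` the radius with `π(e^{r_T²} - 1) = γ₂(T)`,
one has `μ₁(B_{r_T}; γ₂) < μ₁(T; γ₂)`: without symmetry about the origin, the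
centered ball does not in general maximize the first nontrivial weighted Neumann
eigenvalue among domains of prescribed `γ₂`-measure. -/
theorem stmt_5 (c d : ℝ) (hc : 0 < c)
    (hcz : 8 * c ^ 6 - 60 * c ^ 4 + 90 * c ^ 2 - 15 = 0)
    (hcfirst : ∀ t : ℝ, 0 < t → 8 * t ^ 6 - 60 * t ^ 4 + 90 * t ^ 2 - 15 = 0 → c ≤ t)
    (hcd : c < d)
    (hdz : 8 * d ^ 6 - 60 * d ^ 4 + 90 * d ^ 2 - 15 = 0)
    (hdsecond : ∀ t : ℝ, c < t → 8 * t ^ 6 - 60 * t ^ 4 + 90 * t ^ 2 - 15 = 0 → d ≤ t)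
    (T : Set (EuclideanSpace ℝ (Fin 2)))
    (hT : T = {p : EuclideanSpace ℝ (Fin 2) | p 0 ∈ Set.Ioo c d ∧ p 1 ∈ Set.Ioo (-c) c})
    (rT : ℝ) (hrT : 0 < rT)
    (hrTmeas : Real.pi * (Real.exp (rT ^ 2) - 1) = ∫ x in T, Real.exp (‖x‖ ^ 2)) :
    weightedMu1 2 (fun r => r ^ 2) (Metric.ball (0 : EuclideanSpace ℝ (Fin 2)) rT) <
      weightedMu1 2 (fun r => r ^ 2) T := by
  obtain ⟨c43, c44, d133, d134⟩ := root_bounds c d hc hcz hcfirst hcd hdz hdsecond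
  subst hT
  have hlow := meas_lower c d c43 c44 d133
  rw [← hrTmeas] at hlow
  have hE : 1.5 ≤ Real.exp (rT ^ 2) := by
    have := le_of_mul_le_mul_left hlow Real.pi_pos
    norm_num at *
    linarith
  have hball := ball_ineq rT hrT (exp_cond _ hE)
  have cx : ∀ i, ContDiff ℝ 1 (fun x : E2 => x i) := fun i => by fun_prop
  have hdn : ∀ x : E2, ‖fderiv ℝ (fun x : E2 => x 0) x‖ ^ 2 ≤ 1 := by
    intro x
    have e : fderiv ℝ (fun x : E2 => x 0) x = EuclideanSpace.proj (𝕜 := ℝ) (0 : Fin 2) :=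
      (EuclideanSpace.proj (𝕜 := ℝ) (0 : Fin 2) : E2 →L[ℝ] ℝ).hasFDerivAt.fderiv
    rw [e]
    have : ‖(EuclideanSpace.proj (𝕜 := ℝ) (0 : Fin 2) : E2 →L[ℝ] ℝ)‖ ≤ 1 := by
      apply ContinuousLinearMap.opNorm_le_bound _ zero_le_one
      intro y
      rw [one_mul]
      exact PiLp.norm_apply_le y 0
    exact pow_le_one₀ (norm_nonneg _) this
  have hnum : ∫ x in Metric.ball (0 : E2) rT,
      ‖fderiv ℝ (fun x : E2 => x 0) x‖ ^ 2 * Real.exp (‖x‖ ^ 2) ≤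
      ∫ x in Metric.ball (0 : E2) rT, Real.exp (‖x‖ ^ 2) := by
    have cd := (cx 0).continuous_fderiv (by norm_num)
    apply setIntegral_mono (ball_int rT _ (by fun_prop)) (ball_int rT _ (by fun_prop))
    intro x
    exact mul_le_of_le_one_left (Real.exp_pos _).le (hdn x)
  have hexp : 0 ≤ ∫ x in Metric.ball (0 : E2) rT, Real.exp (‖x‖ ^ 2) :=
    integral_nonneg fun x => (Real.exp_pos _).le
  have hpos : 0 < ∫ x in Metric.ball (0 : E2) rT, x 0 ^ 2 * Real.exp (‖x‖ ^ 2) := by linarith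
  have upper : weightedMu1 2 (fun r => r ^ 2) (Metric.ball (0 : E2) rT) < 10 := by
    refine lt_of_le_of_lt (csInf_le ?_ ⟨fun x : E2 => x 0, cx 0, hpos, ball_mean rT, rfl⟩) ?_
    · refine ⟨0, ?_⟩
      rintro μ ⟨v, -, hv, -, rfl⟩
      exact div_nonneg (integral_nonneg fun x => by positivity) hv.le
    · rw [div_lt_iff₀ hpos]
      exact lt_of_le_of_lt hnum hball
  have lower : 10 ≤ weightedMu1 2 (fun r => r ^ 2)
      {p : E2 | p 0 ∈ Set.Ioo c d ∧ p 1 ∈ Set.Ioo (-c) c} := by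
    apply le_csInf
    · exact ⟨_, fun x : E2 => x 1, cx 1, rect_test_pos c d hc hcd, rect_test_mean c d hc hcd, rfl⟩
    · rintro μ ⟨v, hv, hp, hm, rfl⟩
      rw [le_div_iff₀ hp]
      exact rect_poin 10 c d (-c) c hcd.le (by linarith) (poin_x c d hcd c43 d134)
        (poin_y c hc c44) v hv hm
  linarith
end
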